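/- arXiv:math/9712237 — 12 statements merged into one kernel-verified Lean document; each statement's English description precedes it below -/
import Mathlib

section
/- Let q be a real number with q > 1 and let u be a real number with 0 < u < 1. Then the infinite product ∏_{r=1}^∞ 1/(1 − u·q^{−r}) converges and equals the convergent series ∑_{n=0}^∞ u^n · q^{binom(n,2)} / ((q^n − 1)(q^{n−1} − 1)⋯(q − 1)), where the n = 0 term is 1. -/
theorem stmt_0_aux_summable (q x : ℝ) (hq : 1 < q) (hx0 : 0 < x) (hx1 : x < 1) :
    Summable (fun n : ℕ => x ^ n * q ^ n.choose 2 /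
      ∏ k ∈ Finset.range n, (q ^ (k + 1) - 1)) := by
  have hpos : ∀ k : ℕ, 0 < q ^ (k + 1) - 1 := fun k =>
    sub_pos.2 (one_lt_pow₀ hq (Nat.succ_ne_zero k))
  have hP : ∀ n : ℕ, 0 < ∏ k ∈ Finset.range n, (q ^ (k + 1) - 1) := fun n =>
    Finset.prod_pos fun k _ => hpos k
  have hq0 : 0 < q := by linarith
  obtain ⟨N, hN⟩ := pow_unbounded_of_one_lt (1 / (q - 1)) hq
  refine summable_of_ratio_norm_eventually_le (r := x) hx1 ?_
  filter_upwards [Filter.eventually_ge_atTop N] with n hn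
  have h1 : 1 / (q - 1) < q ^ n := lt_of_lt_of_le hN (pow_le_pow_right₀ hq.le hn)
  have h2 : q ^ n ≤ q ^ (n + 1) - 1 := by
    rw [div_lt_iff₀ (by linarith)] at h1
    rw [pow_succ]; linarith
  have e : ∀ n : ℕ, 0 ≤ x ^ n * q ^ n.choose 2 / ∏ k ∈ Finset.range n, (q ^ (k + 1) - 1) :=
    fun n => div_nonneg (by positivity) (hP n).le
  rw [Real.norm_of_nonneg (e _), Real.norm_of_nonneg (e _)]
  have h3 : (n + 1).choose 2 = n + n.choose 2 := by
    rw [Nat.choose_succ_succ' n 1, Nat.choose_one_right]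
  have h4 : x ^ (n + 1) * q ^ (n + 1).choose 2 / ∏ k ∈ Finset.range (n + 1), (q ^ (k + 1) - 1)
      = (q ^ n / (q ^ (n + 1) - 1)) *
        (x * (x ^ n * q ^ n.choose 2 / ∏ k ∈ Finset.range n, (q ^ (k + 1) - 1))) := by
    rw [Finset.prod_range_succ, h3, pow_add q n, pow_succ x]
    have := (hP n).ne'
    have := (hpos n).ne'
    field_simp
  rw [h4]
  exact mul_le_of_le_one_left (mul_nonneg hx0.le (e n)) ((div_le_one (hpos n)).2 h2)

theorem stmt_0_aux_feq (q x : ℝ) (hq : 1 < q) (hx0 : 0 < x) (hx1 : x < 1) :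
    (∑' n : ℕ, (x / q) ^ n * q ^ n.choose 2 / ∏ k ∈ Finset.range n, (q ^ (k + 1) - 1))
    = (1 - x / q) * ∑' n : ℕ, x ^ n * q ^ n.choose 2 /
        ∏ k ∈ Finset.range n, (q ^ (k + 1) - 1) := by
  have hpos : ∀ k : ℕ, 0 < q ^ (k + 1) - 1 := fun k =>
    sub_pos.2 (one_lt_pow₀ hq (Nat.succ_ne_zero k))
  have hP : ∀ n : ℕ, 0 < ∏ k ∈ Finset.range n, (q ^ (k + 1) - 1) := fun n =>
    Finset.prod_pos fun k _ => hpos k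
  have hq0 : 0 < q := by linarith
  have s1 := stmt_0_aux_summable q x hq hx0 hx1
  have s2 := stmt_0_aux_summable q (x / q) hq (by positivity)
    ((div_lt_one hq0).2 (by linarith))
  have key : ∑' n : ℕ, (x ^ (n + 1) * q ^ (n + 1).choose 2 /
        ∏ k ∈ Finset.range (n + 1), (q ^ (k + 1) - 1) -
        (x / q) ^ (n + 1) * q ^ (n + 1).choose 2 /
        ∏ k ∈ Finset.range (n + 1), (q ^ (k + 1) - 1))
      = x / q * ∑' n : ℕ, x ^ n * q ^ n.choose 2 /
        ∏ k ∈ Finset.range n, (q ^ (k + 1) - 1) := by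
    rw [← tsum_mul_left]
    refine tsum_congr fun n => ?_
    have h3 : (n + 1).choose 2 = n + n.choose 2 := by
      rw [Nat.choose_succ_succ' n 1, Nat.choose_one_right]
    rw [Finset.prod_range_succ, h3, pow_add q n, div_pow]
    have := (hP n).ne'
    have := (hpos n).ne'
    field_simp
    try ring
  rw [((summable_nat_add_iff 1).2 s1).tsum_sub ((summable_nat_add_iff 1).2 s2)] at key
  have e1 := s1.tsum_eq_zero_add
  have e2 := s2.tsum_eq_zero_add
  simp only [pow_zero, Finset.range_zero, Finset.prod_empty] at e1 e2
  linarith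

/-- Stong's lemma, part 1: for real `q > 1` and `0 < u < 1`,
`∏_{r=1}^∞ 1/(1 − u q^{−r})` converges and equals
`∑_{n=0}^∞ uⁿ q^{C(n,2)} / ((qⁿ−1)⋯(q−1))`. -/
theorem stmt_0 (q u : ℝ) (hq : 1 < q) (hu0 : 0 < u) (hu1 : u < 1) :
    Summable (fun n : ℕ => u ^ n * q ^ n.choose 2 /
      ∏ k ∈ Finset.range n, (q ^ (k + 1) - 1)) ∧
    HasProd (fun r : ℕ => (1 - u * (q ^ (r + 1))⁻¹)⁻¹)
      (∑' n : ℕ, u ^ n * q ^ n.choose 2 /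
        ∏ k ∈ Finset.range n, (q ^ (k + 1) - 1)) := by
  have hq0 : 0 < q := by linarith
  have s := stmt_0_aux_summable q u hq hu0 hu1
  refine ⟨s, ?_⟩
  have hxle : ∀ r : ℕ, u * (q ^ r)⁻¹ ≤ u := fun r =>
    mul_le_of_le_one_right hu0.le (inv_le_one_of_one_le₀ (one_le_pow₀ hq.le))
  have hx0 : ∀ r : ℕ, 0 < u * (q ^ r)⁻¹ := fun r => by positivity
  have hd : ∀ r : ℕ, 0 < 1 - u * (q ^ r)⁻¹ := fun r => by linarith [hxle r]
  have hgeo : Summable (fun r : ℕ => u * (q ^ r)⁻¹) := by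
    refine Summable.mul_left u ?_
    simp_rw [← inv_pow]
    exact summable_geometric_of_lt_one (by positivity) (inv_lt_one_of_one_lt₀ hq)
  have hm : Multipliable (fun r : ℕ => (1 - u * (q ^ (r + 1))⁻¹)⁻¹) := by
    have hs : Summable (fun r : ℕ => ‖(u * (q ^ (r + 1))⁻¹) / (1 - u * (q ^ (r + 1))⁻¹)‖) := by
      refine Summable.of_nonneg_of_le (fun _ => norm_nonneg _) (fun r => ?_)
        (((summable_nat_add_iff 1).2 hgeo).div_const (1 - u))
      rw [Real.norm_of_nonneg (div_nonneg (hx0 _).le (hd _).le)]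
      exact div_le_div_of_nonneg_left (hx0 _).le (by linarith) (by linarith [hxle (r + 1)])
    refine (multipliable_one_add_of_summable hs).congr fun r => ?_
    have := (hd (r + 1)).ne'
    rw [eq_comm, inv_eq_one_div, div_eq_iff this, add_mul, div_mul_cancel₀ _ this]
    ring
  set F : ℝ → ℝ := fun x => ∑' n : ℕ, x ^ n * q ^ n.choose 2 /
        ∏ k ∈ Finset.range n, (q ^ (k + 1) - 1) with hF
  have hprod : ∀ N : ℕ, F u = (∏ r ∈ Finset.range N, (1 - u * (q ^ (r + 1))⁻¹)⁻¹) *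
      F (u * (q ^ N)⁻¹) := by
    intro N
    induction N with
    | zero => simp
    | succ N ih =>
      have h := stmt_0_aux_feq q (u * (q ^ N)⁻¹) hq (hx0 N) (by linarith [hxle N])
      have e : u * (q ^ N)⁻¹ / q = u * (q ^ (N + 1))⁻¹ := by
        rw [pow_succ, mul_inv]; ring
      rw [e] at h
      have h' : F (u * (q ^ (N + 1))⁻¹) = (1 - u * (q ^ (N + 1))⁻¹) * F (u * (q ^ N)⁻¹) := h
      rw [h', Finset.prod_range_succ, ih, mul_assoc, inv_mul_cancel_left₀ (hd (N + 1)).ne']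
  have hlim : Filter.Tendsto (fun N : ℕ => F (u * (q ^ N)⁻¹)) Filter.atTop (nhds (F 0)) := by
    refine tendsto_tsum_of_dominated_convergence s (fun n => ?_) (Filter.Eventually.of_forall
      fun N n => ?_)
    · exact ((hgeo.tendsto_atTop_zero.pow n).mul_const _).div_const _
    · have hP : 0 < ∏ k ∈ Finset.range n, (q ^ (k + 1) - 1) :=
        Finset.prod_pos fun k _ => sub_pos.2 (one_lt_pow₀ hq (Nat.succ_ne_zero k))
      have := hx0 N
      rw [Real.norm_of_nonneg (by positivity)]
      gcongr
      exact hxle N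
  have hF0 : F 0 = 1 := by
    simp only [hF]
    rw [tsum_eq_single 0 (fun n hn => by simp [hn])]
    simp
  have h1 := hm.hasProd.tendsto_prod_nat.mul hlim
  have h2 := h1.congr fun N => (hprod N).symm
  have h3 := tendsto_nhds_unique h2 tendsto_const_nhds
  rw [hF0, mul_one] at h3
  change HasProd _ (F u)
  rw [← h3]
  exact hm.hasProd
end

section
/- Let q be a real number with q > 1 and let u be a real number with 0 < u < 1. Then the infinite product ∏_{r=1}^∞ (1 − u·q^{−r}) converges and equals the convergent series ∑_{n=0}^∞ (−u)^n / ((q^n − 1)(q^{n−1} − 1)⋯(q − 1)), where the n = 0 term is 1. -/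
noncomputable def tt (q x : ℝ) (n : ℕ) : ℝ := (-x) ^ n / ∏ k ∈ Finset.range n, (q ^ (k + 1) - 1)

lemma fac_pos (q : ℝ) (hq : 1 < q) (k : ℕ) : 0 < q ^ (k + 1) - 1 :=
  sub_pos.2 (one_lt_pow₀ hq (Nat.succ_ne_zero k))

lemma den_pos (q : ℝ) (hq : 1 < q) (n : ℕ) :
    0 < ∏ k ∈ Finset.range n, (q ^ (k + 1) - 1) :=
  Finset.prod_pos fun k _ => fac_pos q hq k

lemma tt_summable (q x : ℝ) (hq : 1 < q) (hx : 0 < x) : Summable (tt q x) := by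
  have hne : ∀ n, tt q x n ≠ 0 := fun n =>
    div_ne_zero (pow_ne_zero _ (by linarith)) (den_pos q hq n).ne'
  refine summable_of_ratio_test_tendsto_lt_one (l := 0) (by norm_num)
    (Filter.Eventually.of_forall hne) ?_
  have h1 : Filter.Tendsto (fun n : ℕ => q ^ (n + 1) - 1) Filter.atTop Filter.atTop :=
    Filter.tendsto_atTop_add_const_right _ (-1)
      ((Filter.tendsto_add_atTop_iff_nat 1).2 (tendsto_pow_atTop_atTop_of_one_lt hq))
  refine (Filter.Tendsto.const_div_atTop h1 x).congr fun n => ?_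
  rw [← norm_div]
  have h2 := (fac_pos q hq n)
  have h3 := (den_pos q hq n)
  have : tt q x (n + 1) / tt q x n = - (x / (q ^ (n + 1) - 1)) := by
    rw [div_eq_iff (hne n)]
    unfold tt
    rw [Finset.prod_range_succ]
    field_simp
    ring
  rw [this, norm_neg, Real.norm_of_nonneg (by positivity)]

lemma tt_feq (q x : ℝ) (hq : 1 < q) (hx : 0 < x) :
    ∑' n, tt q x n = (1 - x * q⁻¹) * ∑' n, tt q (x * q⁻¹) n := by
  have hq0 : 0 < q := by linarith
  have s1 := tt_summable q x hq hx
  have s2 := tt_summable q (x * q⁻¹) hq (by positivity)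
  have h : ∑' n, tt q x n - ∑' n, tt q (x * q⁻¹) n
      = - (x * q⁻¹) * ∑' n, tt q (x * q⁻¹) n := by
    rw [← s1.tsum_sub s2, (s1.sub s2).tsum_eq_zero_add, ← tsum_mul_left]
    have h0 : tt q x 0 - tt q (x * q⁻¹) 0 = 0 := by simp [tt]
    rw [h0, zero_add]
    refine tsum_congr fun n => ?_
    have h2 := (fac_pos q hq n).ne'
    have h3 := (den_pos q hq n).ne'
    unfold tt
    rw [Finset.prod_range_succ, ← sub_div, div_eq_iff (mul_ne_zero h3 h2)]
    have e : -(x * q⁻¹) = (-x) * q⁻¹ := by ring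
    rw [e, mul_pow, mul_pow, inv_pow, inv_pow]
    field_simp
    ring
  linarith

lemma tt_iter (q x : ℝ) (hq : 1 < q) (hx : 0 < x) (N : ℕ) :
    ∑' n, tt q x n = (∏ r ∈ Finset.range N, (1 - x * (q ^ (r + 1))⁻¹)) *
      ∑' n, tt q (x * (q ^ N)⁻¹) n := by
  have hq0 : 0 < q := by linarith
  induction N with
  | zero => simp
  | succ N ih =>
    rw [ih, tt_feq q (x * (q ^ N)⁻¹) hq (by positivity), Finset.prod_range_succ]
    have e : x * (q ^ N)⁻¹ * q⁻¹ = x * (q ^ (N + 1))⁻¹ := by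
      rw [pow_succ, mul_inv]; ring
    rw [e]; ring

lemma tt_lim (q x : ℝ) (hq : 1 < q) (hx : 0 < x) :
    Filter.Tendsto (fun N : ℕ => ∑' n, tt q (x * (q ^ N)⁻¹) n) Filter.atTop (nhds 1) := by
  have hq0 : 0 < q := by linarith
  have h0 : ∑' n, tt q 0 n = 1 := by
    rw [tsum_eq_single 0]
    · simp [tt]
    · intro n hn; simp [tt, hn]
  rw [← h0]
  have hl : Filter.Tendsto (fun N : ℕ => x * (q ^ N)⁻¹) Filter.atTop (nhds 0) := by
    simpa using (tendsto_inv_atTop_zero.comp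
      (tendsto_pow_atTop_atTop_of_one_lt hq)).const_mul x
  refine tendsto_tsum_of_dominated_convergence (tt_summable q x hq hx).norm ?_ ?_
  · intro n
    exact (hl.neg.pow n).div_const _
  · refine Filter.Eventually.of_forall fun N n => ?_
    unfold tt
    rw [norm_div, norm_div, norm_pow, norm_pow, norm_neg, norm_neg]
    gcongr
    rw [norm_mul]
    refine mul_le_of_le_one_right (norm_nonneg _) ?_
    rw [Real.norm_of_nonneg (by positivity)]
    exact inv_le_one_of_one_le₀ (one_le_pow₀ hq.le)

/-- Stong's lemma, part 2: for real `q > 1` and `0 < u < 1`,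
`∏_{r=1}^∞ (1 − u q^{−r})` converges and equals
`∑_{n=0}^∞ (−u)ⁿ / ((qⁿ−1)⋯(q−1))`. -/
theorem stmt_1 (q u : ℝ) (hq : 1 < q) (hu0 : 0 < u) (hu1 : u < 1) :
    Summable (fun n : ℕ => (-u) ^ n /
      ∏ k ∈ Finset.range n, (q ^ (k + 1) - 1)) ∧
    HasProd (fun r : ℕ => 1 - u * (q ^ (r + 1))⁻¹)
      (∑' n : ℕ, (-u) ^ n /
        ∏ k ∈ Finset.range n, (q ^ (k + 1) - 1)) := by
  refine ⟨tt_summable q u hq hu0, ?_⟩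
  change HasProd _ (∑' n, tt q u n)
  have hs : Summable (fun r : ℕ => -(u * (q ^ (r + 1))⁻¹)) := by
    have := (summable_geometric_of_lt_one (r := q⁻¹) (by positivity)
      (inv_lt_one_of_one_lt₀ hq))
    have := (((summable_nat_add_iff 1).2 this).mul_left u).neg
    simpa [inv_pow] using this
  have hm : Multipliable (fun r : ℕ => 1 - u * (q ^ (r + 1))⁻¹) := by
    simpa [sub_eq_add_neg] using Real.multipliable_one_add_of_summable hs
  have h1 := hm.hasProd.tendsto_prod_nat.mul (tt_lim q u hq hu0)
  have h2 := tendsto_nhds_unique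
    (h1.congr fun N => (tt_iter q u hq hu0 N).symm) tendsto_const_nhds
  rw [← h2, mul_one]
  exact hm.hasProd
end

section
/- Let q and u be real numbers with 0 < q < 1 and 0 < u < 1. Then ∏_{i=0}^∞ 1/(1 − u·q^i) = ∑_{n=0}^∞ u^n / ((1 − q)(1 − q^2)⋯(1 − q^n)); equivalently, for every n ≥ 0, the coefficient of u^n in the power-series expansion of ∏_{i=0}^∞ 1/(1 − u·q^i) equals 1/((1 − q^n)⋯(1 − q)). -/
theorem aux_pos (q : ℝ) (hq0 : 0 < q) (hq1 : q < 1) (n : ℕ) :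
    0 < ∏ k ∈ Finset.range n, (1 - q ^ (k + 1)) :=
  Finset.prod_pos fun k _ => sub_pos.2 (pow_lt_one₀ hq0.le hq1 (Nat.succ_ne_zero k))

theorem aux_summable (q u : ℝ) (hq0 : 0 < q) (hq1 : q < 1) (hu0 : 0 < u) (hu1 : u < 1) :
    Summable (fun n : ℕ => u ^ n / ∏ k ∈ Finset.range n, (1 - q ^ (k + 1))) := by
  refine summable_of_ratio_test_tendsto_lt_one hu1 (Filter.Eventually.of_forall fun n => ?_) ?_
  · exact (div_pos (pow_pos hu0 n) (aux_pos q hq0 hq1 n)).ne'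
  · have h : Filter.Tendsto (fun n : ℕ => u / (1 - q ^ (n + 1))) Filter.atTop (nhds (u / (1 - 0))) := by
      refine tendsto_const_nhds.div (tendsto_const_nhds.sub ?_) (by norm_num)
      exact (Filter.tendsto_add_atTop_iff_nat 1).2 (tendsto_pow_atTop_nhds_zero_of_lt_one hq0.le hq1)
    rw [sub_zero, div_one] at h
    refine h.congr fun n => ?_
    have h1 := aux_pos q hq0 hq1 n
    have h2 := aux_pos q hq0 hq1 (n + 1)
    rw [Real.norm_of_nonneg (div_pos (pow_pos hu0 _) h2).le,
      Real.norm_of_nonneg (div_pos (pow_pos hu0 _) h1).le]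
    rw [Finset.prod_range_succ] at h2 ⊢
    have h3 : 0 < 1 - q ^ (n + 1) := (mul_pos_iff_of_pos_left h1).1 h2
    have h4 := pow_pos hu0 n
    rw [pow_succ u n, div_div_div_eq, div_eq_div_iff h3.ne' (by positivity)]
    ring

theorem aux_feq (q x : ℝ) (hq0 : 0 < q) (hq1 : q < 1) (hu0 : 0 < x) (hu1 : x < 1) :
    (∑' n : ℕ, (x * q) ^ n / ∏ k ∈ Finset.range n, (1 - q ^ (k + 1))) =
    (1 - x) * ∑' n : ℕ, x ^ n / ∏ k ∈ Finset.range n, (1 - q ^ (k + 1)) := by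
  have s1 := aux_summable q x hq0 hq1 hu0 hu1
  have s2 := aux_summable q (x * q) hq0 hq1 (mul_pos hu0 hq0) (by nlinarith)
  have e : (∑' n : ℕ, x ^ n / ∏ k ∈ Finset.range n, (1 - q ^ (k + 1))) -
      (∑' n : ℕ, (x * q) ^ n / ∏ k ∈ Finset.range n, (1 - q ^ (k + 1))) =
      x * ∑' n : ℕ, x ^ n / ∏ k ∈ Finset.range n, (1 - q ^ (k + 1)) := by
    rw [← s1.tsum_sub s2, (s1.sub s2).tsum_eq_zero_add, ← tsum_mul_left]
    simp only [pow_zero, sub_self, zero_add]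
    refine tsum_congr fun n => ?_
    have h1 := aux_pos q hq0 hq1 n
    have h2 := aux_pos q hq0 hq1 (n + 1)
    rw [Finset.prod_range_succ] at h2 ⊢
    have h3 : 0 < 1 - q ^ (n + 1) := (mul_pos_iff_of_pos_left h1).1 h2
    rw [← sub_div, mul_pow, ← mul_div_assoc, div_eq_div_iff h2.ne' h1.ne']
    ring
  linarith

/-- For real `0 < q < 1`, `0 < u < 1`:
`∏_{i=0}^∞ 1/(1 − u qⁱ) = ∑_{n=0}^∞ uⁿ / ((1−q)(1−q²)⋯(1−qⁿ))`. -/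
theorem stmt_2 (q u : ℝ) (hq0 : 0 < q) (hq1 : q < 1) (hu0 : 0 < u) (hu1 : u < 1) :
    Summable (fun n : ℕ => u ^ n / ∏ k ∈ Finset.range n, (1 - q ^ (k + 1))) ∧
    HasProd (fun i : ℕ => (1 - u * q ^ i)⁻¹)
      (∑' n : ℕ, u ^ n / ∏ k ∈ Finset.range n, (1 - q ^ (k + 1))) := by
  have s := aux_summable q u hq0 hq1 hu0 hu1
  refine ⟨s, ?_⟩
  have hle : ∀ i : ℕ, u * q ^ i ≤ u := fun i =>
    mul_le_of_le_one_right hu0.le (pow_le_one₀ hq0.le hq1.le)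
  have hpos : ∀ i : ℕ, 0 < u * q ^ i := fun i => by positivity
  have hd : ∀ i : ℕ, 0 < 1 - u * q ^ i := fun i => by linarith [hle i]
  have hm : Multipliable (fun i : ℕ => (1 - u * q ^ i)⁻¹) := by
    have hs : Summable (fun i : ℕ => u * q ^ i / (1 - u * q ^ i)) := by
      refine Summable.of_nonneg_of_le (fun i => (div_pos (hpos i) (hd i)).le) (fun i => ?_)
        ((summable_geometric_of_lt_one hq0.le hq1).mul_left (u / (1 - u)))
      rw [div_mul_eq_mul_div]
      exact div_le_div_of_nonneg_left (hpos i).le (by linarith) (by linarith [hle i])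
    refine (Real.multipliable_one_add_of_summable hs).congr fun i => ?_
    have := (hd i).ne'
    field_simp
    ring
  have hF : ∀ N : ℕ, (∑' n : ℕ, (u * q ^ N) ^ n / ∏ k ∈ Finset.range n, (1 - q ^ (k + 1))) =
      (∏ i ∈ Finset.range N, (1 - u * q ^ i)) *
        ∑' n : ℕ, u ^ n / ∏ k ∈ Finset.range n, (1 - q ^ (k + 1)) := by
    intro N
    induction N with
    | zero => simp
    | succ N ih =>
      rw [pow_succ, ← mul_assoc, aux_feq q _ hq0 hq1 (hpos N) (by linarith [hd N]), ih,
        Finset.prod_range_succ]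
      ring
  have hlim : Filter.Tendsto (fun N : ℕ =>
      ∑' n : ℕ, (u * q ^ N) ^ n / ∏ k ∈ Finset.range n, (1 - q ^ (k + 1)))
      Filter.atTop (nhds (∑' n : ℕ, (0:ℝ) ^ n / ∏ k ∈ Finset.range n, (1 - q ^ (k + 1)))) := by
    refine tendsto_tsum_of_dominated_convergence s (fun n => ?_)
      (Filter.Eventually.of_forall fun N n => ?_)
    · refine Filter.Tendsto.div_const (Filter.Tendsto.pow ?_ n) _
      simpa using (tendsto_pow_atTop_nhds_zero_of_lt_one hq0.le hq1).const_mul u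
    · have h1 := aux_pos q hq0 hq1 n
      rw [Real.norm_of_nonneg (div_pos (pow_pos (hpos N) _) h1).le]
      exact div_le_div_of_nonneg_right (pow_le_pow_left₀ (hpos N).le (hle N) n) h1.le
  have h0 : (∑' n : ℕ, (0:ℝ) ^ n / ∏ k ∈ Finset.range n, (1 - q ^ (k + 1))) = 1 := by
    rw [tsum_eq_single 0 (fun n hn => by simp [hn])]
    simp
  rw [h0] at hlim
  have ht := hm.hasProd.tendsto_prod_nat
  have hmul := ht.mul hlim
  have hconst : ∀ N : ℕ, (∏ i ∈ Finset.range N, (1 - u * q ^ i)⁻¹) *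
      (∑' n : ℕ, (u * q ^ N) ^ n / ∏ k ∈ Finset.range n, (1 - q ^ (k + 1))) =
      ∑' n : ℕ, u ^ n / ∏ k ∈ Finset.range n, (1 - q ^ (k + 1)) := by
    intro N
    rw [hF N, Finset.prod_inv_distrib, inv_mul_cancel_left₀]
    exact (Finset.prod_pos fun i _ => hd i).ne'
  have := tendsto_nhds_unique (hmul.congr hconst) tendsto_const_nhds
  rw [mul_one] at this
  rw [← this]
  exact hm.hasProd
end

section
/- For every positive integer n, ∑_{λ ⊢ n} ( n! / ∏_{s∈λ} h(s) )² = n!, where the sum is over all partitions λ of n. -/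
open Nat

/-- The hook length of the cell `s = (i,j)` of a Young diagram (0-indexed cells). -/
def hookLen (μ : YoungDiagram) (s : ℕ × ℕ) : ℕ :=
  (μ.rowLen s.1 - s.2 - 1) + (μ.colLen s.2 - s.1 - 1) + 1

namespace HL
open Polynomial

noncomputable def V (k : ℕ) (a : ℕ → ℝ) : ℝ := ∏ q ∈ Finset.range k, ∏ p ∈ Finset.range q, (a p - a q)

lemma V_update (a : ℕ → ℝ) (i : ℕ) (x : ℝ) (k : ℕ) (hi : i < k) :
    V k (Function.update a i x) * ∏ j ∈ (Finset.range k).erase i, (a i - a j)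
      = V k a * ∏ j ∈ (Finset.range k).erase i, (x - a j) := by
  induction k with
  | zero => omega
  | succ k ih =>
    have hV : ∀ b : ℕ → ℝ, V (k+1) b = V k b * ∏ p ∈ Finset.range k, (b p - b k) := by
      intro b; simp [V, Finset.prod_range_succ]
    rw [hV, hV]
    by_cases hik : i = k
    · subst hik
      have h1 : V i (Function.update a i x) = V i a := by
        unfold V
        refine Finset.prod_congr rfl fun q hq => Finset.prod_congr rfl fun p hp => ?_
        simp only [Finset.mem_range] at hq hp
        rw [Function.update_of_ne (by omega), Function.update_of_ne (by omega)]
      have h2 : (Finset.range (i+1)).erase i = Finset.range i := by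
        ext j; simp; omega
      rw [h1, h2, mul_assoc, mul_assoc, ← Finset.prod_mul_distrib, ← Finset.prod_mul_distrib]
      congr 1
      refine Finset.prod_congr rfl fun p hp => ?_
      simp only [Finset.mem_range] at hp
      rw [Function.update_of_ne (by omega), Function.update_self]
      ring
    · have hik' : i < k := by omega
      have h2 : (Finset.range (k+1)).erase i = insert k ((Finset.range k).erase i) := by
        ext j; simp; omega
      rw [h2, Finset.prod_insert (by simp), Finset.prod_insert (by simp)]
      have hm : i ∈ Finset.range k := by simpa using hik'
      rw [← Finset.mul_prod_erase _ _ hm, ← Finset.mul_prod_erase (Finset.range k) (fun p => a p - a k) hm]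
      have h3 : ∏ p ∈ (Finset.range k).erase i, (Function.update a i x p - Function.update a i x k)
          = ∏ p ∈ (Finset.range k).erase i, (a p - a k) := by
        refine Finset.prod_congr rfl fun p hp => ?_
        simp only [Finset.mem_erase, Finset.mem_range] at hp
        rw [Function.update_of_ne hp.1, Function.update_of_ne (by omega)]
      rw [h3, Function.update_self, Function.update_of_ne (by omega)]
      have := ih hik'
      linear_combination ((x - a k) * (∏ p ∈ (Finset.range k).erase i, (a p - a k)) * (a i - a k)) * this

lemma coeff_T (a : ℕ → ℝ) (k : ℕ) :
    let P := ∏ j ∈ Finset.range k, (X - C (a j))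
    let Q := ∏ j ∈ Finset.range k, (X - C (a j + 1))
    let T := X * (P - Q) - C (k : ℝ) * P
    T.degree < (k : WithBot ℕ) ∧ (0 < k → T.coeff (k-1) = ∑ j ∈ Finset.range k, (a j - j)) := by
  intro P Q T
  induction k with
  | zero => simp [T, P, Q]
  | succ k ih =>
    set P' := ∏ j ∈ Finset.range k, (X - C (a j)) with hP'
    set Q' := ∏ j ∈ Finset.range k, (X - C (a j + 1)) with hQ'
    obtain ⟨h1, h2⟩ := ih
    set T' := X * (P' - Q') - C (k : ℝ) * P' with hT'
    have hT : T = X * T' - C (a k + 1) * T' + C (a k - k) * P' := by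
      simp only [T, P, Q, Finset.prod_range_succ, ← hP', ← hQ', hT']
      simp only [C_add, C_sub, map_natCast, Nat.cast_add, Nat.cast_one, C_1]
      ring
    have hmon : P'.Monic := monic_prod_of_monic _ _ fun j _ => monic_X_sub_C _
    have hnd : P'.natDegree = k := by
      rw [hP', natDegree_prod_of_monic _ _ fun j _ => monic_X_sub_C _]; simp
    have hPk : P'.coeff k = 1 := by
      have := hmon.coeff_natDegree; rwa [hnd] at this
    rw [degree_lt_iff_coeff_zero] at h1 ⊢
    have hP0 : ∀ m, k < m → P'.coeff m = 0 := fun m hm => coeff_eq_zero_of_natDegree_lt (by omega)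
    constructor
    · intro m hm
      have : ∃ m', m = m' + 1 := ⟨m - 1, by omega⟩
      obtain ⟨m', rfl⟩ := this
      rw [hT]
      simp only [coeff_add, coeff_sub, coeff_X_mul, coeff_C_mul]
      rw [h1 _ (by omega), h1 _ (by omega), hP0 _ (by omega)]; ring
    · intro _
      rw [Finset.sum_range_succ, hT, Nat.add_sub_cancel]
      simp only [coeff_add, coeff_sub, coeff_C_mul]
      rw [h1 k le_rfl, hPk]
      rcases Nat.eq_zero_or_pos k with h0 | h0
      · subst h0; simp
      · obtain ⟨m, rfl⟩ : ∃ m, k = m + 1 := ⟨k - 1, by omega⟩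
        have := h2 h0
        rw [Nat.add_sub_cancel] at this
        rw [coeff_X_mul, this]; ring

lemma sumA (a : ℕ → ℝ) (m : ℕ) (hinj : Set.InjOn a (Finset.range (m+1))) (h0 : a m = 0)
    (hp : ∀ i, 0 ≤ a i) :
    ∑ i ∈ Finset.range (m+1), (∏ j ∈ (Finset.range (m+1)).erase i, (a i + 1 - a j)) / (a i + 1)
      / ∏ j ∈ (Finset.range (m+1)).erase i, (a i - a j) = 1 := by
  set g : ℝ[X] := ∏ j ∈ Finset.range m, (X - C (a j - 1)) with hg
  have hmon : g.Monic := monic_prod_of_monic _ _ fun j _ => monic_X_sub_C _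
  have hnd : g.natDegree = m := by
    rw [hg, natDegree_prod_of_monic _ _ fun j _ => monic_X_sub_C _]; simp only [natDegree_X_sub_C]; simp
  have hc : g.coeff m = 1 := by
    have := hmon.coeff_natDegree; rwa [hnd] at this
  have hd : g.degree < ((Finset.range (m+1)).card : WithBot ℕ) := by
    rw [degree_eq_natDegree hmon.ne_zero, hnd, Finset.card_range]; exact_mod_cast Nat.lt_succ_self m
  have := Lagrange.coeff_eq_sum hinj hd
  rw [Finset.card_range, Nat.add_sub_cancel, hc] at this
  refine Eq.trans ?_ this.symm
  refine Finset.sum_congr rfl fun i hi => ?_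
  congr 1
  have h1 : ∏ j ∈ Finset.range (m+1), (a i + 1 - a j) = ∏ j ∈ (Finset.range (m+1)).erase i, (a i + 1 - a j) := by
    rw [← Finset.mul_prod_erase _ _ hi]; simp
  rw [← h1, Finset.prod_range_succ, h0, sub_zero, hg, eval_prod,
    mul_div_assoc, div_self (by have := hp i; positivity), mul_one]
  refine Finset.prod_congr rfl fun j _ => ?_
  simp; ring

lemma sumB (a : ℕ → ℝ) (k : ℕ) (hk : 0 < k) (hinj : Set.InjOn a (Finset.range k)) :
    ∑ i ∈ Finset.range k, (a i * ∏ j ∈ (Finset.range k).erase i, (a i - 1 - a j))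
      / ∏ j ∈ (Finset.range k).erase i, (a i - a j) = ∑ j ∈ Finset.range k, (a j - j) := by
  obtain ⟨h1, h2⟩ := coeff_T a k
  rw [← h2 hk]
  have := Lagrange.coeff_eq_sum hinj (by rw [Finset.card_range]; exact h1)
  rw [Finset.card_range] at this
  rw [this]
  refine Finset.sum_congr rfl fun i hi => ?_
  congr 1
  have e1 : ∏ j ∈ Finset.range k, (a i - a j) = 0 := Finset.prod_eq_zero hi (sub_self _)
  have e2 : ∏ j ∈ Finset.range k, (a i - (a j + 1)) = - ∏ j ∈ (Finset.range k).erase i, (a i - 1 - a j) := by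
    rw [← Finset.mul_prod_erase _ _ hi]
    rw [show a i - (a i + 1) = -1 by ring, neg_one_mul]
    congr 1
    refine Finset.prod_congr rfl fun j _ => ?_
    ring
  simp only [eval_sub, eval_mul, eval_X, eval_prod, eval_C, e1, e2]
  ring

/-- shifted parts -/
def L (μ : YoungDiagram) (k i : ℕ) : ℕ := μ.rowLen i + (k - 1 - i)

lemma row_prod (μ : YoungDiagram) (k i : ℕ) (hi : i < k) (hk : μ.colLen 0 ≤ k) :
    (∏ j ∈ Finset.range (μ.rowLen i), hookLen μ (i, j)) *
      ∏ r ∈ Finset.Ioo i k, (L μ k i - L μ k r) = (L μ k i)! := by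
  have hmem : ∀ r j, j < μ.rowLen r ↔ r < μ.colLen j := fun r j => by
    rw [← YoungDiagram.mem_iff_lt_rowLen, YoungDiagram.mem_iff_lt_colLen]
  have hco : ∀ j, μ.colLen j ≤ k := fun j => (μ.colLen_anti 0 j (Nat.zero_le _)).trans hk
  have hra := μ.rowLen_anti
  have hca := μ.colLen_anti
  have i1 : Set.InjOn (fun j => hookLen μ (i, j)) (Finset.range (μ.rowLen i)) := by
    intro j hj j' hj' h
    simp only [Finset.coe_range, Set.mem_Iio] at hj hj'
    simp only [hookLen] at h
    have a1 := (hmem _ _).1 hj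
    have a2 := (hmem _ _).1 hj'
    rcases lt_trichotomy j j' with h' | h' | h'
    · have := hca j j' h'.le; omega
    · exact h'
    · have := hca j' j h'.le; omega
  have i2 : Set.InjOn (fun r => L μ k i - L μ k r) (Finset.Ioo i k) := by
    intro r hr r' hr' h
    simp only [Finset.coe_Ioo, Set.mem_Ioo] at hr hr'
    simp only [L] at h
    have := hra i r hr.1.le
    have := hra i r' hr'.1.le
    rcases lt_trichotomy r r' with h' | h' | h'
    · have := hra r r' h'.le; omega
    · exact h'
    · have := hra r' r h'.le; omega
  have hdisj : Disjoint ((Finset.range (μ.rowLen i)).image (fun j => hookLen μ (i, j)))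
      ((Finset.Ioo i k).image (fun r => L μ k i - L μ k r)) := by
    rw [Finset.disjoint_left]
    intro x hx hx'
    simp only [Finset.mem_image, Finset.mem_range, Finset.mem_Ioo] at hx hx'
    obtain ⟨j, hj, rfl⟩ := hx
    obtain ⟨r, hr, h⟩ := hx'
    simp only [hookLen, L] at h
    have a1 := (hmem _ _).1 hj
    have := hra i r hr.1.le
    by_cases hc : j < μ.rowLen r
    · have := (hmem _ _).1 hc
      omega
    · have := mt (hmem _ _).2 hc
      omega
  have hU : (Finset.range (μ.rowLen i)).image (fun j => hookLen μ (i, j)) ∪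
      (Finset.Ioo i k).image (fun r => L μ k i - L μ k r) = Finset.Icc 1 (L μ k i) := by
    apply Finset.eq_of_subset_of_card_le
    · intro x hx
      simp only [Finset.mem_union, Finset.mem_image, Finset.mem_range, Finset.mem_Ioo, Finset.mem_Icc] at hx ⊢
      rcases hx with ⟨j, hj, rfl⟩ | ⟨r, hr, rfl⟩
      · simp only [hookLen, L]
        have a1 := (hmem _ _).1 hj
        have := hco j
        omega
      · simp only [L]
        have := hra i r hr.1.le
        omega
    · rw [Finset.card_union_of_disjoint hdisj, Finset.card_image_of_injOn i1, Finset.card_image_of_injOn i2]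
      simp [L]; omega
  rw [← Finset.prod_Ico_id_eq_factorial, show Finset.Ico 1 (L μ k i + 1) = Finset.Icc 1 (L μ k i) by ext; simp, ← hU, Finset.prod_union hdisj, Finset.prod_image i1,
    Finset.prod_image i2]

lemma mem_bound (μ : YoungDiagram) (k : ℕ) (hk : μ.colLen 0 ≤ k) (r j : ℕ) (h : (r, j) ∈ μ) : r < k := by
  have := YoungDiagram.mem_iff_lt_colLen.1 h
  have := μ.colLen_anti 0 j (Nat.zero_le _)
  omega

lemma mem_finset_prod (μ : YoungDiagram) (k : ℕ) (hk : μ.colLen 0 ≤ k) (p : ℕ × ℕ) :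
    p ∈ μ.cells ↔ p.1 ∈ Finset.range k ∧ p.2 ∈ Finset.range (μ.rowLen p.1) := by
  obtain ⟨r, j⟩ := p
  simp only [YoungDiagram.mem_cells, Finset.mem_range]
  rw [← YoungDiagram.mem_iff_lt_rowLen]
  exact ⟨fun h => ⟨mem_bound μ k hk r j h, h⟩, fun h => h.2⟩

lemma card_sum (μ : YoungDiagram) (k : ℕ) (hk : μ.colLen 0 ≤ k) :
    μ.card = ∑ i ∈ Finset.range k, μ.rowLen i := by
  have := Finset.sum_finset_product μ.cells (Finset.range k) (fun i => Finset.range (μ.rowLen i))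
    (mem_finset_prod μ k hk) (f := fun _ => (1:ℕ))
  simpa using this

lemma L_lt (μ : YoungDiagram) {k p q : ℕ} (h : p < q) (hq : q < k) : L μ k q < L μ k p := by
  have := μ.rowLen_anti p q h.le
  simp only [L]; omega

noncomputable def G (k : ℕ) (a : ℕ → ℕ) : ℝ :=
  V k (fun i => (a i : ℝ)) / ∏ i ∈ Finset.range k, ((a i)! : ℝ)

noncomputable def F (μ : YoungDiagram) : ℝ := 1 / ∏ s ∈ μ.cells, (hookLen μ s : ℝ)

lemma F_eq (μ : YoungDiagram) (k : ℕ) (hk : μ.colLen 0 ≤ k) : F μ = G k (L μ k) := by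
  have h1 : ∏ s ∈ μ.cells, (hookLen μ s : ℝ) = ∏ i ∈ Finset.range k, ∏ j ∈ Finset.range (μ.rowLen i), (hookLen μ (i,j) : ℝ) :=
    Finset.prod_finset_product μ.cells (Finset.range k) (fun i => Finset.range (μ.rowLen i))
      (mem_finset_prod μ k hk)
  have h2 : V k (fun i => (L μ k i : ℝ)) = ∏ i ∈ Finset.range k, ∏ r ∈ Finset.Ioo i k, ((L μ k i : ℝ) - L μ k r) := by
    unfold V
    apply Finset.prod_comm'
    intro x y; simp; omega
  have h3 : (∏ s ∈ μ.cells, (hookLen μ s : ℝ)) * V k (fun i => (L μ k i : ℝ)) = ∏ i ∈ Finset.range k, ((L μ k i)! : ℝ) := by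
    rw [h1, h2, ← Finset.prod_mul_distrib]
    refine Finset.prod_congr rfl fun i hi => ?_
    rw [← row_prod μ k i (by simpa using hi) hk]
    push_cast
    congr 1
    refine Finset.prod_congr rfl fun r hr => ?_
    simp only [Finset.mem_Ioo] at hr
    rw [Nat.cast_sub (L_lt μ hr.1 hr.2).le]
  have h4 : ∏ s ∈ μ.cells, (hookLen μ s : ℝ) ≠ 0 := by
    refine Finset.prod_ne_zero_iff.2 fun s _ => ?_
    simp only [hookLen]; positivity
  have h5 : ∏ i ∈ Finset.range k, ((L μ k i)! : ℝ) ≠ 0 :=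
    Finset.prod_ne_zero_iff.2 fun s _ => by positivity
  unfold F G
  rw [div_eq_div_iff h4 h5]
  linarith

lemma G_succ (k : ℕ) (a b : ℕ → ℕ) (i : ℕ) (hi : i < k) (hinj : Set.InjOn a (Finset.range k))
    (hb : b = Function.update a i (a i + 1)) :
    G k b = G k a * ((∏ j ∈ (Finset.range k).erase i, ((a i : ℝ) + 1 - a j)) / (a i + 1)
      / ∏ j ∈ (Finset.range k).erase i, ((a i : ℝ) - a j)) := by
  have hm : i ∈ Finset.range k := by simpa using hi
  have hV := V_update (fun i => (a i : ℝ)) i ((a i : ℝ) + 1) k hi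
  have e1 : (fun j => (b j : ℝ)) = Function.update (fun i => (a i : ℝ)) i ((a i : ℝ) + 1) := by
    subst hb
    funext j
    by_cases h : j = i
    · subst h; simp
    · simp [Function.update_of_ne h]
  have e2 : ∏ j ∈ Finset.range k, ((b j)! : ℝ) = (a i + 1) * ∏ j ∈ Finset.range k, ((a j)! : ℝ) := by
    rw [← Finset.mul_prod_erase _ _ hm, ← Finset.mul_prod_erase _ (fun j => ((a j)! : ℝ)) hm, ← mul_assoc]
    subst hb
    congr 1
    · simp [Nat.factorial_succ]
    · refine Finset.prod_congr rfl fun j hj => ?_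
      rw [Function.update_of_ne (Finset.ne_of_mem_erase hj)]
  have e3 : ∏ j ∈ (Finset.range k).erase i, ((a i : ℝ) - a j) ≠ 0 := by
    refine Finset.prod_ne_zero_iff.2 fun j hj => ?_
    rw [sub_ne_zero]
    intro h
    have h' : a i = a j := by exact_mod_cast h
    exact Finset.ne_of_mem_erase hj (hinj (Finset.mem_of_mem_erase hj) hm h'.symm)
  have e4 : ∏ i ∈ Finset.range k, ((a i)! : ℝ) ≠ 0 :=
    Finset.prod_ne_zero_iff.2 fun s _ => by positivity
  have e5 : (a i : ℝ) + 1 ≠ 0 := by positivity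
  unfold G
  rw [e1, e2]
  field_simp
  linear_combination hV

lemma G_pred (k : ℕ) (a b : ℕ → ℕ) (i : ℕ) (hi : i < k) (hinj : Set.InjOn a (Finset.range k))
    (hb : b i + 1 = a i) (hb' : ∀ j, j ≠ i → b j = a j) :
    G k b = G k a * (((a i : ℝ) * ∏ j ∈ (Finset.range k).erase i, ((a i : ℝ) - 1 - a j))
      / ∏ j ∈ (Finset.range k).erase i, ((a i : ℝ) - a j)) := by
  have hm : i ∈ Finset.range k := by simpa using hi
  have hV := V_update (fun i => (a i : ℝ)) i ((a i : ℝ) - 1) k hi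
  have e1 : (fun j => (b j : ℝ)) = Function.update (fun i => (a i : ℝ)) i ((a i : ℝ) - 1) := by
    funext j
    by_cases h : j = i
    · subst h; simp [← hb]
    · simp [Function.update_of_ne h, hb' j h]
  have e2 : ∏ j ∈ Finset.range k, ((a j)! : ℝ) = a i * ∏ j ∈ Finset.range k, ((b j)! : ℝ) := by
    rw [← Finset.mul_prod_erase _ _ hm, ← Finset.mul_prod_erase _ (fun j => ((b j)! : ℝ)) hm, ← mul_assoc]
    congr 1
    · simp [← hb, Nat.factorial_succ]
    · refine Finset.prod_congr rfl fun j hj => ?_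
      rw [hb' _ (Finset.ne_of_mem_erase hj)]
  have e3 : ∏ j ∈ (Finset.range k).erase i, ((a i : ℝ) - a j) ≠ 0 := by
    refine Finset.prod_ne_zero_iff.2 fun j hj => ?_
    rw [sub_ne_zero]
    intro h
    have h' : a i = a j := by exact_mod_cast h
    exact Finset.ne_of_mem_erase hj (hinj (Finset.mem_of_mem_erase hj) hm h'.symm)
  have e4 : ∏ i ∈ Finset.range k, ((b i)! : ℝ) ≠ 0 :=
    Finset.prod_ne_zero_iff.2 fun s _ => by positivity
  have e5 : (a i : ℝ) ≠ 0 := by rw [← hb]; positivity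
  unfold G
  rw [e1, e2]
  field_simp
  linear_combination hV

lemma exists_diagram (f : ℕ → ℕ) (k : ℕ) (hf : ∀ i j, i ≤ j → f j ≤ f i) (h0 : ∀ i, k ≤ i → f i = 0) :
    ∃ μ : YoungDiagram, μ.rowLen = f := by
  have hl : IsLowerSet (((Finset.range k ×ˢ Finset.range (f 0)).filter (fun p => p.2 < f p.1) : Finset (ℕ × ℕ)) : Set (ℕ × ℕ)) := by
    rintro ⟨i, j⟩ ⟨i', j'⟩ h hm
    simp only [Prod.mk_le_mk] at h
    simp only [Finset.coe_filter, Finset.mem_product, Finset.mem_range, Set.mem_ofPred_eq] at hm ⊢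
    have := hf _ _ h.1
    omega
  refine ⟨⟨_, hl⟩, ?_⟩
  · funext i
    apply eq_of_forall_lt_iff
    intro j
    rw [← YoungDiagram.mem_iff_lt_rowLen, YoungDiagram.mem_mk]
    simp only [Finset.mem_filter, Finset.mem_product, Finset.mem_range]
    refine ⟨fun h => h.2, fun h => ⟨⟨?_, ?_⟩, h⟩⟩
    · by_contra hc
      have := h0 i (by omega); omega
    · have := hf 0 i (Nat.zero_le _); omega

lemma rowLen_inj {μ ν : YoungDiagram} (h : μ.rowLen = ν.rowLen) : μ = ν := by
  ext ⟨i, j⟩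
  rw [YoungDiagram.mem_cells, YoungDiagram.mem_cells, YoungDiagram.mem_iff_lt_rowLen,
    YoungDiagram.mem_iff_lt_rowLen, h]

lemma colLen_le_of (μ : YoungDiagram) (k : ℕ) (h : μ.rowLen k = 0) : μ.colLen 0 ≤ k := by
  by_contra hc
  have : (k, 0) ∈ μ := YoungDiagram.mem_iff_lt_colLen.2 (by omega)
  have := YoungDiagram.mem_iff_lt_rowLen.1 this
  omega

lemma rowLen_zero_of (μ : YoungDiagram) (k : ℕ) (h : μ.colLen 0 ≤ k) : μ.rowLen k = 0 := by
  by_contra hc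
  have : (k, 0) ∈ μ := YoungDiagram.mem_iff_lt_rowLen.2 (by omega)
  have := YoungDiagram.mem_iff_lt_colLen.1 this
  omega

lemma colLen_le_card (μ : YoungDiagram) (j : ℕ) : μ.colLen j ≤ μ.card := by
  rw [YoungDiagram.colLen_eq_card]
  exact Finset.card_le_card (Finset.filter_subset _ _)

lemma rowLen_le_card (μ : YoungDiagram) (j : ℕ) : μ.rowLen j ≤ μ.card := by
  rw [YoungDiagram.rowLen_eq_card]
  exact Finset.card_le_card (Finset.filter_subset _ _)

lemma fin_Y (n : ℕ) : {μ : YoungDiagram | μ.card = n}.Finite := by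
  apply Set.Finite.of_finite_image (f := YoungDiagram.cells)
  · apply Set.Finite.subset (Finset.finite_toSet (Finset.range n ×ˢ Finset.range n).powerset)
    rintro _ ⟨μ, hμ, rfl⟩
    simp only [Set.mem_ofPred_eq] at hμ
    simp only [Finset.coe_powerset, Set.mem_preimage, Set.mem_powerset_iff, Finset.coe_subset]
    rintro ⟨i, j⟩ h
    have h1 := YoungDiagram.mem_iff_lt_colLen.1 h
    have h2 := YoungDiagram.mem_iff_lt_rowLen.1 h
    have := colLen_le_card μ j
    have := rowLen_le_card μ i
    simp only [Finset.mem_product, Finset.mem_range]; omega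
  · intro μ _ ν _ h
    exact YoungDiagram.ext h

noncomputable def Y (n : ℕ) : Finset YoungDiagram := (fin_Y n).toFinset

lemma mem_Y {n : ℕ} {μ : YoungDiagram} : μ ∈ Y n ↔ μ.card = n := by simp [Y]

def R (ν μ : YoungDiagram) (i : ℕ) : Prop := μ.rowLen = Function.update ν.rowLen i (ν.rowLen i + 1)

lemma R_card {ν μ : YoungDiagram} {i : ℕ} (h : R ν μ i) : μ.card = ν.card + 1 := by
  have h1 := card_sum μ (μ.card + ν.card + i + 1) (by have := colLen_le_card μ 0; omega)
  have h2 := card_sum ν (μ.card + ν.card + i + 1) (by have := colLen_le_card ν 0; omega)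
  have hm : i ∈ Finset.range (μ.card + ν.card + i + 1) := by simp
  rw [← Finset.add_sum_erase _ _ hm] at h1 h2
  have h3 : ∑ x ∈ (Finset.range (μ.card + ν.card + i + 1)).erase i, μ.rowLen x =
      ∑ x ∈ (Finset.range (μ.card + ν.card + i + 1)).erase i, ν.rowLen x :=
    Finset.sum_congr rfl fun j hj => by rw [h, Function.update_of_ne (Finset.ne_of_mem_erase hj)]
  have h4 : μ.rowLen i = ν.rowLen i + 1 := by rw [h, Function.update_self]
  omega

lemma injL (μ : YoungDiagram) (k : ℕ) : Set.InjOn (L μ k) (Finset.range k) := by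
  intro p hp q hq h
  simp only [Finset.coe_range, Set.mem_Iio] at hp hq
  rcases lt_trichotomy p q with h' | h' | h'
  · have := L_lt μ h' hq; omega
  · exact h'
  · have := L_lt μ h' hp; omega

open Classical in
lemma up (n : ℕ) (ν : YoungDiagram) (hν : ν.card = n) :
    ∑ i ∈ Finset.range (n+2), ∑ μ ∈ Y (n+1), (if R ν μ i then F μ else 0) = F ν := by
  have hc := colLen_le_card ν 0
  have key : ∀ i ∈ Finset.range (n+2), ∑ μ ∈ Y (n+1), (if R ν μ i then F μ else 0) =
      F ν * ((∏ j ∈ (Finset.range (n+2)).erase i, ((L ν (n+2) i : ℝ) + 1 - L ν (n+2) j)) / (L ν (n+2) i + 1)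
      / ∏ j ∈ (Finset.range (n+2)).erase i, ((L ν (n+2) i : ℝ) - L ν (n+2) j)) := by
    intro i hi
    have hi' : i < n + 2 := by simpa using hi
    by_cases hadd : i = 0 ∨ ν.rowLen i < ν.rowLen (i-1)
    · obtain ⟨μ, hμ⟩ : ∃ μ : YoungDiagram, μ.rowLen = Function.update ν.rowLen i (ν.rowLen i + 1) := by
        apply exists_diagram _ (n+2)
        · intro p q hpq
          rcases hpq.eq_or_lt with rfl | hpq
          · rfl
          have h1 := ν.rowLen_anti p q hpq.le
          simp only [Function.update_apply]
          split_ifs with hq hp hp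
          · omega
          · subst hq
            have := ν.rowLen_anti p (q-1) (by omega)
            omega
          · subst hp; omega
          · omega
        · intro j hj
          rw [Function.update_of_ne (by omega)]
          exact rowLen_zero_of _ _ (by omega)
      have hR : R ν μ i := hμ
      have hcard := R_card hR
      rw [Finset.sum_eq_single μ]
      · rw [if_pos hR, F_eq μ (n+2) (by have := colLen_le_card μ 0; omega), F_eq ν (n+2) (by omega)]
        apply G_succ _ _ _ _ hi' (injL _ _)
        funext j
        by_cases hj : j = i
        · subst hj; simp only [L, hμ, Function.update_self]; omega
        · simp only [L, hμ, Function.update_of_ne hj]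
      · intro μ' _ hne
        rw [if_neg]
        intro h
        exact hne (rowLen_inj (h.trans hμ.symm))
      · intro h
        exact absurd (mem_Y.2 (by omega)) h
    · push Not at hadd
      rw [Finset.sum_eq_zero]
      · have hz : ∏ j ∈ (Finset.range (n+2)).erase i, ((L ν (n+2) i : ℝ) + 1 - L ν (n+2) j) = 0 := by
          apply Finset.prod_eq_zero (i := i - 1)
          · simp; omega
          · have h1 := ν.rowLen_anti (i-1) i (by omega)
            have : L ν (n+2) i + 1 = L ν (n+2) (i-1) := by simp only [L]; omega
            rw [← this]; push_cast; ring
        rw [hz]; simp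
      · intro μ _
        rw [if_neg]
        intro h
        have h1 : μ.rowLen i = ν.rowLen i + 1 := by rw [h, Function.update_self]
        have h2 : μ.rowLen (i-1) = ν.rowLen (i-1) := by rw [h, Function.update_of_ne (by omega)]
        have := μ.rowLen_anti (i-1) i (by omega)
        omega
  rw [Finset.sum_congr rfl key, ← Finset.mul_sum, sumA (fun i => (L ν (n+2) i : ℝ)) (n+1), mul_one]
  · intro p hp q hq h
    exact injL ν (n+2) hp hq (by simpa using h)
  · have := rowLen_zero_of ν (n+1) (by omega)
    simp [L, this]
  · intro i; positivity

open Classical in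
lemma down (n : ℕ) (μ : YoungDiagram) (hμ : μ.card = n + 1) :
    ∑ i ∈ Finset.range (n+2), ∑ ν ∈ Y n, (if R ν μ i then F ν else 0) = (n + 1) * F μ := by
  have hc := colLen_le_card μ 0
  have hlast : μ.rowLen (n+1) = 0 := rowLen_zero_of μ (n+1) (by omega)
  have key : ∀ i ∈ Finset.range (n+2), ∑ ν ∈ Y n, (if R ν μ i then F ν else 0) =
      F μ * (((L μ (n+2) i : ℝ) * ∏ j ∈ (Finset.range (n+2)).erase i, ((L μ (n+2) i : ℝ) - 1 - L μ (n+2) j))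
      / ∏ j ∈ (Finset.range (n+2)).erase i, ((L μ (n+2) i : ℝ) - L μ (n+2) j)) := by
    intro i hi
    have hi' : i < n + 2 := by simpa using hi
    by_cases hrem : μ.rowLen (i+1) < μ.rowLen i
    · obtain ⟨ν, hν⟩ : ∃ ν : YoungDiagram, ν.rowLen = Function.update μ.rowLen i (μ.rowLen i - 1) := by
        apply exists_diagram _ (n+2)
        · intro p q hpq
          rcases hpq.eq_or_lt with rfl | hpq
          · rfl
          have h1 := μ.rowLen_anti p q hpq.le
          simp only [Function.update_apply]
          split_ifs with hq hp hp
          · omega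
          · subst hq
            omega
          · subst hp
            have := μ.rowLen_anti (p+1) q (by omega)
            omega
          · omega
        · intro j hj
          rw [Function.update_of_ne (by omega)]
          exact rowLen_zero_of _ _ (by omega)
      have hi1 : ν.rowLen i + 1 = μ.rowLen i := by rw [hν, Function.update_self]; omega
      have hi2 : ∀ j, j ≠ i → ν.rowLen j = μ.rowLen j := fun j hj => by rw [hν, Function.update_of_ne hj]
      have hR : R ν μ i := by
        funext j
        by_cases hj : j = i
        · subst hj; rw [Function.update_self, hi1]
        · rw [Function.update_of_ne hj, hi2 j hj]
      have hcard := R_card hR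
      rw [Finset.sum_eq_single ν]
      · rw [if_pos hR, F_eq ν (n+2) (by have := colLen_le_card ν 0; omega), F_eq μ (n+2) (by omega)]
        apply G_pred _ _ _ _ hi' (injL _ _)
        · simp only [L]; omega
        · intro j hj
          simp only [L, hi2 j hj]
      · intro ν' _ hne
        rw [if_neg]
        intro h
        apply hne
        apply rowLen_inj
        funext j
        by_cases hj : j = i
        · subst hj
          have : μ.rowLen j = ν'.rowLen j + 1 := by rw [h, Function.update_self]
          omega
        · rw [hi2 j hj, h, Function.update_of_ne hj]
      · intro h
        exact absurd (mem_Y.2 (by omega)) h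
    · rw [Finset.sum_eq_zero]
      · have h1 := μ.rowLen_anti i (i+1) (by omega)
        by_cases hil : i = n + 1
        · subst hil
          have : L μ (n+2) (n+1) = 0 := by simp [L, hlast]
          rw [this]; simp
        · have hz : ∏ j ∈ (Finset.range (n+2)).erase i, ((L μ (n+2) i : ℝ) - 1 - L μ (n+2) j) = 0 := by
            apply Finset.prod_eq_zero (i := i + 1)
            · simp; omega
            · have : L μ (n+2) i = L μ (n+2) (i+1) + 1 := by simp only [L]; omega
              rw [this]; push_cast; ring
          rw [hz]; simp
      · intro ν _
        rw [if_neg]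
        intro h
        have h1 : μ.rowLen i = ν.rowLen i + 1 := by rw [h, Function.update_self]
        have h2 : μ.rowLen (i+1) = ν.rowLen (i+1) := by rw [h, Function.update_of_ne (by omega)]
        have := ν.rowLen_anti i (i+1) (by omega)
        omega
  rw [Finset.sum_congr rfl key, ← Finset.mul_sum, sumB (fun i => (L μ (n+2) i : ℝ)) (n+2) (by omega), mul_comm]
  · congr 1
    have h1 := card_sum μ (n+2) (by omega)
    rw [hμ] at h1
    have h2 := Finset.sum_range_reflect (fun j => j) (n+2)
    have h3 : ∑ j ∈ Finset.range (n+2), L μ (n+2) j = (n + 1) + ∑ j ∈ Finset.range (n+2), j := by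
      rw [← h2, h1, ← Finset.sum_add_distrib]; rfl
    rw [Finset.sum_sub_distrib]
    have h4 : ((∑ j ∈ Finset.range (n+2), L μ (n+2) j : ℕ) : ℝ) = ((n + 1) + ∑ j ∈ Finset.range (n+2), j : ℕ) := by
      rw [h3]
    push_cast at h4
    rw [h4]; ring
  · intro p hp q hq h
    exact injL μ (n+2) hp hq (by simpa using h)

open Classical in
lemma sum_sq (n : ℕ) : ∑ μ ∈ Y n, F μ ^ 2 = 1 / (n ! : ℝ) := by
  induction n with
  | zero =>
    have : Y 0 = {⊥} := by
      ext μ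
      rw [mem_Y, Finset.mem_singleton]
      constructor
      · intro h
        apply YoungDiagram.ext
        rw [YoungDiagram.cells_bot]
        exact Finset.card_eq_zero.1 h
      · rintro rfl; simp
    rw [this]; simp [F]
  | succ n ih =>
    have h1 : (n + 1 : ℝ) * ∑ μ ∈ Y (n+1), F μ ^ 2 = ∑ ν ∈ Y n, F ν ^ 2 := by
      calc (n + 1 : ℝ) * ∑ μ ∈ Y (n+1), F μ ^ 2
          = ∑ μ ∈ Y (n+1), F μ * ∑ i ∈ Finset.range (n+2), ∑ ν ∈ Y n, (if R ν μ i then F ν else 0) := by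
            rw [Finset.mul_sum]
            refine Finset.sum_congr rfl fun μ hμ => ?_
            rw [down n μ (mem_Y.1 hμ)]; ring
        _ = ∑ ν ∈ Y n, F ν * ∑ i ∈ Finset.range (n+2), ∑ μ ∈ Y (n+1), (if R ν μ i then F μ else 0) := by
            simp only [Finset.mul_sum]
            rw [Finset.sum_comm]
            conv_rhs => rw [Finset.sum_comm]
            refine Finset.sum_congr rfl fun i _ => ?_
            rw [Finset.sum_comm]
            refine Finset.sum_congr rfl fun ν _ => Finset.sum_congr rfl fun μ _ => ?_
            split_ifs <;> ring
        _ = _ := by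
            refine Finset.sum_congr rfl fun ν hν => ?_
            rw [up n ν (mem_Y.1 hν)]; ring
    rw [ih] at h1
    rw [Nat.factorial_succ]
    push_cast
    have : (n + 1 : ℝ) ≠ 0 := by positivity
    field_simp at h1 ⊢
    linarith
end HL

/-- For every positive integer `n`, `∑_{λ ⊢ n} (n!/∏_{s∈λ} h(s))² = n!`,
the sum being over all partitions (Young diagrams) of size `n`. -/
theorem stmt_5 (n : ℕ) (hn : 0 < n) :
    ∑ᶠ μ : {μ : YoungDiagram // μ.card = n},
      ((n ! : ℝ) / ∏ s ∈ μ.1.cells, (hookLen μ.1 s : ℝ)) ^ 2 = (n ! : ℝ) := by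
  have h1 : ∑ᶠ μ : {μ : YoungDiagram // μ.card = n},
      ((n ! : ℝ) / ∏ s ∈ μ.1.cells, (hookLen μ.1 s : ℝ)) ^ 2 = ∑ μ ∈ HL.Y n, (n ! : ℝ) ^ 2 * HL.F μ ^ 2 := by
    rw [finsum_subtype_eq_finsum_cond (f := fun μ : YoungDiagram => ((n ! : ℝ) / ∏ s ∈ μ.cells, (hookLen μ s : ℝ)) ^ 2) (p := fun μ => μ.card = n)]
    simp only [← HL.mem_Y]
    rw [finsum_mem_finset_eq_sum]
    refine Finset.sum_congr rfl fun μ _ => ?_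
    unfold HL.F; ring
  rw [h1, ← Finset.mul_sum, HL.sum_sq]
  have : (n ! : ℝ) ≠ 0 := by positivity
  field_simp
end

section
/- Let q be a real number with q > 0 and q ≠ 1. For every partition λ of n with conjugate λ', J_λ(q) + J_{λ'}(q) = q^{2·binom(n,2)} · ( J_λ(1/q) + J_{λ'}(1/q) ), where J_μ(x) is evaluated by the same defining formula at the argument x. -/
/-- `n(λ) = ∑_i (i−1)λ_i`, i.e. the sum over all cells of the (0-indexed) row index. -/
def nstat (μ : YoungDiagram) : ℕ := ∑ s ∈ μ.cells, s.1

/-- `J_λ(x) = x^{|λ|²−|λ|−2n(λ)} (∏_{r=1}^{|λ|}(1−x^{−r}))² / ∏_{s∈λ}(1−x^{−h(s)})²`. -/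
noncomputable def Jpoly (x : ℝ) (μ : YoungDiagram) : ℝ :=
  x ^ ((μ.card : ℤ) ^ 2 - (μ.card : ℤ) - 2 * (nstat μ : ℤ)) *
    (∏ r ∈ Finset.range μ.card, (1 - x ^ (-(r + 1 : ℤ)))) ^ 2 /
    ∏ s ∈ μ.cells, (1 - x ^ (-(hookLen μ s : ℤ))) ^ 2

theorem aux_sum_swap (μ : YoungDiagram) (f : ℕ × ℕ → ℕ) :
    ∑ s ∈ μ.transpose.cells, f s = ∑ s ∈ μ.cells, f s.swap := by
  apply Finset.sum_nbij' Prod.swap Prod.swap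
  · intro a ha
    simpa [YoungDiagram.mem_transpose] using ha
  · intro a ha
    simpa [YoungDiagram.mem_transpose] using ha
  · intro a _; simp
  · intro a _; simp
  · intro a _; simp

theorem aux_prod_swap (μ : YoungDiagram) (f : ℕ × ℕ → ℝ) :
    ∏ s ∈ μ.transpose.cells, f s = ∏ s ∈ μ.cells, f s.swap := by
  apply Finset.prod_nbij' Prod.swap Prod.swap
  · intro a ha
    simpa [YoungDiagram.mem_transpose] using ha
  · intro a ha
    simpa [YoungDiagram.mem_transpose] using ha
  · intro a _; simp
  · intro a _; simp
  · intro a _; simp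

theorem aux_card (μ : YoungDiagram) : μ.transpose.card = μ.card := by
  have := aux_sum_swap μ (fun _ => 1)
  simpa using this

theorem aux_hook (μ : YoungDiagram) (s : ℕ × ℕ) :
    hookLen μ.transpose s.swap = hookLen μ s := by
  simp [hookLen]; omega

theorem aux_arm (μ : YoungDiagram) :
    ∑ s ∈ μ.cells, (μ.rowLen s.1 - s.2 - 1) = ∑ s ∈ μ.cells, s.2 := by
  apply Finset.sum_nbij' (fun s => (s.1, μ.rowLen s.1 - s.2 - 1))
    (fun s => (s.1, μ.rowLen s.1 - s.2 - 1))
  all_goals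
    rintro ⟨i, j⟩ h
    simp only [YoungDiagram.mem_cells, YoungDiagram.mem_iff_lt_rowLen, Prod.mk.injEq, true_and] at h ⊢
    try omega

theorem aux_nstat_tr (μ : YoungDiagram) : nstat μ.transpose = ∑ s ∈ μ.cells, s.2 := by
  unfold nstat
  rw [aux_sum_swap]; simp

theorem aux_leg (μ : YoungDiagram) :
    ∑ s ∈ μ.cells, (μ.colLen s.2 - s.1 - 1) = nstat μ := by
  have h := aux_arm μ.transpose
  rw [aux_sum_swap, ← aux_nstat_tr, YoungDiagram.transpose_transpose] at h
  simpa using h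

theorem aux_hooksum (μ : YoungDiagram) :
    ∑ s ∈ μ.cells, hookLen μ s = nstat μ + nstat μ.transpose + μ.card := by
  unfold hookLen
  rw [Finset.sum_add_distrib, Finset.sum_add_distrib, aux_arm, aux_leg, aux_nstat_tr]
  simp
  omega

theorem aux_factor (q : ℝ) (hq : 0 < q) (k : ℕ) :
    (1 - q⁻¹ ^ (-(k : ℤ))) ^ 2 = q ^ (2 * k) * (1 - q ^ (-(k : ℤ))) ^ 2 := by
  have h : q ^ k ≠ 0 := by positivity
  simp only [zpow_neg, zpow_natCast, inv_pow, inv_inv]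
  rw [pow_mul']
  field_simp
  ring

theorem aux_rsum (n : ℕ) : ∑ r ∈ Finset.range n, 2 * (r + 1) = n * (n + 1) := by
  induction n with
  | zero => simp
  | succ n ih => rw [Finset.sum_range_succ, ih]; ring

theorem aux_choose (n : ℕ) : ((2 * n.choose 2 : ℕ) : ℤ) = (n : ℤ) ^ 2 - n := by
  induction n with
  | zero => simp
  | succ n ih =>
    rw [Nat.choose_succ_succ' n 1]
    push_cast at ih ⊢
    simp only [Nat.choose_one_right]
    linarith

theorem aux_main (q : ℝ) (hq : 0 < q) (μ : YoungDiagram) :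
    Jpoly q μ.transpose = q ^ (2 * μ.card.choose 2) * Jpoly q⁻¹ μ := by
  have hq0 : q ≠ 0 := hq.ne'
  unfold Jpoly
  rw [aux_prod_swap, aux_card]
  simp only [aux_hook]
  have h1 : ∏ s ∈ μ.cells, (1 - q⁻¹ ^ (-(hookLen μ s : ℤ))) ^ 2 =
      q ^ (2 * (nstat μ + nstat μ.transpose + μ.card)) *
        ∏ s ∈ μ.cells, (1 - q ^ (-(hookLen μ s : ℤ))) ^ 2 := by
    simp only [aux_factor q hq]
    rw [Finset.prod_mul_distrib, Finset.prod_pow_eq_pow_sum, ← Finset.mul_sum, aux_hooksum]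
  have h2 : (∏ r ∈ Finset.range μ.card, (1 - q⁻¹ ^ (-(r + 1 : ℤ)))) ^ 2 =
      q ^ (μ.card * (μ.card + 1)) *
        (∏ r ∈ Finset.range μ.card, (1 - q ^ (-(r + 1 : ℤ)))) ^ 2 := by
    rw [← Finset.prod_pow, ← Finset.prod_pow, ← aux_rsum, ← Finset.prod_pow_eq_pow_sum,
      ← Finset.prod_mul_distrib]
    refine Finset.prod_congr rfl fun r _ => ?_
    have := aux_factor q hq (r + 1)
    push_cast at this
    exact this
  rw [h1, h2]
  generalize (∏ r ∈ Finset.range μ.card, (1 - q ^ (-(r + 1 : ℤ)))) ^ 2 = P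
  generalize ∏ s ∈ μ.cells, (1 - q ^ (-(hookLen μ s : ℤ))) ^ 2 = D
  have h3 : q ^ ((μ.card : ℤ) ^ 2 - (μ.card : ℤ) - 2 * (nstat μ.transpose : ℤ)) *
      q ^ (2 * (nstat μ + nstat μ.transpose + μ.card)) =
      q ^ (2 * μ.card.choose 2) *
      q⁻¹ ^ ((μ.card : ℤ) ^ 2 - (μ.card : ℤ) - 2 * (nstat μ : ℤ)) *
      q ^ (μ.card * (μ.card + 1)) := by
    rw [inv_zpow', ← zpow_natCast, ← zpow_natCast, ← zpow_natCast, aux_choose,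
      ← zpow_add₀ hq0, ← zpow_add₀ hq0, ← zpow_add₀ hq0]
    congr 1
    push_cast
    ring
  have h4 : q ^ (2 * (nstat μ + nstat μ.transpose + μ.card)) ≠ 0 := by positivity
  rw [← mul_div_mul_left _ D h4, ← mul_div_assoc]
  congr 1
  linear_combination P * h3

/-- For real `q > 0`, `q ≠ 1` and any partition `λ` of `n` with conjugate `λ'`,
`J_λ(q) + J_{λ'}(q) = q^{2·C(n,2)} (J_λ(1/q) + J_{λ'}(1/q))`. -/
theorem stmt_6 (q : ℝ) (hq : 0 < q) (hq1 : q ≠ 1) (n : ℕ) (μ : YoungDiagram)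
    (hμ : μ.card = n) :
    Jpoly q μ + Jpoly q μ.transpose =
      q ^ (2 * n.choose 2) * (Jpoly q⁻¹ μ + Jpoly q⁻¹ μ.transpose) := by
  subst hμ
  have h1 := aux_main q hq μ
  have h2 := aux_main q hq μ.transpose
  rw [YoungDiagram.transpose_transpose, aux_card] at h2
  rw [h1, h2]
  ring
end

section
/- Let q be a real number with q > 1 and let N be a positive integer. Then ∑_λ q^{−(2n(λ)+|λ|)} · ∏_{s∈λ} (1 − q^{−(N + c(s))}) / (1 − q^{−h(s)})² = ∏_{r=1}^N ∏_{t=0}^∞ 1/(1 − q^{−(r+t)}), where the sum is over all partitions λ of all nonnegative integers and both sides converge. (The summand vanishes whenever λ has more than N parts.) -/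
open Finset Filter Topology

noncomputable def qf (x : ℝ) (n : ℕ) : ℝ := ∏ k ∈ range n, (1 - x ^ (k + 1))

lemma qf_succ (x : ℝ) (n : ℕ) : qf x (n + 1) = qf x n * (1 - x ^ (n + 1)) := by
  simp [qf, prod_range_succ]

lemma fac_pos_s8 {x : ℝ} (h0 : 0 < x) (h1 : x < 1) (n : ℕ) : 0 < 1 - x ^ (n + 1) := by
  have := pow_lt_one₀ h0.le h1 (Nat.succ_ne_zero n)
  simpa using this

lemma qf_pos {x : ℝ} (h0 : 0 < x) (h1 : x < 1) (n : ℕ) : 0 < qf x n :=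
  prod_pos fun k _ => fac_pos_s8 h0 h1 k

noncomputable def EE (x z : ℝ) : ℝ := ∑' l : ℕ, z ^ l / qf x l

lemma EE_summable {x : ℝ} (h0 : 0 < x) (h1 : x < 1) {z : ℝ} (z0 : 0 < z) (z1 : z < 1) :
    Summable (fun l : ℕ => z ^ l / qf x l) := by
  refine summable_of_ratio_test_tendsto_lt_one z1 ?_ ?_
  · exact Eventually.of_forall fun n => (div_pos (pow_pos z0 n) (qf_pos h0 h1 n)).ne'
  · have : Tendsto (fun n : ℕ => z / (1 - x ^ (n + 1))) atTop (𝓝 (z / (1 - 0))) := by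
      refine tendsto_const_nhds.div (tendsto_const_nhds.sub ?_) (by norm_num)
      exact (tendsto_pow_atTop_nhds_zero_of_lt_one h0.le h1).comp (tendsto_add_atTop_nat 1)
    simp only [sub_zero, div_one] at this
    refine this.congr fun n => ?_
    have a := qf_pos h0 h1 n
    have b := fac_pos_s8 h0 h1 n
    have c := pow_pos z0 n
    rw [Real.norm_of_nonneg (div_pos (pow_pos z0 _) (qf_pos h0 h1 _)).le,
      Real.norm_of_nonneg (div_pos (pow_pos z0 _) (qf_pos h0 h1 _)).le, qf_succ, pow_succ]
    field_simp
    ring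

lemma EE_step {x : ℝ} (h0 : 0 < x) (h1 : x < 1) {z : ℝ} (z0 : 0 < z) (z1 : z < 1) :
    EE x (z * x) = EE x z * (1 - z) := by
  have hs := EE_summable h0 h1 z0 z1
  have hs2 := EE_summable h0 h1 (z := z * x) (by positivity) (by nlinarith)
  have e1 : EE x z - EE x (z * x) = ∑' l : ℕ, (z ^ l / qf x l - (z * x) ^ l / qf x l) :=
    (hs.tsum_sub hs2).symm
  rw [(hs.sub hs2).tsum_eq_zero_add] at e1
  have : ∀ l : ℕ, z ^ (l + 1) / qf x (l + 1) - (z * x) ^ (l + 1) / qf x (l + 1)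
      = z * (z ^ l / qf x l) := by
    intro l
    have a := (qf_pos h0 h1 l).ne'
    have b := (fac_pos_s8 h0 h1 l).ne'
    rw [qf_succ, mul_pow]
    field_simp
    ring
  simp only [this, tsum_mul_left] at e1
  change _ = _ + z * EE x z at e1
  simp at e1
  linarith

lemma EE_iter {x : ℝ} (h0 : 0 < x) (h1 : x < 1) {z : ℝ} (z0 : 0 < z) (z1 : z < 1) (n : ℕ) :
    EE x (z * x ^ n) = EE x z * ∏ k ∈ range n, (1 - z * x ^ k) := by
  induction n with
  | zero => simp
  | succ n ih =>
    have p := pow_pos h0 n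
    have p1 := pow_le_one₀ h0.le h1.le (n := n)
    rw [pow_succ, ← mul_assoc, EE_step h0 h1 (by positivity) (by nlinarith), ih, prod_range_succ]
    ring

lemma EE_tendsto {x : ℝ} (h0 : 0 < x) (h1 : x < 1) {z : ℝ} (z0 : 0 < z) (z1 : z < 1) :
    Tendsto (fun n : ℕ => EE x (z * x ^ n)) atTop (𝓝 1) := by
  have key := tendsto_tsum_of_dominated_convergence (𝓕 := atTop)
    (f := fun (n : ℕ) (l : ℕ) => (z * x ^ n) ^ l / qf x l)
    (g := fun l => (0 : ℝ) ^ l / qf x l) (EE_summable h0 h1 z0 z1) ?_ ?_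
  · have e : ∑' l : ℕ, (0 : ℝ) ^ l / qf x l = 1 := by
      rw [tsum_eq_single 0]
      · simp [qf]
      · intro b hb; simp [hb]
    rw [e] at key
    exact key
  · intro k
    refine Tendsto.div_const (Tendsto.pow ?_ k) _
    simpa using (tendsto_pow_atTop_nhds_zero_of_lt_one h0.le h1).const_mul z
  · refine Eventually.of_forall fun n k => ?_
    have p := pow_pos h0 n
    have p1 := pow_le_one₀ h0.le h1.le (n := n)
    have q := qf_pos h0 h1 k
    rw [Real.norm_of_nonneg (by positivity)]
    gcongr
    nlinarith

lemma EE_tendsto_prod {x : ℝ} (h0 : 0 < x) (h1 : x < 1) {z : ℝ} (z0 : 0 < z) (z1 : z < 1) :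
    Tendsto (fun n : ℕ => ∏ k ∈ range n, (1 - z * x ^ k)⁻¹) atTop (𝓝 (EE x z)) := by
  have h := (tendsto_const_nhds (x := EE x z)).div (EE_tendsto h0 h1 z0 z1) one_ne_zero
  rw [div_one] at h
  have hz : 0 < EE x z := by
    have : (0:ℝ) < ∑' l : ℕ, z ^ l / qf x l :=
      (EE_summable h0 h1 z0 z1).tsum_pos
      (fun i => (div_pos (pow_pos z0 i) (qf_pos h0 h1 i)).le) 0
      ((div_pos (pow_pos z0 0) (qf_pos h0 h1 0)))
    exact this
  refine h.congr fun n => ?_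
  simp only [Pi.div_apply]
  rw [EE_iter h0 h1 z0 z1, prod_inv_distrib, div_mul_eq_div_div, div_self hz.ne', one_div]

lemma EE_pow {x : ℝ} (h0 : 0 < x) (h1 : x < 1) (r : ℕ) :
    EE x (x ^ (r + 1)) = EE x x * qf x r := by
  have := EE_iter h0 h1 h0 h1 r
  rw [← pow_succ'] at this
  rw [this, qf]
  congr 1
  exact prod_congr rfl fun k _ => by rw [pow_succ']

lemma rhs_hasProd {x : ℝ} (h0 : 0 < x) (h1 : x < 1) (N : ℕ) :
    HasProd (fun p : Fin N × ℕ => (1 - x ^ ((p.1 : ℕ) + 1 + p.2))⁻¹)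
      (EE x x ^ N * ∏ r ∈ range N, qf x r) := by
  have hb : ∀ m : ℕ, (1 - x ^ (m + 1))⁻¹ = 1 + x ^ (m + 1) / (1 - x ^ (m + 1)) := by
    intro m
    have := (fac_pos_s8 h0 h1 m).ne'
    field_simp
    ring
  have hbound : ∀ a b : ℕ, ‖x ^ (a + 1 + b) / (1 - x ^ (a + 1 + b))‖ ≤ x ^ b / (1 - x) := by
    intro a b
    have e : a + 1 + b = (a + b) + 1 := by ring
    have f := fac_pos_s8 h0 h1 (a + b)
    have hx : 0 < 1 - x := by linarith
    rw [e, Real.norm_of_nonneg (div_pos (pow_pos h0 _) f).le]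
    refine div_le_div₀ (by positivity) (pow_le_pow_of_le_one h0.le h1.le (by omega)) hx ?_
    have : x ^ (a + b + 1) ≤ x ^ 1 := pow_le_pow_of_le_one h0.le h1.le (by omega)
    linarith [pow_one x]
  have hg : Summable fun b : ℕ => x ^ b / (1 - x) :=
    (summable_geometric_of_lt_one h0.le h1).div_const _
  have hm1 : ∀ a : ℕ, Multipliable fun b : ℕ => (1 - x ^ (a + 1 + b))⁻¹ := by
    intro a
    have : Multipliable fun b : ℕ => 1 + x ^ (a + 1 + b) / (1 - x ^ (a + 1 + b)) :=
      multipliable_one_add_of_summable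
        (Summable.of_nonneg_of_le (fun _ => norm_nonneg _) (fun b => hbound a b) hg)
    refine this.congr fun b => ?_
    rw [show a + 1 + b = a + b + 1 by ring, hb]
  have hm2 : Multipliable fun p : Fin N × ℕ => (1 - x ^ ((p.1 : ℕ) + 1 + p.2))⁻¹ := by
    have : Multipliable fun p : Fin N × ℕ =>
        1 + x ^ ((p.1 : ℕ) + 1 + p.2) / (1 - x ^ ((p.1 : ℕ) + 1 + p.2)) := by
      refine multipliable_one_add_of_summable
        (Summable.of_nonneg_of_le (fun _ => norm_nonneg _) (fun p => hbound p.1 p.2) ?_)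
      have := Summable.mul_of_nonneg (f := fun _ : Fin N => (1:ℝ)) (Summable.of_finite) hg
        (fun _ => zero_le_one) (fun b => div_nonneg (pow_nonneg h0.le _) (by linarith))
      simpa using this
    refine this.congr fun p => ?_
    rw [show (p.1 : ℕ) + 1 + p.2 = p.1 + p.2 + 1 by ring, hb]
  have hrow : ∀ a : Fin N, HasProd (fun b : ℕ => (1 - x ^ ((a : ℕ) + 1 + b))⁻¹)
      (EE x x * qf x a) := by
    intro a
    have t1 := (hm1 a).hasProd.tendsto_prod_nat
    have t2 := EE_tendsto_prod h0 h1 (z := x ^ ((a : ℕ) + 1)) (by positivity)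
      (by linarith [fac_pos_s8 h0 h1 a])
    simp only [← pow_add] at t2
    rw [← EE_pow h0 h1, ← tendsto_nhds_unique t1 t2]
    exact (hm1 a).hasProd
  have h3 := hm2.hasProd.prod_fiberwise hrow
  have h4 := hasProd_fintype (fun a : Fin N => EE x x * qf x a)
  have h5 := h3.unique h4
  rw [prod_mul_distrib, prod_const, card_univ, Fintype.card_fin,
    Fin.prod_univ_eq_prod_range (fun a => qf x a)] at h5
  rw [← h5]
  exact hm2.hasProd
lemma hasSum_pi_prod (n : ℕ) (f : Fin n → ℕ → ℝ) (a : Fin n → ℝ)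
    (hf : ∀ i, HasSum (f i) (a i)) (hs : ∀ i, Summable fun k => ‖f i k‖) :
    HasSum (fun l : Fin n → ℕ => ∏ i, f i (l i)) (∏ i, a i) ∧
      Summable (fun l : Fin n → ℕ => ‖∏ i, f i (l i)‖) := by
  induction n with
  | zero =>
    refine ⟨?_, Summable.of_finite⟩
    have := hasSum_fintype (fun l : Fin 0 → ℕ => ∏ i, f i (l i))
    simpa using this
  | succ n ih =>
    obtain ⟨i1, i2⟩ := ih (fun i => f i.succ) (fun i => a i.succ) (fun i => hf _) (fun i => hs _)
    let eqv : ℕ × (Fin n → ℕ) ≃ (Fin (n + 1) → ℕ) := Fin.consEquiv (fun _ => ℕ)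
    have e : ∀ p : ℕ × (Fin n → ℕ), ∏ i, f i (eqv p i) = f 0 p.1 * ∏ i, f i.succ (p.2 i) := by
      intro p
      simp [Fin.prod_univ_succ, Fin.consEquiv, eqv]
    have m := (hs 0).mul_norm i2
    have m1 := (hf 0).mul i1 m.of_norm
    constructor
    · rw [← eqv.hasSum_iff, Fin.prod_univ_succ]
      have : (fun l : Fin (n + 1) → ℕ => ∏ i, f i (l i)) ∘ eqv =
          fun p => f 0 p.1 * ∏ i, f i.succ (p.2 i) := funext e
      rw [this]
      exact m1
    · rw [← eqv.summable_iff]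
      have : (fun l : Fin (n + 1) → ℕ => ‖∏ i, f i (l i)‖) ∘ eqv =
          fun p => ‖f 0 p.1 * ∏ i, f i.succ (p.2 i)‖ := funext fun p => by
        simp only [Function.comp_apply]
        rw [e]
      rw [this]
      exact m

/-- value of the monic polynomial -/
lemma poly_val {x : ℝ} (h0 : 0 < x) (h1 : x < 1) (j m : ℕ) :
    (∏ k ∈ range j, (x ^ (m + j) - x ^ k)) * qf x m = (∏ k ∈ range j, (-x ^ k)) * qf x (m + j) := by
  induction j generalizing m with
  | zero => simp
  | succ j ih =>
    have := ih (m + 1)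
    rw [qf_succ] at this
    rw [prod_range_succ, prod_range_succ]
    have b := (fac_pos_s8 h0 h1 m).ne'
    have e : m + 1 + j = m + (j + 1) := by ring
    rw [e] at this
    apply mul_right_cancel₀ b
    calc _ = ((∏ k ∈ range j, (x ^ (m + (j + 1)) - x ^ k)) * (qf x m * (1 - x ^ (m + 1))))
          * (x ^ (m + (j + 1)) - x ^ j) := by ring
      _ = _ := by rw [this]; ring

lemma moment {x : ℝ} (h0 : 0 < x) (h1 : x < 1) (a j : ℕ) :
    HasSum (fun l : ℕ => x ^ l / qf x l * (x ^ l) ^ a * ∏ k ∈ range j, (x ^ l - x ^ k))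
      ((EE x x * qf x a) * ((∏ k ∈ range j, (-x ^ k)) * x ^ j * (x ^ j) ^ a)) ∧
    Summable (fun l : ℕ => ‖x ^ l / qf x l * (x ^ l) ^ a * ∏ k ∈ range j, (x ^ l - x ^ k)‖) := by
  have hz1 : x ^ (a + 1) < 1 := by linarith [fac_pos_s8 h0 h1 a]
  have hz0 : 0 < x ^ (a + 1) := by positivity
  have hsum := EE_summable h0 h1 hz0 hz1
  have key : ∀ m : ℕ, x ^ (m + j) / qf x (m + j) * (x ^ (m + j)) ^ a *
      ∏ k ∈ range j, (x ^ (m + j) - x ^ k) =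
      ((x ^ (a + 1)) ^ m / qf x m) * ((∏ k ∈ range j, (-x ^ k)) * x ^ j * (x ^ j) ^ a) := by
    intro m
    have p1 := (qf_pos h0 h1 m).ne'
    have p2 := (qf_pos h0 h1 (m + j)).ne'
    have e : ∏ k ∈ range j, (x ^ (m + j) - x ^ k)
        = (∏ k ∈ range j, (-x ^ k)) * qf x (m + j) / qf x m := by
      rw [eq_div_iff p1, poly_val h0 h1]
    rw [e]
    field_simp
    ring
  have hH : HasSum (fun l : ℕ => x ^ l / qf x l * (x ^ l) ^ a * ∏ k ∈ range j, (x ^ l - x ^ k))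
      ((EE x x * qf x a) * ((∏ k ∈ range j, (-x ^ k)) * x ^ j * (x ^ j) ^ a)) := by
    rw [← (add_left_injective j).hasSum_iff]
    · rw [← EE_pow h0 h1]
      refine (hsum.hasSum.mul_right _).congr_fun ?_ 
      intro m
      exact (key m)
    · intro l hl
      have : l < j := by
        by_contra h
        exact hl ⟨l - j, by simp; omega⟩
      rw [prod_eq_zero (mem_range.2 this) (sub_self _), mul_zero]
  exact ⟨hH, hH.summable.abs⟩

lemma vand_poly (x : ℝ) (n : ℕ) (v : Fin n → ℝ) :
    (Matrix.vandermonde v).det =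
      (Matrix.of fun i j : Fin n => ∏ k ∈ range (j : ℕ), (v i - x ^ k)).det := by
  rw [Matrix.det_eval_matrixOfPolynomials_eq_det_vandermonde v
    (fun j => ∏ k ∈ range (j : ℕ), (Polynomial.X - Polynomial.C (x ^ k)))]
  · simp [Polynomial.eval_prod]
  · intro i
    rw [Polynomial.natDegree_prod_of_monic _ _ fun k _ => Polynomial.monic_X_sub_C _]
    simp only [Polynomial.natDegree_X_sub_C]
    simp
  · intro i
    exact Polynomial.monic_prod_of_monic _ _ fun k _ => Polynomial.monic_X_sub_C _

noncomputable def FF (x : ℝ) (N : ℕ) (l : Fin N → ℕ) : ℝ :=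
  (∏ i, (x ^ (l i) / qf x (l i) * (x ^ (l i)) ^ (i : ℕ))) *
    (Matrix.vandermonde fun i => x ^ (l i)).det

lemma prod_vand (N : ℕ) (v : Fin N → ℝ) :
    (Matrix.vandermonde v).det = ∏ j : Fin N, ∏ i ∈ Iio j, (v j - v i) := by
  rw [Matrix.det_vandermonde]
  exact prod_comm' (by simp)

lemma prod_Iio_fin (N : ℕ) (j : Fin N) (f : ℕ → ℝ) :
    ∏ i ∈ Iio j, f i = ∏ i ∈ range (j : ℕ), f i := by
  have := prod_map (Iio j) Fin.valEmbedding f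
  rw [Fin.map_valEmbedding_Iio] at this
  rw [← Nat.Iio_eq_range]
  exact this.symm

lemma FF_hasSum {x : ℝ} (h0 : 0 < x) (h1 : x < 1) (N : ℕ) :
    HasSum (FF x N) (EE x x ^ N * ∏ j ∈ range N, (qf x j ^ 2 * x ^ (j ^ 2))) := by
  have e1 : FF x N = fun l => ∑ τ : Equiv.Perm (Fin N), ((Equiv.Perm.sign τ : ℤ) : ℝ) *
      ∏ i : Fin N, (x ^ (l i) / qf x (l i) * (x ^ (l i)) ^ (i : ℕ) *
        ∏ k ∈ range (τ i : ℕ), (x ^ (l i) - x ^ k)) := by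
    funext l
    rw [FF, vand_poly x, ← Matrix.det_transpose, Matrix.det_apply', mul_sum]
    refine sum_congr rfl fun τ _ => ?_
    rw [prod_mul_distrib (f := fun i => x ^ (l i) / qf x (l i) * (x ^ (l i)) ^ (i : ℕ))]
    simp only [Matrix.transpose_apply, Matrix.of_apply]
    ring
  have hS := hasSum_sum (s := (univ : Finset (Equiv.Perm (Fin N)))) fun τ _ =>
    ((hasSum_pi_prod N (fun i l => x ^ l / qf x l * (x ^ l) ^ (i : ℕ) *
        ∏ k ∈ range (τ i : ℕ), (x ^ l - x ^ k)) _
      (fun i => (moment h0 h1 i (τ i)).1) (fun i => (moment h0 h1 i (τ i)).2)).1.mul_left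
        ((Equiv.Perm.sign τ : ℤ) : ℝ))
  rw [e1]
  have hd : (Matrix.of fun i j : Fin N => (EE x x * qf x i) *
      (Matrix.of fun i j : Fin N => ((∏ k ∈ range (j : ℕ), (-x ^ k)) * x ^ (j : ℕ)) *
        (Matrix.vandermonde (fun j : Fin N => x ^ (j : ℕ))).transpose i j) i j).det =
      ∑ τ : Equiv.Perm (Fin N), ((Equiv.Perm.sign τ : ℤ) : ℝ) * ∏ i : Fin N, ((EE x x * qf x i) *
        ((∏ k ∈ range (τ i : ℕ), (-x ^ k)) * x ^ (τ i : ℕ) * (x ^ (τ i : ℕ)) ^ (i : ℕ))) := by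
    rw [← Matrix.det_transpose, Matrix.det_apply']
    rfl
  refine (congrArg (fun t => HasSum _ t) ?_).mpr hS
  rw [← hd, Matrix.det_mul_column, Matrix.det_mul_row, Matrix.det_transpose, prod_vand]
  rw [prod_mul_distrib (s := univ) (f := fun _ : Fin N => EE x x), prod_const, card_univ,
    Fintype.card_fin, mul_assoc]
  congr 1
  rw [← prod_mul_distrib, ← prod_mul_distrib, ← Fin.prod_univ_eq_prod_range
    (fun j => (qf x j ^ 2 * x ^ (j ^ 2)))]
  refine prod_congr rfl fun j _ => ?_
  rw [prod_Iio_fin N j (fun i => x ^ (j : ℕ) - x ^ i)]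
  have := poly_val h0 h1 j 0
  simp only [zero_add] at this
  rw [show qf x 0 = 1 by simp [qf], mul_one] at this
  rw [this]
  have c2 : (∏ k ∈ range (j : ℕ), (-x ^ k)) ^ 2 * x ^ (j : ℕ) = x ^ ((j : ℕ) ^ 2) := by
    generalize (j : ℕ) = m
    induction m with
    | zero => simp
    | succ m ih =>
      rw [prod_range_succ, show (m + 1) ^ 2 = m ^ 2 + 2 * m + 1 by ring, pow_add x (m ^ 2 + 2 * m) 1,
        pow_add x (m ^ 2) (2 * m), ← ih]
      ring
  rw [← c2]
  ring
def LL (μ : YoungDiagram) (N i : ℕ) : ℕ := μ.rowLen i + (N - 1 - i)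

lemma LL_anti (μ : YoungDiagram) (N : ℕ) {i k : ℕ} (h : i < k) (hk : k < N) :
    LL μ N k < LL μ N i := by
  have := μ.rowLen_anti i k h.le
  unfold LL
  omega

lemma qf_Icc (x : ℝ) (n : ℕ) : qf x n = ∏ m ∈ Icc 1 n, (1 - x ^ m) := by
  induction n with
  | zero => simp [qf]
  | succ n ih => rw [qf_succ, ih, prod_Icc_succ_top (by omega)]

lemma lt_iff (μ : YoungDiagram) (i j : ℕ) : j < μ.rowLen i ↔ i < μ.colLen j := by
  rw [← YoungDiagram.mem_iff_lt_rowLen, YoungDiagram.mem_iff_lt_colLen]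

lemma row_hook (x : ℝ) (μ : YoungDiagram) (N i : ℕ) (hi : i < N) (hμ : μ.colLen 0 ≤ N) :
    (∏ j ∈ range (μ.rowLen i), (1 - x ^ hookLen μ (i, j))) *
      ∏ k ∈ Ioo i N, (1 - x ^ (LL μ N i - LL μ N k)) = qf x (LL μ N i) := by
  classical
  have hc : ∀ j ∈ range (μ.rowLen i), i < μ.colLen j ∧ j < μ.rowLen i ∧ μ.colLen j ≤ N := by
    intro j hj
    rw [mem_range] at hj
    exact ⟨(lt_iff μ i j).1 hj, hj, (μ.colLen_anti 0 j (Nat.zero_le _)).trans hμ⟩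
  have inj1 : Set.InjOn (fun j => hookLen μ (i, j)) (range (μ.rowLen i) : Set ℕ) := by
    intro a ha b hb hab
    obtain ⟨a1, a2, a3⟩ := hc a ha
    obtain ⟨b1, b2, b3⟩ := hc b hb
    simp only [hookLen] at hab
    rcases lt_trichotomy a b with h | h | h
    · have := μ.colLen_anti a b h.le
      omega
    · exact h
    · have := μ.colLen_anti b a h.le
      omega
  have inj2 : Set.InjOn (fun k => LL μ N i - LL μ N k) (Ioo i N : Set ℕ) := by
    intro a ha b hb hab
    simp only [coe_Ioo, Set.mem_Ioo] at ha hb hab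
    have A := LL_anti μ N ha.1 ha.2
    have B := LL_anti μ N hb.1 hb.2
    rcases lt_trichotomy a b with h | h | h
    · have := LL_anti μ N h hb.2
      omega
    · exact h
    · have := LL_anti μ N h ha.2
      omega
  have disj : Disjoint ((range (μ.rowLen i)).image fun j => hookLen μ (i, j))
      ((Ioo i N).image fun k => LL μ N i - LL μ N k) := by
    rw [disjoint_left]
    intro m hm1 hm2
    obtain ⟨j, hj, rfl⟩ := mem_image.1 hm1
    obtain ⟨k, hk, e⟩ := mem_image.1 hm2
    obtain ⟨a1, a2, a3⟩ := hc j hj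
    rw [mem_Ioo] at hk
    have A := μ.rowLen_anti i k hk.1.le
    have B := lt_iff μ k j
    simp only [hookLen, LL] at e
    by_cases h : k < μ.colLen j
    · have := B.2 h
      omega
    · have := mt B.1 h
      omega
  have un : ((range (μ.rowLen i)).image fun j => hookLen μ (i, j)) ∪
      ((Ioo i N).image fun k => LL μ N i - LL μ N k) = Icc 1 (LL μ N i) := by
    apply eq_of_subset_of_card_le
    · intro m hm
      rw [mem_union, mem_image, mem_image] at hm
      rw [mem_Icc]
      rcases hm with ⟨j, hj, rfl⟩ | ⟨k, hk, rfl⟩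
      · obtain ⟨a1, a2, a3⟩ := hc j hj
        simp only [hookLen, LL]
        omega
      · rw [mem_Ioo] at hk
        have A := LL_anti μ N hk.1 hk.2
        omega
    · rw [card_union_of_disjoint disj, card_image_of_injOn inj1, card_image_of_injOn inj2]
      simp only [Nat.card_Icc, card_range, Nat.card_Ioo, LL]
      omega
  rw [qf_Icc, ← un, prod_union disj, prod_image inj1, prod_image inj2]

lemma row_content (x : ℝ) (μ : YoungDiagram) (N i : ℕ) (hi : i < N) :
    (∏ j ∈ range (μ.rowLen i), (1 - x ^ (N + j - i))) * qf x (N - 1 - i) = qf x (LL μ N i) := by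
  unfold LL qf
  rw [add_comm (μ.rowLen i), prod_range_add, mul_comm]
  congr 1
  refine prod_congr rfl fun j _ => ?_
  rw [show N + j - i = N - 1 - i + j + 1 by omega]

lemma mem_cells_iff (μ : YoungDiagram) (N : ℕ) (hμ : μ.colLen 0 ≤ N) (p : ℕ × ℕ) :
    p ∈ μ.cells ↔ p.1 ∈ range N ∧ p.2 ∈ (fun i => range (μ.rowLen i)) p.1 := by
  obtain ⟨i, j⟩ := p
  rw [YoungDiagram.mem_cells, YoungDiagram.mem_iff_lt_rowLen]
  simp only [mem_range]
  refine ⟨fun h => ⟨?_, h⟩, fun h => h.2⟩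
  have := (lt_iff μ i 0).1 (by omega)
  omega

lemma sq_sum (N : ℕ) : ∑ i ∈ range N, (N - 1 - i) * (2 * i + 1) = ∑ i ∈ range N, i ^ 2 := by
  induction N with
  | zero => simp
  | succ N ih =>
    have odd : ∀ M : ℕ, ∑ i ∈ range M, (2 * i + 1) = M ^ 2 := by
      intro M
      induction M with
      | zero => simp
      | succ M ih => rw [sum_range_succ, ih]; ring
    rw [sum_range_succ, sum_range_succ, ← ih, ← odd N, ← sum_add_distrib]
    simp only [Nat.add_sub_cancel, Nat.sub_self, zero_mul, add_zero]
    refine sum_congr rfl fun i hi => ?_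
    rw [mem_range] at hi
    rw [show N - i = N - 1 - i + 1 by omega]
    ring

noncomputable def TT (x : ℝ) (N : ℕ) (μ : YoungDiagram) : ℝ :=
  x ^ (2 * nstat μ + μ.card) *
    ∏ s ∈ μ.cells, (1 - x ^ (N + s.2 - s.1)) / (1 - x ^ hookLen μ s) ^ 2

lemma prod_Ioi_fin (N : ℕ) (j : Fin N) (f : ℕ → ℝ) :
    ∏ i ∈ Ioi j, f i = ∏ i ∈ Ioo (j : ℕ) N, f i := by
  have := prod_map (Ioi j) Fin.valEmbedding f
  rw [Fin.map_valEmbedding_Ioi] at this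
  exact this.symm

lemma vand_LL (x : ℝ) (N : ℕ) (μ : YoungDiagram) :
    (Matrix.vandermonde fun i : Fin N => x ^ LL μ N i).det =
      ∏ i ∈ range N, (x ^ (i * LL μ N i) * ∏ k ∈ Ioo i N, (1 - x ^ (LL μ N i - LL μ N k))) := by
  rw [Matrix.det_vandermonde]
  have e1 : ∀ i : Fin N, ∏ j ∈ Ioi i, (x ^ LL μ N j - x ^ LL μ N i) =
      ∏ j ∈ Ioo (i : ℕ) N, (x ^ LL μ N j - x ^ LL μ N i) := fun i =>
    prod_Ioi_fin N i (fun j => x ^ LL μ N j - x ^ LL μ N i)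
  simp only [e1]
  rw [Fin.prod_univ_eq_prod_range (fun i => ∏ j ∈ Ioo i N, (x ^ LL μ N j - x ^ LL μ N i))]
  have e2 : ∀ i ∈ range N, ∏ j ∈ Ioo i N, (x ^ LL μ N j - x ^ LL μ N i) =
      (∏ j ∈ Ioo i N, x ^ LL μ N j) * ∏ k ∈ Ioo i N, (1 - x ^ (LL μ N i - LL μ N k)) := by
    intro i _
    rw [← prod_mul_distrib]
    refine prod_congr rfl fun j hj => ?_
    rw [mem_Ioo] at hj
    have := LL_anti μ N hj.1 hj.2
    rw [mul_sub, mul_one, ← pow_add, Nat.add_sub_cancel' this.le]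
  rw [prod_congr rfl e2, prod_mul_distrib, prod_mul_distrib]
  congr 1
  rw [prod_comm' (t' := range N) (s' := fun j => range j)]
  · refine prod_congr rfl fun j _ => ?_
    rw [prod_const, card_range, ← pow_mul, mul_comm]
  · intro a b
    simp only [mem_range, mem_Ioo]
    omega

lemma TT_eq {x : ℝ} (h0 : 0 < x) (h1 : x < 1) (N : ℕ) (μ : YoungDiagram) (hμ : μ.colLen 0 ≤ N) :
    TT x N μ * ∏ i ∈ range N, (qf x i * x ^ (i ^ 2)) =
      (∏ i : Fin N, x ^ LL μ N i / qf x (LL μ N i)) *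
        (Matrix.vandermonde fun i : Fin N => x ^ LL μ N i).det ^ 2 := by
  have hn : nstat μ = ∑ i ∈ range N, i * μ.rowLen i := by
    rw [nstat, sum_finset_product _ (range N) (fun i => range (μ.rowLen i)) (mem_cells_iff μ N hμ)]
    refine sum_congr rfl fun i _ => ?_
    simp [mul_comm]
  have hcard : μ.card = ∑ i ∈ range N, μ.rowLen i := by
    rw [YoungDiagram.card, card_eq_sum_ones, sum_finset_product _ (range N) (fun i => range (μ.rowLen i)) (mem_cells_iff μ N hμ)]
    simp
  have hexp : 2 * nstat μ + μ.card + ∑ i ∈ range N, i ^ 2 =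
      ∑ i ∈ range N, (LL μ N i + 2 * (i * LL μ N i)) := by
    rw [hn, hcard, ← sq_sum, mul_sum, ← sum_add_distrib, ← sum_add_distrib]
    refine sum_congr rfl fun i _ => ?_
    unfold LL
    ring
  have hR : ∏ i ∈ range N, qf x i = ∏ i ∈ range N, qf x (N - 1 - i) :=
    (prod_range_reflect _ N).symm
  rw [TT, prod_finset_product _ (range N) (fun i => range (μ.rowLen i)) (mem_cells_iff μ N hμ), vand_LL,
    Fin.prod_univ_eq_prod_range (fun i => x ^ LL μ N i / qf x (LL μ N i)), ← prod_pow,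
    ← prod_mul_distrib, prod_mul_distrib (s := range N) (f := fun i => qf x i), hR,
    prod_pow_eq_pow_sum]
  have hx : ∀ A B : ℝ, x ^ (2 * nstat μ + μ.card) * A * (B * x ^ (∑ i ∈ range N, i ^ 2)) =
      x ^ (2 * nstat μ + μ.card + ∑ i ∈ range N, i ^ 2) * (A * B) := by
    intro A B
    rw [pow_add _ (_ + _)]
    ring
  rw [hx, hexp, ← prod_pow_eq_pow_sum, ← prod_mul_distrib, ← prod_mul_distrib]
  refine prod_congr rfl fun i hi => ?_
  rw [mem_range] at hi
  have A := row_hook x μ N i hi hμ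
  have B := row_content x μ N i hi
  rw [prod_div_distrib, prod_pow]
  have q1 := (qf_pos h0 h1 (LL μ N i)).ne'
  generalize ∏ k ∈ Ioo i N, (1 - x ^ (LL μ N i - LL μ N k)) = D at *
  generalize ∏ j ∈ range (μ.rowLen i), (1 - x ^ hookLen μ (i, j)) = H at *
  generalize ∏ j ∈ range (μ.rowLen i), (1 - x ^ (N + j - i)) = C at *
  have hH : H ≠ 0 := by rintro rfl; rw [zero_mul] at A; exact q1 A.symm
  rw [div_mul_eq_mul_div, B, pow_add, pow_mul', mul_pow]
  generalize qf x (LL μ N i) = Q at *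
  subst A
  have hD : D ≠ 0 := right_ne_zero_of_mul q1
  field_simp

lemma sum_perm (x : ℝ) (N : ℕ) (l : Fin N → ℕ) :
    ∑ σ : Equiv.Perm (Fin N), FF x N (fun i => l (σ i)) =
      (∏ i : Fin N, x ^ l i / qf x (l i)) * (Matrix.vandermonde fun i : Fin N => x ^ l i).det ^ 2 := by
  have h : ∀ σ : Equiv.Perm (Fin N), FF x N (fun i => l (σ i)) =
      ((∏ i : Fin N, x ^ l i / qf x (l i)) * (Matrix.vandermonde fun i : Fin N => x ^ l i).det) *
      (((Equiv.Perm.sign σ : ℤ) : ℝ) *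
        ∏ i, (Matrix.vandermonde fun i : Fin N => x ^ l i) (σ i) i) := by
    intro σ
    have e := Matrix.det_permute σ (Matrix.vandermonde fun i : Fin N => x ^ l i)
    have e' : (Matrix.vandermonde fun i : Fin N => x ^ l i).submatrix σ id =
      Matrix.vandermonde fun i : Fin N => x ^ l (σ i) := rfl
    rw [e'] at e
    rw [FF, e, prod_mul_distrib, Equiv.prod_comp σ (fun i => x ^ l i / qf x (l i))]
    simp only [Matrix.vandermonde_apply]
    ring
  simp only [h]
  rw [← mul_sum, ← Matrix.det_apply']
  ring

def PP (N : ℕ) (p : {μ : YoungDiagram | μ.colLen 0 ≤ N} × Equiv.Perm (Fin N)) : Fin N → ℕ :=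
  fun i => LL p.1.1 N (p.2 i)

lemma rowLen_zero (μ : YoungDiagram) {N i : ℕ} (hμ : μ.colLen 0 ≤ N) (h : N ≤ i) :
    μ.rowLen i = 0 := by
  by_contra h'
  have := (lt_iff μ i 0).1 (by omega)
  omega

lemma PP_inj (N : ℕ) : Function.Injective (PP N) := by
  rintro ⟨⟨μ, hμ⟩, σ⟩ ⟨⟨ν, hν⟩, τ⟩ h
  simp only [Set.mem_setOf_eq] at hμ hν
  have hmono : ∀ κ : YoungDiagram, StrictMono (fun i : Fin N => LL κ N (i.rev : Fin N)) := by
    intro κ a b hab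
    apply LL_anti κ N
    · exact Fin.rev_lt_rev.2 hab
    · exact Fin.is_lt _
  have hrange : ∀ (κ : YoungDiagram) (ρ : Equiv.Perm (Fin N)),
      Set.range (fun i : Fin N => LL κ N (i.rev : Fin N)) = Set.range (fun i => LL κ N (ρ i)) := by
    intro κ ρ
    have a1 := (Fin.revPerm (n := N)).surjective.range_comp (fun i : Fin N => LL κ N i)
    have a2 := ρ.surjective.range_comp (fun i : Fin N => LL κ N i)
    exact a1.trans a2.symm
  have hr : (fun i : Fin N => LL μ N (i.rev : Fin N)) = fun i : Fin N => LL ν N (i.rev : Fin N) := by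
    rw [← (hmono μ).range_inj (hmono ν), hrange μ σ, hrange ν τ]
    exact congrArg Set.range h
  have hrow : ∀ i, μ.rowLen i = ν.rowLen i := by
    intro i
    by_cases hi : i < N
    · have := congrFun hr (Fin.rev ⟨i, hi⟩)
      simp only [Fin.rev_rev, LL] at this
      omega
    · rw [rowLen_zero μ hμ (by omega), rowLen_zero ν hν (by omega)]
  have hμν : μ = ν := by
    ext ⟨i, j⟩
    rw [YoungDiagram.mem_cells, YoungDiagram.mem_cells, YoungDiagram.mem_iff_lt_rowLen,
      YoungDiagram.mem_iff_lt_rowLen, hrow]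
  subst hμν
  have : σ = τ := by
    ext i
    have hi := congrFun h i
    simp only [PP] at hi
    rcases lt_trichotomy (σ i : ℕ) (τ i : ℕ) with h | h | h
    · have := LL_anti μ N h (τ i).2
      omega
    · exact h
    · have := LL_anti μ N h (σ i).2
      omega
  rw [this]

def mkY (N : ℕ) (r : ℕ → ℕ) (hr : ∀ a b, a ≤ b → b < N → r b ≤ r a) : YoungDiagram where
  cells := (range N ×ˢ range (r 0)).filter fun p => p.2 < r p.1
  isLowerSet := by
    rintro ⟨a, b⟩ ⟨c, d⟩ h1 h2
    simp only [coe_filter, mem_product, mem_range, Set.mem_setOf_eq] at h2 ⊢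
    have hca : c ≤ a := h1.1
    have hdb : d ≤ b := h1.2
    have := hr c a hca h2.1.1
    omega

lemma mkY_rowLen (N : ℕ) (r : ℕ → ℕ) (hr) (i : ℕ) (hi : i < N) : (mkY N r hr).rowLen i = r i := by
  have : ∀ j, j < (mkY N r hr).rowLen i ↔ j < r i := by
    intro j
    rw [← YoungDiagram.mem_iff_lt_rowLen, ← YoungDiagram.mem_cells]
    have := hr 0 i (Nat.zero_le _) hi
    simp only [mkY, mem_filter, mem_product, mem_range]
    omega
  have a := this (r i)
  have b := this ((mkY N r hr).rowLen i)
  omega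

lemma mkY_colLen (N : ℕ) (r : ℕ → ℕ) (hr) : (mkY N r hr).colLen 0 ≤ N := by
  by_contra h
  have : (N, 0) ∈ (mkY N r hr).cells := by
    rw [YoungDiagram.mem_cells, YoungDiagram.mem_iff_lt_colLen]
    omega
  simp [mkY] at this

lemma PP_range (N : ℕ) (f : Fin N → ℕ) (hf : Function.Injective f) : f ∈ Set.range (PP N) := by
  set g : Fin N → ℕ := f ∘ Tuple.sort f with hg
  have gm : StrictMono g :=
    (Tuple.monotone_sort f).strictMono_of_injective (hf.comp (Tuple.sort f).injective)
  let L : ℕ → ℕ := fun i => if h : i < N then g (Fin.rev ⟨i, h⟩) else 0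
  have hL : ∀ a b, a < b → b < N → L b < L a := by
    intro a b hab hb
    simp only [L, hb, hab.trans hb, dif_pos]
    exact gm (Fin.rev_lt_rev.2 hab)
  have hL2 : ∀ d a, a + d < N → L (a + d) + d ≤ L a := by
    intro d
    induction d with
    | zero => intro a _; simp
    | succ d ih =>
      intro a h
      have := ih a (by omega)
      have := hL (a + d) (a + (d + 1)) (by omega) h
      omega
  let r : ℕ → ℕ := fun i => L i - (N - 1 - i)
  have hr : ∀ a b, a ≤ b → b < N → r b ≤ r a := by
    intro a b hab hb
    have := hL2 (b - a) a (by omega)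
    rw [Nat.add_sub_cancel' hab] at this
    simp only [r]
    omega
  refine ⟨⟨⟨mkY N r hr, mkY_colLen N r hr⟩, (Tuple.sort f).symm.trans Fin.revPerm⟩, ?_⟩
  funext i
  simp only [PP, LL]
  rw [mkY_rowLen N r hr _ (Fin.is_lt _)]
  set k : Fin N := ((Tuple.sort f).symm.trans Fin.revPerm) i with hk
  have h1 : L k = f i := by
    simp only [L, k.2, dif_pos, hg, Function.comp_apply, Fin.eta]
    rw [hk]
    simp
  have h2 := hL2 (N - 1 - k) k (by have := k.2; omega)
  simp only [r]
  omega

lemma TT_hasSum {x : ℝ} (h0 : 0 < x) (h1 : x < 1) (N : ℕ) :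
    HasSum (TT x N) (EE x x ^ N * ∏ r ∈ range N, qf x r) := by
  have hsupp : Function.support (TT x N) ⊆ {μ : YoungDiagram | μ.colLen 0 ≤ N} := by
    intro μ hμ
    by_contra h
    simp only [Set.mem_setOf_eq, not_le] at h
    apply hμ
    rw [TT, prod_eq_zero (i := (N, 0)), mul_zero]
    · rw [YoungDiagram.mem_cells, YoungDiagram.mem_iff_lt_colLen]; exact h
    · simp
  rw [← hasSum_subtype_iff_of_support_subset hsupp]
  have hF := FF_hasSum h0 h1 N
  rw [← (PP_inj N).hasSum_iff] at hF
  · have h3 := hF.prod_fiberwise (fun b => hasSum_fintype _)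
    have hc : 0 < ∏ i ∈ range N, (qf x i * x ^ (i ^ 2)) :=
      prod_pos fun i _ => mul_pos (qf_pos h0 h1 i) (pow_pos h0 _)
    have h4 := h3.div_const (∏ i ∈ range N, (qf x i * x ^ (i ^ 2)))
    have ec : EE x x ^ N * ∏ j ∈ range N, (qf x j ^ 2 * x ^ (j ^ 2)) =
        (EE x x ^ N * ∏ r ∈ range N, qf x r) * ∏ i ∈ range N, (qf x i * x ^ (i ^ 2)) := by
      rw [mul_assoc, ← prod_mul_distrib]
      congr 1
      exact prod_congr rfl fun i _ => by ring
    rw [ec, mul_div_cancel_right₀ _ hc.ne'] at h4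
    have ef : (TT x N ∘ Subtype.val : {μ : YoungDiagram | μ.colLen 0 ≤ N} → ℝ) = fun b =>
        (∑ σ, (FF x N ∘ PP N) (b, σ)) / ∏ i ∈ range N, (qf x i * x ^ (i ^ 2)) := by
      funext b
      rw [eq_div_iff hc.ne']
      simp only [Function.comp_apply]
      rw [TT_eq h0 h1 N b.1 b.2, ← sum_perm x N (fun i : Fin N => LL b.1 N i)]
      rfl
    rw [ef]
    exact h4
  · intro f hf
    have : ¬ Function.Injective f := fun h => hf (PP_range N f h)
    rw [Function.not_injective_iff] at this
    obtain ⟨a, b, hab, hne⟩ := this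
    have hz : (Matrix.vandermonde fun i => x ^ f i).det = 0 :=
      Matrix.det_zero_of_row_eq hne (by funext k; simp [Matrix.vandermonde_apply, hab])
    rw [FF, hz, mul_zero]

theorem stmt_8 (q : ℝ) (hq : 1 < q) (N : ℕ) (hN : 0 < N) :
    ∃ S : ℝ,
      HasSum (fun μ : YoungDiagram =>
        q ^ (-(2 * (nstat μ : ℤ) + (μ.card : ℤ))) *
          ∏ s ∈ μ.cells,
            (1 - q ^ (-((N : ℤ) + ((s.2 : ℤ) - (s.1 : ℤ))))) /
              (1 - q ^ (-(hookLen μ s : ℤ))) ^ 2) S ∧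
      HasProd (fun p : Fin N × ℕ =>
        (1 - q ^ (-(((p.1 : ℕ) : ℤ) + 1 + (p.2 : ℤ))))⁻¹) S := by
  have q0 : 0 < q := by linarith
  have h0 : 0 < q⁻¹ := inv_pos.2 q0
  have h1 : q⁻¹ < 1 := inv_lt_one_of_one_lt₀ hq
  have hz : ∀ m : ℕ, q ^ (-(m : ℤ)) = q⁻¹ ^ m := by
    intro m
    rw [zpow_neg, zpow_natCast, inv_pow]
  refine ⟨EE q⁻¹ q⁻¹ ^ N * ∏ r ∈ range N, qf q⁻¹ r, ?_, ?_⟩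
  · refine (TT_hasSum h0 h1 N).congr_fun ?_
    intro μ
    have e : (2 * (nstat μ : ℤ) + (μ.card : ℤ)) = ((2 * nstat μ + μ.card : ℕ) : ℤ) := by
      push_cast; ring
    rw [e, hz, TT]
    congr 1
    by_cases h : μ.colLen 0 ≤ N
    · refine prod_congr rfl fun s hs => ?_
      have := ((mem_cells_iff μ N h s).1 hs).1
      rw [mem_range] at this
      have e2 : (N : ℤ) + ((s.2 : ℤ) - (s.1 : ℤ)) = ((N + s.2 - s.1 : ℕ) : ℤ) := by omega
      rw [e2, hz, hz]
    · have hm : (N, 0) ∈ μ.cells := by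
        rw [YoungDiagram.mem_cells, YoungDiagram.mem_iff_lt_colLen]; omega
      rw [prod_eq_zero hm, prod_eq_zero hm]
      · simp
      · simp
  · refine (rhs_hasProd h0 h1 N).congr_fun ?_
    intro p
    have e : (((p.1 : ℕ) : ℤ) + 1 + (p.2 : ℤ)) = ((p.1 + 1 + p.2 : ℕ) : ℤ) := by
      push_cast; ring
    rw [e, hz]
end

section
/- Let R be a commutative ring, x ∈ R, and λ a partition. Then ∏_{s ∈ λ, a(s)=0} (1 − x^{l(s)+1}) = ∏_{i≥1} ∏_{k=1}^{m_i(λ)} (1 − x^k), where the left product is over the cells of λ with arm length zero. -/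
/-- `m_i(λ)`: the number of parts of `λ` of size `i` (for `i ≥ 1`), expressed via the
conjugate partition: `m_i = λ'_i − λ'_{i+1}` where `λ'_i = colLen (i−1)`. -/
def mult (μ : YoungDiagram) (i : ℕ) : ℕ := μ.colLen (i - 1) - μ.colLen i

/-- In any commutative ring `R`, for `x ∈ R` and a partition `λ`:
`∏_{s ∈ λ, a(s)=0} (1 − x^{l(s)+1}) = ∏_{i≥1} ∏_{k=1}^{m_i(λ)} (1 − x^k)`,
the left product being over the cells of `λ` with arm length zero
(i.e. cells `(i,j)` which are last in their row: `rowLen i = j + 1`),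
and `l(s)+1 = colLen j − i` for such a cell. -/
theorem stmt_10 (R : Type*) [CommRing R] (x : R) (μ : YoungDiagram) :
    (∏ s ∈ μ.cells.filter (fun s => μ.rowLen s.1 = s.2 + 1),
        (1 - x ^ (μ.colLen s.2 - s.1))) =
      ∏ᶠ i : ℕ, ∏ k ∈ Finset.range (mult μ (i + 1)), (1 - x ^ (k + 1)) := by
  have key : ∀ i j : ℕ, ((i, j) ∈ μ ∧ μ.rowLen i = j + 1) ↔
      (μ.colLen (j + 1) ≤ i ∧ i < μ.colLen j) := by
    intro i j
    have h1 := YoungDiagram.mem_iff_lt_colLen (μ := μ) (i := i) (j := j)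
    have h2 := YoungDiagram.mem_iff_lt_colLen (μ := μ) (i := i) (j := j + 1)
    have h3 := YoungDiagram.mem_iff_lt_rowLen (μ := μ) (i := i) (j := j)
    have h4 := YoungDiagram.mem_iff_lt_rowLen (μ := μ) (i := i) (j := j + 1)
    have h5 := h1.symm.trans h3
    have h6 := h2.symm.trans h4
    rw [h1]
    omega
  have hz : ∀ j, μ.colLen j ≠ 0 → j < μ.rowLen 0 := by
    intro j hj
    exact YoungDiagram.mem_iff_lt_rowLen.1
      (YoungDiagram.mem_iff_lt_colLen.2 (Nat.pos_of_ne_zero hj))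
  rw [finprod_eq_prod_of_mulSupport_subset (s := Finset.range (μ.rowLen 0))]
  · rw [Finset.prod_sigma']
    refine Finset.prod_bij' (fun s _ => ⟨s.2, μ.colLen s.2 - 1 - s.1⟩)
      (fun p _ => (μ.colLen p.1 - 1 - p.2, p.1)) ?_ ?_ ?_ ?_ ?_
    · rintro ⟨i, j⟩ h
      rw [Finset.mem_filter, YoungDiagram.mem_cells] at h
      have h' := (key i j).1 h
      have := hz j (by omega)
      simp only [Finset.mem_sigma, Finset.mem_range, mult, Nat.add_sub_cancel]
      omega
    · rintro ⟨j, k⟩ h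
      simp only [Finset.mem_sigma, Finset.mem_range, mult, Nat.add_sub_cancel] at h
      rw [Finset.mem_filter, YoungDiagram.mem_cells]
      exact (key _ _).2 (by dsimp only; omega)
    · rintro ⟨i, j⟩ h
      rw [Finset.mem_filter, YoungDiagram.mem_cells] at h
      have h' := (key i j).1 h
      simp only [Prod.mk.injEq, and_true]
      omega
    · rintro ⟨j, k⟩ h
      simp only [Finset.mem_sigma, Finset.mem_range, mult, Nat.add_sub_cancel] at h
      simp only [Sigma.mk.injEq, heq_eq_eq, true_and]
      omega
    · rintro ⟨i, j⟩ h
      rw [Finset.mem_filter, YoungDiagram.mem_cells] at h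
      have h' := (key i j).1 h
      dsimp only
      congr 2
      omega
  · intro j hj
    rw [Finset.coe_range, Set.mem_Iio]
    apply hz
    intro h0
    apply hj
    simp [mult, h0]
end

section
/- Let q be a prime power, F_q the finite field with q elements, and u a real number with 0 < u < 1. Then the product over all monic irreducible polynomials φ ∈ F_q[X] with φ ≠ X of ∏_{r=1}^∞ 1/(1 − u^{deg φ} · q^{−r·deg φ}) converges and equals 1/(1 − u). -/
open Polynomial Filter Topology

abbrev MonicP (F : Type) [Field F] := {f : F[X] // f.Monic}

lemma hasSum_monic (F : Type) [Field F] [Fintype F] (t : ℝ) (ht0 : 0 ≤ t)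
    (ht : (Fintype.card F : ℝ) * t < 1) :
    HasSum (fun f : MonicP F => t ^ f.1.natDegree) (1 / (1 - Fintype.card F * t)) := by
  rw [← Equiv.hasSum_iff (Equiv.sigmaFiberEquiv (fun f : MonicP F => f.1.natDegree))]
  have hgeo : HasSum (fun n : ℕ => ((Fintype.card F : ℝ) * t) ^ n)
      (1 / (1 - Fintype.card F * t)) := by
    rw [one_div]
    exact hasSum_geometric_of_lt_one (by positivity) ht
  have hfin : ∀ n : ℕ, HasSum (fun c : {x : MonicP F // x.1.natDegree = n} =>
      ((fun f : MonicP F => t ^ f.1.natDegree) ∘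
        Equiv.sigmaFiberEquiv (fun f : MonicP F => f.1.natDegree)) ⟨n, c⟩)
      (((Fintype.card F : ℝ) * t) ^ n) := by
    intro n
    let e : {x : MonicP F // x.1.natDegree = n} ≃ (Fin n → F) :=
      (Equiv.subtypeSubtypeEquivSubtypeInter (fun f : F[X] => f.Monic)
        (fun f => f.natDegree = n)).trans
        ((monicEquivDegreeLT n).trans (degreeLTEquiv F n).toEquiv)
    rw [← Equiv.hasSum_iff e.symm]
    have : (fun c : {x : MonicP F // x.1.natDegree = n} =>
      ((fun f : MonicP F => t ^ f.1.natDegree) ∘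
        Equiv.sigmaFiberEquiv (fun f : MonicP F => f.1.natDegree)) ⟨n, c⟩) ∘ e.symm
        = fun _ => t ^ n := by
      funext c
      simp only [Function.comp, Equiv.sigmaFiberEquiv, Equiv.coe_fn_mk]
      rw [(e.symm c).2]
    rw [this]
    classical
    convert hasSum_fintype (fun _ : Fin n → F => t ^ n) using 1
    simp [mul_pow]
  refine HasSum.sigma_of_hasSum hgeo hfin ?_
  rw [summable_sigma_of_nonneg]
  · refine ⟨fun n => (hfin n).summable, ?_⟩
    have : (fun n : ℕ => ∑' c : {x : MonicP F // x.1.natDegree = n},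
      ((fun f : MonicP F => t ^ f.1.natDegree) ∘
        Equiv.sigmaFiberEquiv (fun f : MonicP F => f.1.natDegree)) ⟨n, c⟩) =
        fun n : ℕ => ((Fintype.card F : ℝ) * t) ^ n := funext fun n => (hfin n).tsum_eq
    exact this ▸ hgeo.summable
  · intro x
    simp only [Function.comp]
    positivity

def smoothSet (F : Type) [Field F] (S : Finset F[X]) : Set (MonicP F) :=
  {f | ∀ p : F[X], p.Monic → Irreducible p → p ∣ f.1 → p ∈ S}

lemma smooth_prod (F : Type) [Field F] (t : ℝ)
    (hs : Summable (fun f : MonicP F => t ^ f.1.natDegree)) (S : Finset F[X]) :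
    (∀ p ∈ S, p.Monic ∧ Irreducible p) →
    (∑' f, (smoothSet F S).indicator (fun f : MonicP F => t ^ f.1.natDegree) f) *
      ∏ p ∈ S, (1 - t ^ p.natDegree) = 1 := by
  classical
  induction S using Finset.induction_on with
  | empty =>
    intro _
    rw [tsum_eq_single (⟨1, monic_one⟩ : MonicP F)]
    · have : (⟨1, monic_one⟩ : MonicP F) ∈ smoothSet F ∅ := by
        intro p _ hp hd
        exact absurd (isUnit_of_dvd_one hd) hp.not_isUnit
      simp [Set.indicator_of_mem this]
    · intro f hf
      apply Set.indicator_of_notMem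
      intro hm
      by_cases hu : IsUnit f.1
      · exact hf (Subtype.ext (f.2.eq_one_of_isUnit hu))
      · obtain ⟨g, h1, h2, h3⟩ := exists_monic_irreducible_factor f.1 hu
        simpa using hm g h1 h2 h3
  | insert p S hpS ih =>
    intro hS
    have ih' := ih (fun x hx => hS x (Finset.mem_insert_of_mem hx))
    obtain ⟨pm, pirr⟩ := hS p (Finset.mem_insert_self _ _)
    set w : MonicP F → ℝ := fun f => t ^ f.1.natDegree with hw
    rw [Finset.prod_insert hpS]
    let D : Set (MonicP F) := {f | p ∣ f.1}
    have hsplit : ∀ f, (smoothSet F (insert p S)).indicator w f =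
        (smoothSet F S).indicator w f + D.indicator ((smoothSet F (insert p S)).indicator w) f := by
      intro f
      by_cases hd : p ∣ f.1
      · have h1 : f ∉ smoothSet F S := fun h => hpS (h p pm pirr hd)
        rw [Set.indicator_of_notMem h1, Set.indicator_of_mem (show f ∈ D from hd), zero_add]
      · rw [Set.indicator_of_notMem (show f ∉ D from hd), add_zero]
        have : f ∈ smoothSet F (insert p S) ↔ f ∈ smoothSet F S := by
          constructor
          · intro h r hr hr' hrd
            rcases Finset.mem_insert.1 (h r hr hr' hrd) with h | h
            · exact absurd (h ▸ hrd) hd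
            · exact h
          · intro h r hr hr' hrd
            exact Finset.mem_insert_of_mem (h r hr hr' hrd)
        simp only [Set.indicator, this]
    let m : MonicP F → MonicP F := fun g => ⟨p * g.1, pm.mul g.2⟩
    have hinj : Function.Injective m := by
      intro a b h
      have : p * a.1 = p * b.1 := congrArg Subtype.val h
      exact Subtype.ext (mul_left_cancel₀ pm.ne_zero this)
    have hD : ∑' f, D.indicator ((smoothSet F (insert p S)).indicator w) f =
        t ^ p.natDegree * ∑' f, (smoothSet F (insert p S)).indicator w f := by
      rw [← hinj.tsum_eq, ← tsum_mul_left]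
      · apply tsum_congr
        intro g
        rw [Set.indicator_of_mem (show m g ∈ D from dvd_mul_right _ _)]
        have : m g ∈ smoothSet F (insert p S) ↔ g ∈ smoothSet F (insert p S) := by
          constructor
          · intro h r hr hr' hrd
            exact h r hr hr' (hrd.mul_left _)
          · intro h r hr hr' hrd
            rcases hr'.prime.dvd_or_dvd hrd with h1 | h1
            · have := eq_of_monic_of_associated hr pm (hr'.associated_of_dvd pirr h1)
              rw [this]; exact Finset.mem_insert_self _ _
            · exact h r hr hr' h1
        have hdeg : w (m g) = t ^ p.natDegree * w g := by
          simp only [hw, m]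
          rw [pm.natDegree_mul g.2, pow_add]
        by_cases hg : g ∈ smoothSet F (insert p S)
        · rw [Set.indicator_of_mem hg, Set.indicator_of_mem (this.2 hg), hdeg]
        · rw [Set.indicator_of_notMem hg, Set.indicator_of_notMem (fun h => hg (this.1 h)), mul_zero]
      · intro f hf
        have hfD : f ∈ D := by
          by_contra h
          exact hf (Set.indicator_of_notMem h _)
        obtain ⟨g, hg⟩ := hfD
        exact ⟨⟨g, pm.of_mul_monic_left (hg ▸ f.2)⟩, Subtype.ext hg.symm⟩
    have key : ∑' f, (smoothSet F (insert p S)).indicator w f =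
        ∑' f, (smoothSet F S).indicator w f +
        t ^ p.natDegree * ∑' f, (smoothSet F (insert p S)).indicator w f := by
      rw [← hD, ← Summable.tsum_add (hs.indicator _) ((hs.indicator _).indicator _)]
      exact tsum_congr hsplit
    rw [← mul_assoc]
    refine Eq.trans ?_ ih'
    congr 1
    linarith

abbrev PrimeP (F : Type) [Field F] :=
  {φ : Polynomial F // φ.Monic ∧ Irreducible φ ∧ φ ≠ Polynomial.X}

lemma euler (F : Type) [Field F] [Fintype F] (t : ℝ) (ht0 : 0 ≤ t)
    (ht : (Fintype.card F : ℝ) * t < 1) :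
    HasProd (fun φ : PrimeP F => (1 - t ^ φ.1.natDegree)⁻¹)
      ((1 - t) / (1 - Fintype.card F * t)) := by
  classical
  have hsum := hasSum_monic F t ht0 ht
  have hc : (1 : ℝ) ≤ Fintype.card F := by exact_mod_cast Fintype.card_pos
  have ht1 : t < 1 := by nlinarith
  let Sx : Finset (PrimeP F) → Finset F[X] := fun S => insert X (S.map (Function.Embedding.subtype _))
  have hlim : Tendsto (fun S : Finset (PrimeP F) =>
      ∑' f, (smoothSet F (Sx S)).indicator (fun f : MonicP F => t ^ f.1.natDegree) f) atTop
      (𝓝 (∑' f : MonicP F, t ^ f.1.natDegree)) := by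
    apply tendsto_tsum_of_dominated_convergence hsum.summable
    · intro f
      apply tendsto_const_nhds.congr'
      have hfin : Set.Finite {φ : PrimeP F | φ.1 ∣ f.1} := by
        have h2 : Set.Finite {x : F[X] | x ∈ (UniqueFactorizationMonoid.normalizedFactors f.1).toFinset} :=
          Finset.finite_toSet _
        refine Set.Finite.subset (h2.preimage
          (f := (Subtype.val : PrimeP F → F[X])) (Subtype.val_injective.injOn)) ?_
        intro φ hφ
        obtain ⟨g, hg, hag⟩ := UniqueFactorizationMonoid.exists_mem_normalizedFactors_of_dvd
          f.2.ne_zero φ.2.2.1 hφ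
        have hgn := UniqueFactorizationMonoid.normalize_normalized_factor g hg
        have : φ.1 = g := by
          rw [← hgn, ← φ.2.1.normalize_eq_self]
          exact normalize_eq_normalize hag.dvd hag.symm.dvd
        exact Multiset.mem_toFinset.2 (this ▸ hg)
      filter_upwards [eventually_ge_atTop hfin.toFinset] with S hS
      symm
      apply Set.indicator_of_mem
      intro p pm pirr pd
      by_cases hX : p = X
      · rw [hX]; exact Finset.mem_insert_self _ _
      · apply Finset.mem_insert_of_mem
        rw [Finset.mem_map]
        exact ⟨⟨p, pm, pirr, hX⟩, hS (by simpa using pd), rfl⟩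
    · refine Eventually.of_forall fun S f => ?_
      refine (norm_indicator_le_norm_self _ _).trans ?_
      rw [Real.norm_of_nonneg (by positivity)]
  rw [hsum.tsum_eq] at hlim
  have hlim2 := hlim.const_mul (1 - t)
  rw [mul_one_div] at hlim2
  rw [HasProd, SummationFilter.unconditional_filter]
  refine hlim2.congr fun S => ?_
  have h := smooth_prod F t hsum.summable (Sx S) (by
    intro p hp
    rcases Finset.mem_insert.1 hp with h | h
    · rw [h]; exact ⟨monic_X, irreducible_X⟩
    · obtain ⟨a, _, rfl⟩ := Finset.mem_map.1 h
      exact ⟨a.2.1, a.2.2.1⟩)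
  rw [Finset.prod_insert (by
    intro h
    obtain ⟨a, _, ha⟩ := Finset.mem_map.1 h
    exact a.2.2.2 ha), Finset.prod_map, natDegree_X, pow_one] at h
  rw [Finset.prod_inv_distrib]
  apply eq_inv_of_mul_eq_one_left
  refine Eq.trans ?_ h
  simp only [Function.Embedding.subtype_apply]
  ring

lemma sum_aux {ι κ : Type*} (f : ι → ℝ) (g : κ → ℝ) (hf : Summable f) (hg : Summable g)
    (hf0 : ∀ i, 0 ≤ f i) (hg0 : ∀ i, 0 ≤ g i) : Summable (fun x : ι × κ => f x.1 * g x.2) :=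
  Summable.mul_of_nonneg hf hg hf0 hg0

lemma mult_aux {ι : Type*} (x : ι → ℝ) (hx0 : ∀ i, 0 ≤ x i) (hx1 : ∀ i, x i ≤ 1 / 2)
    (hs : Summable x) : Multipliable (fun i => (1 - x i)⁻¹) := by
  have : (fun i => (1 - x i)⁻¹) = fun i => 1 + x i / (1 - x i) := by
    funext i
    have : 1 - x i ≠ 0 := by linarith [hx1 i]
    field_simp
    ring
  rw [this]
  apply Real.multipliable_one_add_of_summable
  refine Summable.of_nonneg_of_le (fun i => ?_) (fun i => ?_) (hs.mul_left 2)
  · exact div_nonneg (hx0 i) (by linarith [hx1 i])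
  · rw [div_le_iff₀ (by linarith [hx1 i])]
    nlinarith [hx1 i, hx0 i]

set_option maxHeartbeats 1000000 in
/-- For a prime power `q`, the finite field `F` with `q` elements, and `0 < u < 1`:
the product over all monic irreducible `φ ∈ F[X]`, `φ ≠ X`, of
`∏_{r=1}^∞ 1/(1 − u^{deg φ} q^{−r·deg φ})` converges and equals `1/(1−u)`. -/
theorem stmt_11 (q : ℕ) (hq : IsPrimePow q) (F : Type) [Field F] [Fintype F]
    (hF : Fintype.card F = q) (u : ℝ) (hu0 : 0 < u) (hu1 : u < 1) :
    (∀ φ : {φ : Polynomial F // φ.Monic ∧ Irreducible φ ∧ φ ≠ Polynomial.X},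
      Multipliable (fun r : ℕ =>
        (1 - u ^ φ.1.natDegree * ((q : ℝ) ^ ((r + 1) * φ.1.natDegree))⁻¹)⁻¹)) ∧
    HasProd (fun φ : {φ : Polynomial F // φ.Monic ∧ Irreducible φ ∧ φ ≠ Polynomial.X} =>
        ∏' r : ℕ, (1 - u ^ φ.1.natDegree * ((q : ℝ) ^ ((r + 1) * φ.1.natDegree))⁻¹)⁻¹)
      (1 / (1 - u)) := by
  have hq2 : (2 : ℝ) ≤ q := by exact_mod_cast hq.two_le
  have hq0 : (0 : ℝ) < q := by linarith
  let t : ℕ → ℝ := fun r => u / (q : ℝ) ^ (r + 1)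
  have hterm : ∀ (d r : ℕ), u ^ d * ((q : ℝ) ^ ((r + 1) * d))⁻¹ = t r ^ d := by
    intro d r
    simp only [t]
    rw [div_pow, ← pow_mul, div_eq_mul_inv]
  simp only [hterm]
  have ht0 : ∀ r, 0 ≤ t r := fun r => by positivity
  have htle : ∀ r, t r ≤ (u / q) * (1 / 2) ^ r := by
    intro r
    have : t r = (u / q) * (1 / q) ^ r := by
      simp only [t]; rw [pow_succ, one_div, inv_pow]; field_simp
    rw [this]
    gcongr
  have huq : u / q ≤ 1 / 2 := by
    rw [div_le_div_iff₀ hq0 (by norm_num)]; linarith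
  have huq0 : 0 ≤ u / q := by positivity
  have hhalf : ∀ r : ℕ, ((1 : ℝ) / 2) ^ r ≤ 1 := fun r => pow_le_one₀ (by norm_num) (by norm_num)
  have htuq : ∀ r, t r ≤ u / q := fun r =>
    (htle r).trans (mul_le_of_le_one_right huq0 (hhalf r))
  have hqt : ∀ r, (Fintype.card F : ℝ) * t r < 1 := by
    intro r
    rw [hF]
    calc (q : ℝ) * t r ≤ q * (u / q) := by gcongr; exact htuq r
      _ = u := by field_simp
      _ < 1 := hu1
  let G : PrimeP F × ℕ → ℝ := fun x => t x.2 ^ x.1.1.natDegree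
  have hd : ∀ φ : PrimeP F, 1 ≤ φ.1.natDegree := fun φ => φ.2.2.1.natDegree_pos
  have hG0 : ∀ x, 0 ≤ G x := fun x => pow_nonneg (ht0 _) _
  have hG : ∀ x, G x ≤ (u / q) ^ x.1.1.natDegree * (1 / 2) ^ x.2 := by
    intro x
    calc G x ≤ ((u / q) * (1 / 2) ^ x.2) ^ x.1.1.natDegree :=
          pow_le_pow_left₀ (ht0 _) (htle _) _
      _ = (u / q) ^ x.1.1.natDegree * ((1 / 2) ^ x.2) ^ x.1.1.natDegree := mul_pow _ _ _
      _ ≤ _ := by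
        apply mul_le_mul_of_nonneg_left _ (by positivity)
        exact pow_le_of_le_one (by positivity) (hhalf _) (by have := hd x.1; omega)
  have hGhalf : ∀ x, G x ≤ 1 / 2 := by
    intro x
    have h1 : t x.2 ≤ 1 / 2 := (htuq _).trans huq
    exact (pow_le_of_le_one (ht0 _) (by linarith) (by have := hd x.1; omega)).trans h1
  have hs1 : Summable (fun φ : PrimeP F => (u / q) ^ φ.1.natDegree) := by
    have h := (hasSum_monic F (u / q) huq0 (by
      rw [hF, mul_div_cancel₀ _ hq0.ne']; exact hu1)).summable
    have hi : Function.Injective (fun φ : PrimeP F => (⟨φ.1, φ.2.1⟩ : MonicP F)) := by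
      intro a b hab
      have h3 : a.1 = b.1 := congrArg (fun x : MonicP F => x.1) hab
      exact Subtype.ext h3
    have h4 := h.comp_injective hi
    exact h4
  have hGs : Summable G := by
    refine Summable.of_nonneg_of_le hG0 hG ?_
    have hg2 : Summable (fun n : ℕ => ((1 : ℝ) / 2) ^ n) :=
      summable_geometric_of_lt_one (by norm_num) (by norm_num)
    exact sum_aux _ _ hs1 hg2
      (fun φ => pow_nonneg huq0 _) (fun n => pow_nonneg (by norm_num) _)
  have hmul := mult_aux G hG0 hGhalf hGs
  have hm1 : ∀ φ : PrimeP F, Multipliable (fun r : ℕ => (1 - t r ^ φ.1.natDegree)⁻¹) := by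
    intro φ
    exact mult_aux (fun r => G (φ, r)) (fun r => hG0 _) (fun r => hGhalf _)
      (hGs.comp_injective (Prod.mk_right_injective φ))
  refine ⟨hm1, ?_⟩
  obtain ⟨a, ha⟩ := hmul
  have hA := ha.prod_fiberwise (g := fun φ => ∏' r, (1 - t r ^ φ.1.natDegree)⁻¹)
    (fun φ => (hm1 φ).hasProd)
  have hB := ((Equiv.prodComm ℕ (PrimeP F)).hasProd_iff.2 ha).prod_fiberwise
    (fun r => euler F (t r) (ht0 r) (hqt r))
  have hT := hB.tendsto_prod_nat
  have hne : ∀ r : ℕ, (1 - u / (q : ℝ) ^ r) ≠ 0 := by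
    intro r
    have : u / (q : ℝ) ^ r < 1 := by
      rw [div_lt_one (by positivity)]
      exact hu1.trans_le (one_le_pow₀ (by linarith))
    linarith
  have htel : ∀ n : ℕ, ∏ r ∈ Finset.range n, ((1 - t r) / (1 - Fintype.card F * t r)) =
      (1 - u / (q : ℝ) ^ n) / (1 - u) := by
    intro n
    have : ∀ r ∈ Finset.range n, ((1 - t r) / (1 - Fintype.card F * t r)) =
        (1 - u / (q : ℝ) ^ (r + 1)) / (1 - u / (q : ℝ) ^ r) := by
      intro r _
      have : (Fintype.card F : ℝ) * t r = u / (q : ℝ) ^ r := by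
        rw [hF]; simp only [t]; rw [pow_succ]; field_simp
      rw [this]
    rw [Finset.prod_congr rfl this]
    have h0 := hne 0
    induction n with
    | zero => simp at h0 ⊢; rw [div_self h0]
    | succ k ih =>
      rw [Finset.prod_range_succ, ih (fun r hr => this r (by simp at hr ⊢; omega))]
      have := hne k
      simp only [pow_zero, div_one] at h0
      rw [div_mul_div_comm, mul_comm (1 - u), mul_div_mul_left _ _ this]
  simp only [htel] at hT
  have hlim : Tendsto (fun n : ℕ => (1 - u / (q : ℝ) ^ n) / (1 - u)) atTop (𝓝 (1 / (1 - u))) := by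
    have h1 : Tendsto (fun n : ℕ => u / (q : ℝ) ^ n) atTop (𝓝 0) :=
      (tendsto_pow_atTop_atTop_of_one_lt (by linarith)).const_div_atTop u
    have := (h1.const_sub 1).div_const (1 - u)
    simpa using this
  rw [← tendsto_nhds_unique hT hlim]
  exact hA
end

section
/- Let λ ⊆ Λ be partitions such that Λ − λ is a horizontal strip (the Young diagram of Λ contains that of λ and their difference has at most one cell in each column). Say a column a is 'in the strip' if Λ − λ contains a cell in column a. Let A be the set of columns a ≥ 2 that are in the strip such that column a−1 is not in the strip, and let A' be the set of columns a in the strip such that either a = 1 or column a−1 is also in the strip. Then for every real number t, t^{n(Λ) − n(λ)} · ∏_{a ∈ A} (1 − t^{λ'_{a−1} − λ'_a}) = ∏_{a ∈ A'} t^{λ'_a} · ∏_{a ∈ A} ( t^{λ'_a} − t^{λ'_{a−1}} ). -/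
/-- Column `j` (0-indexed) is in the strip `Λ − λ`. -/
def InStrip (lam Lam : YoungDiagram) (j : ℕ) : Prop :=
  ∃ i : ℕ, (i, j) ∈ Lam ∧ (i, j) ∉ lam

/-- Let `λ ⊆ Λ` with `Λ − λ` a horizontal strip.  With `A` the set of columns `a ≥ 2` in
the strip whose previous column is not in the strip, and `A'` the set of columns `a` in
the strip with `a = 1` or column `a−1` also in the strip (here columns are 0-indexed in
Lean, so `a ≥ 2` becomes `1 ≤ j` and `a = 1` becomes `j = 0`, and `λ'_a = colLen (a−1)`
becomes `colLen j`):
`t^{n(Λ)−n(λ)} ∏_{a∈A} (1 − t^{λ'_{a−1}−λ'_a}) = ∏_{a∈A'} t^{λ'_a} ∏_{a∈A} (t^{λ'_a} − t^{λ'_{a−1}})`. -/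
theorem stmt_12 (lam Lam : YoungDiagram) (hsub : lam ≤ Lam)
    (hstrip : ∀ j : ℕ, ((Lam.cells \ lam.cells).filter (fun s => s.2 = j)).card ≤ 1)
    (t : ℝ) :
    t ^ (nstat Lam - nstat lam) *
        ∏ᶠ (j : ℕ) (_ : 1 ≤ j ∧ InStrip lam Lam j ∧ ¬InStrip lam Lam (j - 1)),
          (1 - t ^ (lam.colLen (j - 1) - lam.colLen j)) =
      (∏ᶠ (j : ℕ) (_ : InStrip lam Lam j ∧ (j = 0 ∨ InStrip lam Lam (j - 1))),
          t ^ lam.colLen j) *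
        ∏ᶠ (j : ℕ) (_ : 1 ≤ j ∧ InStrip lam Lam j ∧ ¬InStrip lam Lam (j - 1)),
          (t ^ lam.colLen j - t ^ lam.colLen (j - 1)) := by
  classical
  have key : ∀ i j : ℕ, (i, j) ∈ Lam → (i, j) ∉ lam → i = lam.colLen j := by
    intro i j h1 h2
    have h3 : lam.colLen j ≤ i := by
      by_contra h
      exact h2 (YoungDiagram.mem_iff_lt_colLen.2 (not_le.1 h))
    have h4 : (lam.colLen j, j) ∈ Lam := Lam.up_left_mem h3 le_rfl h1
    have h5 : (lam.colLen j, j) ∉ lam := by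
      rw [YoungDiagram.mem_iff_lt_colLen]; exact lt_irrefl _
    have h6 := Finset.card_le_one.1 (hstrip j) (i, j)
      (by simp [YoungDiagram.mem_cells, h1, h2]) (lam.colLen j, j)
      (by simp [YoungDiagram.mem_cells, h4, h5])
    exact congrArg Prod.fst h6
  set D := Lam.cells \ lam.cells with hD
  have memD : ∀ i j : ℕ, (i, j) ∈ D ↔ (i, j) ∈ Lam ∧ (i, j) ∉ lam := by
    intro i j; simp [hD, YoungDiagram.mem_cells]
  have hsubc : lam.cells ⊆ Lam.cells := hsub
  set S := D.image Prod.snd with hS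
  have memS : ∀ j, InStrip lam Lam j ↔ j ∈ S := by
    intro j
    simp only [hS, Finset.mem_image, Prod.exists, InStrip]
    constructor
    · rintro ⟨i, h⟩
      exact ⟨i, j, (memD i j).2 h, rfl⟩
    · rintro ⟨i, k, h, rfl⟩
      exact ⟨i, (memD i k).1 h⟩
  have hn : nstat Lam - nstat lam = ∑ j ∈ S, lam.colLen j := by
    have h1 : ∑ s ∈ D, s.1 + nstat lam = nstat Lam := Finset.sum_sdiff hsubc
    have h2 : ∑ j ∈ S, lam.colLen j = ∑ s ∈ D, s.1 := by
      rw [hS, Finset.sum_image]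
      · refine Finset.sum_congr rfl ?_
        rintro ⟨i, j⟩ h
        have h := (memD i j).1 h
        exact (key i j h.1 h.2).symm
      · rintro ⟨i, j⟩ h ⟨i', j'⟩ h' (e : j = j')
        subst e
        have h := (memD i j).1 h
        have h' := (memD i' j).1 h'
        rw [key i j h.1 h.2, key i' j h'.1 h'.2]
    omega
  have hA : ∀ j, (1 ≤ j ∧ InStrip lam Lam j ∧ ¬InStrip lam Lam (j - 1)) ↔
      j ∈ S.filter (fun j => ¬ (j = 0 ∨ InStrip lam Lam (j - 1))) := by
    intro j
    rw [Finset.mem_filter, ← memS, Nat.one_le_iff_ne_zero]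
    tauto
  have hA' : ∀ j, (InStrip lam Lam j ∧ (j = 0 ∨ InStrip lam Lam (j - 1))) ↔
      j ∈ S.filter (fun j => (j = 0 ∨ InStrip lam Lam (j - 1))) := by
    intro j
    rw [Finset.mem_filter, ← memS]
  rw [finprod_cond_eq_prod_of_cond_iff _ (fun {j} _ => hA j),
    finprod_cond_eq_prod_of_cond_iff _ (fun {j} _ => hA' j),
    finprod_cond_eq_prod_of_cond_iff _ (fun {j} _ => hA j), hn,
    ← Finset.prod_pow_eq_pow_sum,
    ← Finset.prod_filter_mul_prod_filter_not S (fun j => (j = 0 ∨ InStrip lam Lam (j - 1))),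
    mul_assoc, ← Finset.prod_mul_distrib]
  congr 1
  refine Finset.prod_congr rfl fun j _ => ?_
  have h : lam.colLen j ≤ lam.colLen (j - 1) := lam.colLen_anti _ _ (Nat.sub_le _ _)
  rw [mul_sub, mul_one, ← pow_add, Nat.add_sub_cancel' h]
end

section
/- Let q be a real number with q > 1, let u be a real number with 0 < u < 1, and let N be a nonnegative integer. Writing (x)_M = ∏_{r=0}^{M−1} (1 − x·q^{−r}), one has ∑_λ u^{|λ|} / ( (1/q)_{N − λ'_1} · ∏_{i≥1} q^{(λ'_i)²} (1/q)_{m_i(λ)} ) = 1 / ( (u/q)_N · (1/q)_N ), where the sum is over all partitions λ with at most N parts (λ'_1 ≤ N). -/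
/-- `(x)_M = (1−x)(1−x/q)⋯(1−x/q^{M−1})`, with `(x)_0 = 1`. -/
noncomputable def poch (q x : ℝ) (M : ℕ) : ℝ := ∏ r ∈ Finset.range M, (1 - x / q ^ r)

/-- `∏_{i≥1} q^{(λ'_i)²} (1/q)_{m_i(λ)}`, where `λ'_{i}` is the conjugate partition
(`λ'_{i+1} = colLen i`, 0-indexed) and `m_{i+1} = colLen i − colLen (i+1)`. -/
noncomputable def denomProd (q : ℝ) (μ : YoungDiagram) : ℝ :=
  ∏ᶠ i : ℕ, q ^ (μ.colLen i ^ 2) * poch q q⁻¹ (μ.colLen i - μ.colLen (i + 1))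

namespace S13

lemma pochP_succ (q : ℝ) (n : ℕ) :
    poch q q⁻¹ (n+1) = poch q q⁻¹ n * (1 - q⁻¹ ^ (n+1)) := by
  unfold poch
  rw [Finset.prod_range_succ, pow_succ, inv_pow, div_eq_mul_inv, mul_comm q⁻¹]

lemma pochU_succ (q u : ℝ) (n : ℕ) :
    poch q (u/q) (n+1) = poch q (u/q) n * (1 - u * q⁻¹ ^ (n+1)) := by
  unfold poch
  rw [Finset.prod_range_succ, pow_succ, inv_pow, div_eq_mul_inv, div_eq_mul_inv]
  ring

lemma poch_zero (q x : ℝ) : poch q x 0 = 1 := by simp [poch]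

lemma tpow_lt (q : ℝ) (hq : 1 < q) (n : ℕ) : q⁻¹ ^ (n+1) < 1 := by
  apply pow_lt_one₀ (by positivity) (inv_lt_one_of_one_lt₀ hq) (by omega)

lemma pochP_pos (q : ℝ) (hq : 1 < q) (n : ℕ) : 0 < poch q q⁻¹ n := by
  induction n with
  | zero => simp [poch_zero]
  | succ n ih => rw [pochP_succ]; have := tpow_lt q hq n; exact mul_pos ih (by linarith)

lemma ut_lt (q u : ℝ) (hq : 1 < q) (hu0 : 0 < u) (hu1 : u < 1) (n : ℕ) :
    u * q⁻¹ ^ (n+1) < 1 := by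
  have := tpow_lt q hq n
  have h2 : 0 < q⁻¹ ^ (n+1) := by positivity
  nlinarith

lemma pochU_pos (q u : ℝ) (hq : 1 < q) (hu0 : 0 < u) (hu1 : u < 1) (n : ℕ) :
    0 < poch q (u/q) n ∧ poch q (u/q) n ≤ 1 := by
  induction n with
  | zero => simp [poch_zero]
  | succ n ih =>
    rw [pochU_succ]
    have := ut_lt q u hq hu0 hu1 n
    have h2 : 0 < u * q⁻¹ ^ (n+1) := by positivity
    exact ⟨mul_pos ih.1 (by linarith), by nlinarith [ih.1, ih.2]⟩

noncomputable def B (t : ℝ) : ℕ → ℕ → ℝ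
  | _, 0 => 1
  | 0, _+1 => 0
  | N+1, k+1 => B t N (k+1) + t ^ (N - k) * B t N k

lemma B_zero (t : ℝ) (N : ℕ) : B t N 0 = 1 := by cases N <;> simp [B]

lemma B_big (t : ℝ) (N : ℕ) : ∀ k, N < k → B t N k = 0 := by
  induction N with
  | zero => intro k hk; obtain ⟨k, rfl⟩ : ∃ j, k = j+1 := ⟨k-1, by omega⟩; simp [B]
  | succ N ih =>
    intro k hk; obtain ⟨k, rfl⟩ : ∃ j, k = j+1 := ⟨k-1, by omega⟩
    simp [B, ih (k+1) (by omega), ih k (by omega)]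

lemma B_formula (q : ℝ) (n : ℕ) : ∀ k m, k + m = n →
    B q⁻¹ n k * poch q q⁻¹ k * poch q q⁻¹ m = poch q q⁻¹ n := by
  induction n with
  | zero =>
    intro k m h
    obtain rfl : k = 0 := by omega
    obtain rfl : m = 0 := by omega
    simp [B, poch_zero]
  | succ n ih =>
    intro k m h
    rcases k with _ | k
    · obtain rfl : m = n+1 := by omega
      simp [B_zero, poch_zero]
    rcases m with _ | m
    · obtain rfl : k = n := by omega
      have := ih k 0 (by omega)
      simp only [B, B_big _ k (k+1) (by omega), poch_zero, pochP_succ] at *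
      simp only [Nat.sub_self, pow_zero]
      linear_combination (1 - q⁻¹ ^ (k+1)) * this
    · obtain rfl : n = k + m + 1 := by omega
      have h1 := ih (k+1) m (by omega)
      have h2 := ih k (m+1) (by omega)
      have e : k + m + 1 - k = m + 1 := by omega
      rw [B, e, pochP_succ q (k+m+1)]
      rw [pochP_succ q k] at *
      rw [pochP_succ q m] at *
      have e2 : q⁻¹ ^ (k+m+1+1) = q⁻¹^(k+1) * q⁻¹^(m+1) := by rw [← pow_add]; congr 1; omega
      rw [e2]
      linear_combination (1 - q⁻¹^(m+1)) * h1 + q⁻¹^(m+1) * (1 - q⁻¹^(k+1)) * h2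

lemma ident (q u : ℝ) (hq : 1 < q) (hu0 : 0 < u) (hu1 : u < 1) (N : ℕ) : ∀ a : ℕ,
    ∑ k ∈ Finset.range (N+1), B q⁻¹ N k * (u^k * q⁻¹^(k*(k+a)) / poch q (u/q) (k+a))
      = 1 / poch q (u/q) (N+a) := by
  induction N with
  | zero => intro a; simp [B]
  | succ N ih =>
    intro a
    have h1 := ih a
    have h2 := ih (a+1)
    rw [Finset.sum_range_succ']
    simp only [B_zero]
    have e : ∀ k ∈ Finset.range (N+1), B q⁻¹ (N+1) (k+1) *
        (u^(k+1) * q⁻¹^((k+1)*(k+1+a)) / poch q (u/q) (k+1+a)) =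
        B q⁻¹ N (k+1) * (u^(k+1) * q⁻¹^((k+1)*(k+1+a)) / poch q (u/q) (k+1+a)) +
        (u * q⁻¹^(N+a+1)) * (B q⁻¹ N k * (u^k * q⁻¹^(k*(k+(a+1))) / poch q (u/q) (k+(a+1)))) := by
      intro k hk
      have hk' : k ≤ N := by simpa [Nat.lt_succ_iff] using hk
      have e1 : k + 1 + a = k + (a+1) := by omega
      have e2 : q⁻¹^(N-k) * q⁻¹^((k+1)*(k+(a+1))) = q⁻¹^(N+a+1) * q⁻¹^(k*(k+(a+1))) := by
        rw [← pow_add, ← pow_add]; congr 1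
        obtain ⟨d, rfl⟩ := Nat.exists_eq_add_of_le hk'
        rw [Nat.add_sub_cancel_left]; ring
      rw [B, e1, add_mul]
      congr 1
      rw [pow_succ u]
      linear_combination (B q⁻¹ N k * u^k * u / poch q (u/q) (k+(a+1))) * e2
    rw [Finset.sum_congr rfl e, Finset.sum_add_distrib, ← Finset.mul_sum, h2]
    have h3 := Finset.sum_range_succ' (fun k => B q⁻¹ N k * (u^k * q⁻¹^(k*(k+a)) / poch q (u/q) (k+a))) (N+1)
    rw [Finset.sum_range_succ, h1, B_big _ N (N+1) (by omega)] at h3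
    simp only [B_zero] at h3
    have e3 : N + 1 + a = N + a + 1 := by omega
    have e4 : N + (a + 1) = N + a + 1 := by omega
    rw [e3, e4]
    have hU := (pochU_pos q u hq hu0 hu1 (N+a)).1
    have hU' := ut_lt q u hq hu0 hu1 (N+a)
    have h5 : 1 / poch q (u/q) (N+a) + u * q⁻¹^(N+a+1) * (1 / poch q (u/q) (N+a+1)) = 1 / poch q (u/q) (N+a+1) := by
      rw [pochU_succ]
      have : 1 - u * q⁻¹^(N+a+1) ≠ 0 := by linarith
      have := hU.ne'
      generalize u * q⁻¹^(N+a+1) = z at *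
      field_simp
      ring
    linarith

/-- coefficient -/
noncomputable def c (q u : ℝ) (N k : ℕ) : ℝ := u^k / (poch q q⁻¹ (N-k) * q^(k^2))

noncomputable def G (q u : ℝ) (N : ℕ) : ℝ := 1 / (poch q (u / q) N * poch q q⁻¹ N)

lemma G_rec (q u : ℝ) (hq : 1 < q) (hu0 : 0 < u) (hu1 : u < 1) (N : ℕ) :
    ∑ k ∈ Finset.range (N+1), c q u N k * G q u k = G q u N := by
  have h := ident q u hq hu0 hu1 N 0
  have hP := pochP_pos q hq
  have : G q u N = (1 / poch q (u/q) (N+0)) / poch q q⁻¹ N := by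
    unfold G; rw [add_zero, div_div]
  rw [this, ← h, Finset.sum_div]
  apply Finset.sum_congr rfl
  intro k hk
  have hk' : k ≤ N := by simpa [Nat.lt_succ_iff] using hk
  have hb := B_formula q N k (N-k) (by omega)
  rw [← hb]
  have h1 := (hP k).ne'
  have h2 := (hP (N-k)).ne'
  have h3 := (pochU_pos q u hq hu0 hu1 k).1.ne'
  have h4 : B q⁻¹ N k ≠ 0 := by
    intro h0; rw [h0] at hb; have := hP N; simp at hb; linarith
  have h5 : q ≠ 0 := by linarith
  unfold c G
  rw [add_zero, inv_pow, ← sq]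
  generalize B q⁻¹ N k = b at *
  generalize poch q q⁻¹ k = x at *
  generalize poch q q⁻¹ (N-k) = y at *
  field_simp

lemma sh_inj (s : Set (ℕ × ℕ)) : Set.InjOn (fun p : ℕ × ℕ => (p.1, p.2+1)) s := by
  intro a _ b _ h
  simp at h
  exact Prod.ext h.1 h.2

/-- remove first column -/
noncomputable def tail (μ : YoungDiagram) : YoungDiagram where
  cells := μ.cells.preimage (fun p : ℕ × ℕ => (p.1, p.2+1))
    (sh_inj _)
  isLowerSet := by
    intro a b hab ha
    refine Finset.mem_coe.2 (Finset.mem_preimage.2 ?_)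
    refine μ.isLowerSet ?_ (Finset.mem_preimage.1 (Finset.mem_coe.1 ha))
    exact ⟨hab.1, Nat.succ_le_succ hab.2⟩

lemma mem_tail (μ : YoungDiagram) (i j : ℕ) : (i,j) ∈ tail μ ↔ (i,j+1) ∈ μ := by
  exact Finset.mem_preimage (hf := sh_inj _)

lemma eq_of_mem {a b : ℕ} (h : ∀ i, i < a ↔ i < b) : a = b := by
  have h1 := h a
  have h2 := h b
  omega

lemma colLen_tail (μ : YoungDiagram) (j : ℕ) : (tail μ).colLen j = μ.colLen (j+1) := by
  apply eq_of_mem; intro i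
  rw [← YoungDiagram.mem_iff_lt_colLen, ← YoungDiagram.mem_iff_lt_colLen, mem_tail]

lemma ext_col {μ ν : YoungDiagram} (h : ∀ j, μ.colLen j = ν.colLen j) : μ = ν := by
  apply YoungDiagram.ext
  ext ⟨i, j⟩
  rw [YoungDiagram.mem_cells, YoungDiagram.mem_cells, YoungDiagram.mem_iff_lt_colLen,
    YoungDiagram.mem_iff_lt_colLen, h]

lemma tail_inj {μ ν : YoungDiagram} (h0 : μ.colLen 0 = ν.colLen 0) (h : tail μ = tail ν) : μ = ν := by
  apply ext_col
  rintro (_ | j)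
  · exact h0
  · rw [← colLen_tail, h, colLen_tail]

lemma card_tail (μ : YoungDiagram) : μ.card = μ.colLen 0 + (tail μ).card := by
  unfold YoungDiagram.card
  rw [← Finset.card_filter_add_card_filter_not (s := μ.cells) (fun p => p.2 = 0)]
  congr 1
  · rw [YoungDiagram.colLen_eq_card]; rfl
  · symm
    refine Finset.card_bij (fun p _ => (p.1, p.2+1)) ?_ ?_ ?_
    · rintro ⟨i, j⟩ h
      simpa [mem_tail] using h
    · rintro ⟨i, j⟩ _ ⟨i', j'⟩ _ h
      simpa using h
    · rintro ⟨i, j⟩ h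
      simp at h
      obtain ⟨j, rfl⟩ : ∃ j', j = j'+1 := ⟨j-1, by omega⟩
      exact ⟨(i,j), by simpa [mem_tail] using h.1, rfl⟩

/-- add a column -/
def cons (k : ℕ) (μ : YoungDiagram) (hk : μ.colLen 0 ≤ k) : YoungDiagram where
  cells := (Finset.range k ×ˢ {0}) ∪ μ.cells.image (fun p : ℕ × ℕ => (p.1, p.2+1))
  isLowerSet := by
    rintro ⟨i, j⟩ ⟨i', j'⟩ hab ha
    obtain ⟨h1, h2⟩ := Prod.mk_le_mk.1 hab
    simp at ha ⊢
    rcases j' with _ | j'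
    · left
      rcases ha with ha | ⟨a, ha, rfl⟩
      · exact ⟨by omega, rfl⟩
      · refine ⟨?_, rfl⟩
        have := YoungDiagram.mem_iff_lt_colLen.1 ha
        have := μ.colLen_anti 0 a (Nat.zero_le _)
        omega
    · right
      rcases ha with ha | ⟨a, ha, rfl⟩
      · omega
      · refine ⟨j', μ.up_left_mem h1 (by omega) ha, rfl⟩

lemma mem_cons_zero (k : ℕ) (μ : YoungDiagram) (hk : μ.colLen 0 ≤ k) (i : ℕ) :
    (i, 0) ∈ cons k μ hk ↔ i < k := by
  rw [← YoungDiagram.mem_cells]; simp [cons]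

lemma mem_cons_succ (k : ℕ) (μ : YoungDiagram) (hk : μ.colLen 0 ≤ k) (i j : ℕ) :
    (i, j+1) ∈ cons k μ hk ↔ (i,j) ∈ μ := by
  rw [← YoungDiagram.mem_cells]; simp [cons]

lemma colLen_cons (k : ℕ) (μ : YoungDiagram) (hk : μ.colLen 0 ≤ k) : (cons k μ hk).colLen 0 = k := by
  apply eq_of_mem; intro i
  rw [← YoungDiagram.mem_iff_lt_colLen, mem_cons_zero]

lemma tail_cons (k : ℕ) (μ : YoungDiagram) (hk : μ.colLen 0 ≤ k) : tail (cons k μ hk) = μ := by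
  apply YoungDiagram.ext
  ext ⟨i, j⟩
  rw [YoungDiagram.mem_cells, YoungDiagram.mem_cells, mem_tail, mem_cons_succ]

lemma colLen_eq_zero (μ : YoungDiagram) (j : ℕ) (h : μ.rowLen 0 ≤ j) : μ.colLen j = 0 := by
  by_contra hne
  have : (0, j) ∈ μ := YoungDiagram.mem_iff_lt_colLen.2 (by omega)
  have := YoungDiagram.mem_iff_lt_rowLen.1 this
  omega

lemma denom_range (q : ℝ) (μ : YoungDiagram) (n : ℕ) (h : ∀ j, n ≤ j → μ.colLen j = 0) :
    denomProd q μ = ∏ i ∈ Finset.range n,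
      q ^ (μ.colLen i ^ 2) * poch q q⁻¹ (μ.colLen i - μ.colLen (i + 1)) := by
  unfold denomProd
  apply finprod_eq_prod_of_mulSupport_subset
  intro i hi
  by_contra hne
  apply hi
  have : n ≤ i := by simpa using hne
  simp [h i this, poch_zero]

lemma denom_tail (q : ℝ) (μ : YoungDiagram) :
    denomProd q μ = q ^ (μ.colLen 0 ^ 2) * poch q q⁻¹ (μ.colLen 0 - μ.colLen 1) * denomProd q (tail μ) := by
  have h := colLen_eq_zero μ
  rw [denom_range q μ (μ.rowLen 0 + 1) (fun j hj => h j (by omega)),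
    denom_range q (tail μ) (μ.rowLen 0) (fun j hj => by rw [colLen_tail]; exact h _ (by omega)),
    Finset.prod_range_succ']
  simp only [colLen_tail]
  rw [mul_comm]

lemma denom_pos (q : ℝ) (hq : 1 < q) (μ : YoungDiagram) : 0 < denomProd q μ := by
  rw [denom_range q μ _ (colLen_eq_zero μ)]
  apply Finset.prod_pos
  intro i _
  have := pochP_pos q hq (μ.colLen i - μ.colLen (i + 1))
  positivity

noncomputable def term (q u : ℝ) (N : ℕ) (μ : YoungDiagram) : ℝ :=
  u ^ μ.card / (poch q q⁻¹ (N - μ.colLen 0) * denomProd q μ)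

lemma term_tail (q u : ℝ) (N : ℕ) (μ : YoungDiagram) :
    term q u N μ = c q u N (μ.colLen 0) * term q u (μ.colLen 0) (tail μ) := by
  unfold term c
  rw [card_tail, denom_tail, colLen_tail, pow_add, div_mul_div_comm]
  congr 1
  ring

lemma term_nonneg (q u : ℝ) (hq : 1 < q) (hu0 : 0 < u) (N : ℕ) (μ : YoungDiagram) :
    0 ≤ term q u N μ := by
  have := denom_pos q hq μ
  have := pochP_pos q hq (N - μ.colLen 0)
  unfold term; positivity

lemma c_nonneg (q u : ℝ) (hq : 1 < q) (hu0 : 0 < u) (N k : ℕ) : 0 ≤ c q u N k := by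
  have := pochP_pos q hq (N - k)
  unfold c; positivity

lemma tail_colLen_le (μ : YoungDiagram) : (tail μ).colLen 0 ≤ μ.colLen 0 := by
  rw [colLen_tail]; exact μ.colLen_anti 0 1 (by omega)

lemma bound (q u : ℝ) (hq : 1 < q) (hu0 : 0 < u) (hu1 : u < 1) (L : ℕ) :
    ∀ (N : ℕ) (s : Finset YoungDiagram), (∀ μ ∈ s, μ.colLen 0 ≤ N ∧ μ.colLen L = 0) →
      ∑ μ ∈ s, term q u N μ ≤ G q u N := by
  classical
  induction L with
  | zero =>
    intro N s hs
    have hP := pochP_pos q hq N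
    have hU := pochU_pos q u hq hu0 hu1 N
    have hb : ∀ μ ∈ s, μ = ⊥ := by
      intro μ hμ
      apply ext_col
      intro j
      have h1 := (hs μ hμ).2
      have h2 := μ.colLen_anti 0 j (Nat.zero_le _)
      have h3 : (⊥ : YoungDiagram).colLen j = 0 := by
        by_contra hne
        have : (0, j) ∈ (⊥ : YoungDiagram) := YoungDiagram.mem_iff_lt_colLen.2 (by omega)
        exact YoungDiagram.notMem_bot _ this
      omega
    have hsub : s ⊆ {⊥} := fun μ hμ => by simpa using hb μ hμ
    refine (Finset.sum_le_sum_of_subset_of_nonneg hsub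
      (fun μ _ _ => term_nonneg q u hq hu0 N μ)).trans ?_
    rw [Finset.sum_singleton]
    have h3 : ∀ j, (⊥ : YoungDiagram).colLen j = 0 := by
      intro j
      by_contra hne
      have : (0, j) ∈ (⊥ : YoungDiagram) := YoungDiagram.mem_iff_lt_colLen.2 (by omega)
      exact YoungDiagram.notMem_bot _ this
    have hd : denomProd q ⊥ = 1 := by rw [denom_range q ⊥ 0 (fun j _ => h3 j)]; simp
    have hc : (⊥ : YoungDiagram).card = 0 := by simp
    unfold term G
    rw [hd, hc, h3, pow_zero, mul_one, Nat.sub_zero]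
    apply one_div_le_one_div_of_le (mul_pos hU.1 hP)
    nlinarith [hU.2]
  | succ L ih =>
    intro N s hs
    rw [← G_rec q u hq hu0 hu1 N,
      ← Finset.sum_fiberwise_of_maps_to (s := s) (t := Finset.range (N+1)) (g := fun μ => μ.colLen 0)
        (fun μ hμ => by have := (hs μ hμ).1; simp; omega)]
    apply Finset.sum_le_sum
    intro k hk
    have e : ∑ μ ∈ s with μ.colLen 0 = k, term q u N μ =
        c q u N k * ∑ ν ∈ (s.filter (fun μ => μ.colLen 0 = k)).image tail, term q u k ν := by
      rw [Finset.sum_image, Finset.mul_sum]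
      · apply Finset.sum_congr rfl
        intro μ hμ
        rw [term_tail, (Finset.mem_filter.1 hμ).2]
      · intro μ hμ ν hν h
        simp at hμ hν
        exact tail_inj (hμ.2.trans hν.2.symm) h
    rw [e]
    apply mul_le_mul_of_nonneg_left _ (c_nonneg q u hq hu0 N k)
    apply ih
    intro ν hν
    obtain ⟨μ, hμ, rfl⟩ := Finset.mem_image.1 hν
    obtain ⟨hμ', rfl⟩ := Finset.mem_filter.1 hμ
    exact ⟨tail_colLen_le μ, by rw [colLen_tail]; exact (hs μ hμ').2⟩

abbrev Y (N : ℕ) := {μ : YoungDiagram // μ.colLen 0 ≤ N}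

lemma summ (q u : ℝ) (hq : 1 < q) (hu0 : 0 < u) (hu1 : u < 1) (N : ℕ) :
    Summable (fun μ : Y N => term q u N μ.1) := by
  classical
  have hnn : (0 : Y N → ℝ) ≤ fun μ : Y N => term q u N μ.1 :=
    fun μ => term_nonneg q u hq hu0 N μ.1
  refine summable_of_sum_le (f := fun μ : Y N => term q u N μ.1) (c := G q u N) hnn ?_
  intro s
  have : ∑ μ ∈ s, term q u N μ.1 = ∑ μ ∈ s.map (Function.Embedding.subtype _), term q u N μ := by
    rw [Finset.sum_map]; rfl
  rw [this]
  apply bound q u hq hu0 hu1 ((s.map (Function.Embedding.subtype _)).sup (fun μ => μ.rowLen 0))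
  intro μ hμ
  constructor
  · simp at hμ; exact hμ.1
  · exact colLen_eq_zero μ _ (Finset.le_sup (f := fun μ : YoungDiagram => μ.rowLen 0) hμ)

lemma sig_ext {N : ℕ} (x y : Σ k : Fin (N+1), Y k) (h1 : x.1.1 = y.1.1) (h2 : x.2.1 = y.2.1) :
    x = y := by
  obtain ⟨⟨k, hk⟩, ⟨μ, hμ⟩⟩ := x
  obtain ⟨⟨k', hk'⟩, ⟨μ', hμ'⟩⟩ := y
  simp only at h1 h2
  subst h1 h2
  rfl

noncomputable def eqv (N : ℕ) : (Σ k : Fin (N+1), Y k) ≃ Y N where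
  toFun x := ⟨cons x.1 x.2.1 x.2.2, by rw [colLen_cons]; omega⟩
  invFun μ := ⟨⟨μ.1.colLen 0, by have := μ.2; omega⟩, ⟨tail μ.1, tail_colLen_le μ.1⟩⟩
  left_inv := by
    rintro ⟨⟨k, hk⟩, ⟨ν, hν⟩⟩
    exact sig_ext _ _ (colLen_cons k ν hν) (tail_cons k ν hν)
  right_inv := by
    rintro ⟨μ, hμ⟩
    apply Subtype.ext
    apply tail_inj
    · simp [colLen_cons]
    · simp [tail_cons]

lemma S_rec (q u : ℝ) (hq : 1 < q) (hu0 : 0 < u) (hu1 : u < 1) (N : ℕ) :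
    ∑' μ : Y N, term q u N μ.1 =
      ∑ k ∈ Finset.range (N+1), c q u N k * ∑' μ : Y k, term q u k μ.1 := by
  have hs := summ q u hq hu0 hu1 N
  have hs2 : Summable (fun x => term q u N (eqv N x).1) := (eqv N).summable_iff.2 hs
  rw [← (eqv N).tsum_eq, Summable.tsum_sigma hs2, tsum_fintype,
    Finset.sum_range (fun k => c q u N k * ∑' μ : Y k, term q u k μ.1)]
  apply Finset.sum_congr rfl
  intro k _
  rw [← tsum_mul_left]
  apply tsum_congr
  intro ν
  rw [term_tail]
  simp only [eqv, Equiv.coe_fn_mk, colLen_cons, tail_cons]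

lemma S_eq (q u : ℝ) (hq : 1 < q) (hu0 : 0 < u) (hu1 : u < 1) (N : ℕ) :
    ∑' μ : Y N, term q u N μ.1 = G q u N := by
  induction N using Nat.strong_induction_on with
  | _ N ih =>
  rcases Nat.eq_zero_or_pos N with rfl | hN
  · have h3 : ∀ j, (⊥ : YoungDiagram).colLen j = 0 := by
      intro j
      by_contra hne
      have : (0, j) ∈ (⊥ : YoungDiagram) := YoungDiagram.mem_iff_lt_colLen.2 (by omega)
      exact YoungDiagram.notMem_bot _ this
    have hd : denomProd q ⊥ = 1 := by rw [denom_range q ⊥ 0 (fun j _ => h3 j)]; simp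
    rw [tsum_eq_single (⟨⊥, by rw [h3]⟩ : Y 0)]
    · have hc : (⊥ : YoungDiagram).card = 0 := by simp
      simp only [term, G, hd, poch_zero, hc, Nat.zero_sub]
      norm_num
    · rintro ⟨μ, hμ⟩ hne
      exfalso; apply hne
      apply Subtype.ext
      apply ext_col
      intro j
      have h2 := μ.colLen_anti 0 j (Nat.zero_le _)
      simp only [h3]
      omega
  · have h1 := S_rec q u hq hu0 hu1 N
    have h2 := G_rec q u hq hu0 hu1 N
    rw [Finset.sum_range_succ] at h1 h2
    rw [Finset.sum_congr rfl (fun k hk => by rw [ih k (Finset.mem_range.1 hk)])] at h1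
    have hc : c q u N N < 1 := by
      unfold c
      rw [Nat.sub_self, poch_zero, one_mul, div_lt_one (by positivity)]
      exact (pow_lt_one₀ hu0.le hu1 hN.ne').trans_le (one_le_pow₀ hq.le)
    have : (1 - c q u N N) * (∑' μ : Y N, term q u N μ.1 - G q u N) = 0 := by
      linear_combination h1 + h2
    rcases mul_eq_zero.1 this with h | h <;> linarith

end S13

/-- For real `q > 1`, `0 < u < 1` and a nonnegative integer `N`:
`∑_λ u^{|λ|} / ((1/q)_{N−λ'_1} ∏_{i≥1} q^{(λ'_i)²} (1/q)_{m_i(λ)})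
  = 1 / ((u/q)_N (1/q)_N)`,
the sum being over all partitions with at most `N` parts. -/
theorem stmt_13 (q u : ℝ) (hq : 1 < q) (hu0 : 0 < u) (hu1 : u < 1) (N : ℕ) :
    HasSum (fun μ : {μ : YoungDiagram // μ.colLen 0 ≤ N} =>
        u ^ μ.1.card / (poch q q⁻¹ (N - μ.1.colLen 0) * denomProd q μ.1))
      (1 / (poch q (u / q) N * poch q q⁻¹ N)) := by
  have h := (S13.summ q u hq hu0 hu1 N).hasSum
  rw [S13.S_eq q u hq hu0 hu1 N] at h
  exact h
end

section
/- Let q be a real number with q > 1 and u a real number with 0 < u < 1. For a nonnegative integer N and a partition λ define F(N,λ) = u^{|λ|} · (u/q)_N · (1/q)_N / ( (1/q)_{N−λ'_1} · ∏_{i≥1} q^{(λ'_i)²} (1/q)_{m_i(λ)} ) if λ has at most N parts, and F(N,λ) = 0 otherwise. Then for every N ≥ 1 and every partition λ with at most N parts: F(N,λ) = (1 − u·q^{−N}) · F(N−1, λ) + (u·q^{−N}) · ∑_{s : m_s(λ) ≥ 1} p_s · F(N, λ^{(s)}), where λ^{(s)} is the partition obtained from λ by removing one cell from column s (i.e.,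 replacing one part of size s by a part of size s−1), p_1 = (q^{N−λ'_1+1} − 1)/(q^N − 1), and p_s = (q^{N−λ'_s+1} − q^{N−λ'_{s−1}})/(q^N − 1) for s > 1 (here λ' is the conjugate of λ). -/
/-- `F(N,λ) = u^{|λ|} (u/q)_N (1/q)_N / ((1/q)_{N−λ'_1} ∏_{i≥1} q^{(λ'_i)²} (1/q)_{m_i})`
if `λ` has at most `N` parts, and `0` otherwise. -/
noncomputable def Fval (q u : ℝ) (N : ℕ) (μ : YoungDiagram) : ℝ :=
  if μ.colLen 0 ≤ N then
    u ^ μ.card * poch q (u / q) N * poch q q⁻¹ N /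
      (poch q q⁻¹ (N - μ.colLen 0) * denomProd q μ)
  else 0

/-- `λ^{(s)}`: the partition obtained from `λ` by removing one cell from column `s`
(1-indexed; the removed cell is the bottom cell `(λ'_s − 1, s − 1)` of that column,
0-indexed).  Defined to be `λ` itself when `m_s(λ) = 0` (no removal possible). -/
def eraseCol (μ : YoungDiagram) (s : ℕ) : YoungDiagram :=
  if h : 1 ≤ s ∧ μ.colLen s < μ.colLen (s - 1) then
    { cells := μ.cells.erase (μ.colLen (s - 1) - 1, s - 1)
      isLowerSet := by
        intro a b hba ha
        simp only [Finset.coe_erase, Set.mem_diff, Set.mem_singleton_iff] at ha ⊢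
        obtain ⟨haμ, hane⟩ := ha
        refine ⟨μ.isLowerSet hba haμ, fun hbc => hane ?_⟩
        subst hbc
        have h1 : μ.colLen (s - 1) - 1 ≤ a.1 := hba.1
        have h2 : s - 1 ≤ a.2 := hba.2
        have haμ' : (a.1, a.2) ∈ μ := by simpa [← YoungDiagram.mem_cells] using haμ
        have hlt : a.1 < μ.colLen a.2 := YoungDiagram.mem_iff_lt_colLen.mp haμ'
        have ha2 : a.2 = s - 1 := by
          by_contra hne
          have hs : s ≤ a.2 := by omega
          have := μ.colLen_anti s a.2 hs
          omega
        have ha1 : a.1 = μ.colLen (s - 1) - 1 := by rw [ha2] at hlt; omega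
        exact Prod.ext ha1 ha2 }
  else μ

lemma poch_succ_inv (q : ℝ) (m : ℕ) :
    poch q q⁻¹ (m + 1) = poch q q⁻¹ m * (1 - 1 / q ^ (m + 1)) := by
  unfold poch
  rw [Finset.prod_range_succ]
  congr 2
  rw [pow_succ, div_eq_mul_inv, one_div, mul_inv, mul_comm]

lemma one_sub_pos_aux (q : ℝ) (hq : 1 < q) (m : ℕ) : 0 < 1 - 1 / q ^ (m + 1) := by
  have h : 1 < q ^ (m + 1) := one_lt_pow₀ hq (by omega)
  have : 1 / q ^ (m + 1) < 1 := by
    rw [div_lt_one (by linarith)]; exact h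
  linarith

lemma poch_inv_pos (q : ℝ) (hq : 1 < q) (m : ℕ) : 0 < poch q q⁻¹ m := by
  induction m with
  | zero => simp [poch]
  | succ m ih => rw [poch_succ_inv]; exact mul_pos ih (one_sub_pos_aux q hq m)

noncomputable def Hp (q : ℝ) (d : ℕ → ℕ) (K : ℕ) : ℝ :=
  ∏ i ∈ Finset.range K, (poch q q⁻¹ (d i - d (i + 1)) * q ^ (d (i + 1) ^ 2))

def dseq (N : ℕ) (μ : YoungDiagram) : ℕ → ℕ
  | 0 => N
  | i + 1 => μ.colLen i

lemma Hp_pos (q : ℝ) (hq : 1 < q) (d : ℕ → ℕ) (K : ℕ) : 0 < Hp q d K :=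
  Finset.prod_pos fun i _ => mul_pos (poch_inv_pos q hq _) (pow_pos (by linarith) _)

lemma Hp_erase (q : ℝ) (hq : 1 < q) (d d' : ℕ → ℕ) (t r b e x y : ℕ)
    (h0 : ∀ j, j ≠ t + 1 → d' j = d j) (hb' : d' (t + 1) = b) (hb : d (t + 1) = b + 1)
    (ha : d t = b + 1 + x) (he : d (t + 2) = e) (hy : b = e + y) :
    Hp q d' (t + 2 + r) * (q ^ (2 * b + 1) * (1 - 1 / q ^ (y + 1))) =
      Hp q d (t + 2 + r) * (1 - 1 / q ^ (x + 1)) := by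
  unfold Hp
  simp only [Finset.prod_range_add _ (t + 2) r]
  simp only [show t + 2 = t + 1 + 1 from rfl, Finset.prod_range_succ]
  have e1 : ∀ i ∈ Finset.range t, poch q q⁻¹ (d' i - d' (i + 1)) * q ^ (d' (i + 1) ^ 2) =
      poch q q⁻¹ (d i - d (i + 1)) * q ^ (d (i + 1) ^ 2) := by
    intro i hi
    have := Finset.mem_range.mp hi
    rw [h0 i (by omega), h0 (i + 1) (by omega)]
  have e2 : ∀ i ∈ Finset.range r,
      poch q q⁻¹ (d' (t + 1 + 1 + i) - d' (t + 1 + 1 + i + 1)) * q ^ (d' (t + 1 + 1 + i + 1) ^ 2) =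
      poch q q⁻¹ (d (t + 1 + 1 + i) - d (t + 1 + 1 + i + 1)) * q ^ (d (t + 1 + 1 + i + 1) ^ 2) := by
    intro i hi
    rw [h0 _ (by omega), h0 (_ + 1) (by omega)]
  rw [Finset.prod_congr rfl e1, Finset.prod_congr rfl e2]
  rw [h0 t (by omega), h0 (t + 1 + 1) (by omega), hb', hb, ha, show d (t + 1 + 1) = e from he]
  rw [show b + 1 + x - b = x + 1 by omega, show b + 1 + x - (b + 1) = x by omega,
    show b - e = y by omega, show b + 1 - e = y + 1 by omega, poch_succ_inv, poch_succ_inv,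
    show (b + 1) ^ 2 = b ^ 2 + (2 * b + 1) by ring, pow_add]
  ring

lemma colLen_eventually (μ : YoungDiagram) : ∃ M, ∀ i, M ≤ i → μ.colLen i = 0 := by
  refine ⟨μ.rowLen 0, fun i hi => ?_⟩
  by_contra h
  have h1 : (0, i) ∈ μ := YoungDiagram.mem_iff_lt_colLen.mpr (by omega)
  have h2 := YoungDiagram.mem_iff_lt_rowLen.mp h1
  omega

lemma denom_eq (q : ℝ) (N : ℕ) (μ : YoungDiagram) (M : ℕ) (hM : ∀ i, M ≤ i → μ.colLen i = 0) :
    poch q q⁻¹ (N - μ.colLen 0) * denomProd q μ = Hp q (dseq N μ) (M + 1) := by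
  have h1 : denomProd q μ = ∏ i ∈ Finset.range M,
      q ^ (μ.colLen i ^ 2) * poch q q⁻¹ (μ.colLen i - μ.colLen (i + 1)) := by
    unfold denomProd
    apply finprod_eq_prod_of_mulSupport_subset
    intro i hi
    by_contra h
    have h' : M ≤ i := by simpa using h
    apply hi
    simp [hM i h', poch]
  rw [h1, Hp, Finset.prod_mul_distrib, Finset.prod_mul_distrib, Finset.prod_range_succ',
    Finset.prod_range_succ]
  simp only [dseq, hM M le_rfl]
  ring

lemma colLen_eraseCol (μ : YoungDiagram) (t : ℕ) (h : μ.colLen (t + 1) < μ.colLen t) (j : ℕ) :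
    (eraseCol μ (t + 1)).colLen j = if j = t then μ.colLen t - 1 else μ.colLen j := by
  have key : ∀ i, i < (eraseCol μ (t + 1)).colLen j ↔
      i < if j = t then μ.colLen t - 1 else μ.colLen j := by
    intro i
    rw [← YoungDiagram.mem_iff_lt_colLen, ← YoungDiagram.mem_cells]
    unfold eraseCol
    rw [dif_pos ⟨by omega, by simpa using h⟩]
    simp only [Finset.mem_erase, YoungDiagram.mem_cells, YoungDiagram.mem_iff_lt_colLen, ne_eq,
      Prod.mk.injEq, Nat.add_sub_cancel]
    split_ifs with hj
    · subst hj; omega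
    · simp [hj]
  have h1 := key ((eraseCol μ (t + 1)).colLen j)
  have h2 := key (if j = t then μ.colLen t - 1 else μ.colLen j)
  omega

lemma card_eraseCol (μ : YoungDiagram) (t : ℕ) (h : μ.colLen (t + 1) < μ.colLen t) :
    (eraseCol μ (t + 1)).card + 1 = μ.card := by
  unfold eraseCol
  rw [dif_pos ⟨by omega, by simpa using h⟩]
  simp only [YoungDiagram.card, Nat.add_sub_cancel]
  apply Finset.card_erase_add_one
  rw [YoungDiagram.mem_cells, YoungDiagram.mem_iff_lt_colLen]
  omega

lemma dseq_anti (N : ℕ) (μ : YoungDiagram) (hμ : μ.colLen 0 ≤ N) (t : ℕ) :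
    dseq N μ (t + 1) ≤ dseq N μ t ∧ dseq N μ t ≤ N := by
  induction t with
  | zero => exact ⟨hμ, le_rfl⟩
  | succ t ih => exact ⟨μ.colLen_anti t (t + 1) (by omega), ih.1.trans ih.2⟩

lemma term_eq (q u : ℝ) (hq : 1 < q) (hu0 : 0 < u)
    (N : ℕ) (hN : 1 ≤ N) (μ : YoungDiagram) (hμ : μ.colLen 0 ≤ N) (t : ℕ)
    (h : μ.colLen (t + 1) < μ.colLen t) :
    u / q ^ N * ((q ^ ((N : ℤ) - (μ.colLen t : ℤ) + 1) - q ^ ((N : ℤ) - (dseq N μ t : ℤ))) /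
      (q ^ N - 1) * Fval q u N (eraseCol μ (t + 1))) =
    Fval q u N μ * ((q ^ μ.colLen t - q ^ μ.colLen (t + 1)) / (q ^ N - 1)) := by
  obtain ⟨M, hM⟩ := colLen_eventually μ
  have hc := colLen_eraseCol μ t h
  obtain ⟨b, hb⟩ : ∃ b, μ.colLen t = b + 1 := ⟨μ.colLen t - 1, by omega⟩
  have hd := dseq_anti N μ hμ t
  have hd1 : dseq N μ (t + 1) = b + 1 := hb
  obtain ⟨x, hx⟩ : ∃ x, dseq N μ t = b + 1 + x := ⟨dseq N μ t - (b + 1), by omega⟩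
  obtain ⟨y, hy⟩ : ∃ y, b = μ.colLen (t + 1) + y := ⟨b - μ.colLen (t + 1), by omega⟩
  obtain ⟨w, hw⟩ : ∃ w, N = b + 1 + x + w := ⟨N - (b + 1 + x), by omega⟩
  set r := M with hr
  have hM1 : ∀ i, t + 1 + r ≤ i → μ.colLen i = 0 := fun i hi => hM i (by omega)
  have hM2 : ∀ i, t + 1 + r ≤ i → (eraseCol μ (t + 1)).colLen i = 0 := fun i hi => by
    rw [hc, if_neg (by omega)]; exact hM1 i hi
  have hle : (eraseCol μ (t + 1)).colLen 0 ≤ N := by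
    rw [hc]
    split_ifs with h0
    · subst h0; omega
    · exact hμ
  have D1 := denom_eq q N μ _ hM1
  have D2 := denom_eq q N _ _ hM2
  rw [show t + 1 + r + 1 = t + 2 + r by omega] at D1 D2
  have HE := Hp_erase q hq (dseq N μ) (dseq N (eraseCol μ (t + 1))) t r b (μ.colLen (t + 1)) x y
    (by
      intro j hj
      cases j with
      | zero => rfl
      | succ j => simp only [dseq]; rw [hc, if_neg (by omega)])
    (by simp only [dseq]; rw [hc, if_pos rfl]; omega) hd1 hx rfl hy
  have P1 := Hp_pos q hq (dseq N μ) (t + 2 + r)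
  have P2 := Hp_pos q hq (dseq N (eraseCol μ (t + 1))) (t + 2 + r)
  unfold Fval
  rw [if_pos hμ, if_pos hle, D1, D2, ← card_eraseCol μ t h]
  generalize Hp q (dseq N μ) (t + 2 + r) = H1 at *
  generalize Hp q (dseq N (eraseCol μ (t + 1))) (t + 2 + r) = H2 at *
  have Z1 : q ^ ((N : ℤ) - (μ.colLen t : ℤ) + 1) = q ^ (x + w + 1) := by
    rw [← zpow_natCast]; congr 1; rw [hb, hw]; push_cast; ring
  have Z2 : q ^ ((N : ℤ) - (dseq N μ t : ℤ)) = q ^ w := by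
    rw [← zpow_natCast]; congr 1; rw [hx, hw]; push_cast; ring
  rw [Z1, Z2]
  have hq1 : 1 < q ^ N := one_lt_pow₀ hq (by omega)
  have hq0 : 0 < q := by linarith
  have hqN : q ^ N - 1 ≠ 0 := by linarith
  have hX := one_sub_pos_aux q hq x
  have hY := one_sub_pos_aux q hq y
  have E1 : q ^ (x + w + 1) - q ^ w = q ^ (x + w + 1) * (1 - 1 / q ^ (x + 1)) := by
    rw [show x + w + 1 = w + (x + 1) by ring, pow_add]; field_simp
  have E2 : q ^ μ.colLen t - q ^ μ.colLen (t + 1) = q ^ (b + 1) * (1 - 1 / q ^ (y + 1)) := by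
    rw [hb, show b + 1 = μ.colLen (t + 1) + (y + 1) by omega, pow_add]; field_simp
  rw [E1, E2]
  generalize (1 - 1 / q ^ (x + 1)) = X at *
  generalize (1 - 1 / q ^ (y + 1)) = Y at *
  have E3 : q ^ (b + 1) * q ^ N = q ^ (2 * b + 1) * q ^ (x + w + 1) := by
    rw [← pow_add, ← pow_add]; congr 1; omega
  generalize q ^ (b + 1) = B at *
  have hQ : q ^ N ≠ 0 := by positivity
  generalize poch q (u / q) N * poch q q⁻¹ N = A
  generalize q ^ N = Q at *
  rw [mul_assoc, mul_assoc, pow_succ]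
  field_simp
  linear_combination
    (-(u ^ ((eraseCol μ (t + 1)).card + 1) * poch q (u / q) N * poch q (1 / q) N * q ^ (x + w + 1))) * HE
    - (u ^ ((eraseCol μ (t + 1)).card + 1) * poch q (u / q) N * poch q (1 / q) N * H2 * Y) * E3

theorem stmt_14 (q u : ℝ) (hq : 1 < q) (hu0 : 0 < u) (hu1 : u < 1)
    (N : ℕ) (hN : 1 ≤ N) (μ : YoungDiagram) (hμ : μ.colLen 0 ≤ N) :
    Fval q u N μ =
      (1 - u / q ^ N) * Fval q u (N - 1) μ +
        u / q ^ N *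
          ∑ᶠ (s : ℕ) (_ : 1 ≤ s ∧ μ.colLen s < μ.colLen (s - 1)),
            (if s = 1 then (q ^ ((N : ℤ) - (μ.colLen 0 : ℤ) + 1) - 1) / (q ^ N - 1)
              else (q ^ ((N : ℤ) - (μ.colLen (s - 1) : ℤ) + 1) -
                  q ^ ((N : ℤ) - (μ.colLen (s - 2) : ℤ))) / (q ^ N - 1)) *
              Fval q u N (eraseCol μ s) := by
  obtain ⟨M, hM⟩ := colLen_eventually μ
  have hq1 : 1 < q ^ N := one_lt_pow₀ hq (by omega)
  have hq0 : 0 < q := by linarith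
  have hqN : q ^ N - 1 ≠ 0 := by linarith
  have hsum : u / q ^ N *
          ∑ᶠ (s : ℕ) (_ : 1 ≤ s ∧ μ.colLen s < μ.colLen (s - 1)),
            (if s = 1 then (q ^ ((N : ℤ) - (μ.colLen 0 : ℤ) + 1) - 1) / (q ^ N - 1)
              else (q ^ ((N : ℤ) - (μ.colLen (s - 1) : ℤ) + 1) -
                  q ^ ((N : ℤ) - (μ.colLen (s - 2) : ℤ))) / (q ^ N - 1)) *
              Fval q u N (eraseCol μ s) =
      Fval q u N μ * ((q ^ μ.colLen 0 - 1) / (q ^ N - 1)) := by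
    rw [finsum_eq_sum_of_support_subset (s := Finset.range (M + 1))]
    · rw [Finset.sum_range_succ', mul_add, Finset.mul_sum]
      have : ∀ t ∈ Finset.range M, u / q ^ N *
          (∑ᶠ (_ : 1 ≤ t + 1 ∧ μ.colLen (t + 1) < μ.colLen (t + 1 - 1)),
            (if t + 1 = 1 then (q ^ ((N : ℤ) - (μ.colLen 0 : ℤ) + 1) - 1) / (q ^ N - 1)
              else (q ^ ((N : ℤ) - (μ.colLen (t + 1 - 1) : ℤ) + 1) -
                  q ^ ((N : ℤ) - (μ.colLen (t + 1 - 2) : ℤ))) / (q ^ N - 1)) *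
              Fval q u N (eraseCol μ (t + 1))) =
          Fval q u N μ / (q ^ N - 1) * (q ^ μ.colLen t - q ^ μ.colLen (t + 1)) := by
        intro t _
        by_cases h : μ.colLen (t + 1) < μ.colLen t
        · rw [finsum_eq_if, if_pos ⟨by omega, by simpa using h⟩]
          have T := term_eq q u hq hu0 N hN μ hμ t h
          rw [div_mul_eq_mul_div (Fval q u N μ), mul_div_assoc, ← T]
          cases t with
          | zero => simp [dseq]
          | succ t => simp [dseq]
        · rw [finsum_eq_if, if_neg (by simpa using h)]
          have := μ.colLen_anti t (t + 1) (by omega)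
          rw [show μ.colLen (t + 1) = μ.colLen t by omega]
          simp
      rw [Finset.sum_congr rfl this, ← Finset.mul_sum,
        Finset.sum_range_sub' (fun i => q ^ μ.colLen i), hM M le_rfl]
      simp
      ring
    · intro s hs
      by_contra h
      have h' : M + 1 ≤ s := by simpa using h
      apply hs
      simp only
      rw [finsum_eq_if, if_neg]
      rw [hM (s - 1) (by omega)]
      omega
  rw [hsum]
  obtain ⟨n, rfl⟩ : ∃ n, N = n + 1 := ⟨N - 1, by omega⟩
  have hfirst : (1 - u / q ^ (n + 1)) * Fval q u (n + 1 - 1) μ =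
      Fval q u (n + 1) μ * ((q ^ (n + 1) - q ^ μ.colLen 0) / (q ^ (n + 1) - 1)) := by
    simp only [Nat.add_sub_cancel]
    by_cases h : μ.colLen 0 ≤ n
    · obtain ⟨k, hk⟩ : ∃ k, n = μ.colLen 0 + k := ⟨n - μ.colLen 0, by omega⟩
      have hden := denom_eq q n μ M hM
      have hpos := Hp_pos q hq (dseq n μ) (M + 1)
      rw [← hden] at hpos
      have hp := poch_inv_pos q hq (n - μ.colLen 0)
      have hD : denomProd q μ ≠ 0 := by
        intro h0; rw [h0] at hpos; simp at hpos
      unfold Fval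
      rw [if_pos h, if_pos hμ, show n + 1 - μ.colLen 0 = k + 1 by omega,
        show n - μ.colLen 0 = k by omega, poch_succ_inv, poch_succ_inv]
      have hk0 := (poch_inv_pos q hq k).ne'
      have hu : poch q (u / q) (n + 1) = poch q (u / q) n * (1 - u / q ^ (n + 1)) := by
        unfold poch
        rw [Finset.prod_range_succ, div_div, ← pow_succ']
      rw [hu]
      have hX := (one_sub_pos_aux q hq k).ne'
      have hY := (one_sub_pos_aux q hq n).ne'
      have E : (q ^ (n + 1) - q ^ μ.colLen 0) / (q ^ (n + 1) - 1) =
          (1 - 1 / q ^ (k + 1)) / (1 - 1 / q ^ (n + 1)) := by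
        rw [div_eq_div_iff hqN hY, show n + 1 = μ.colLen 0 + (k + 1) by omega, pow_add]
        field_simp
      rw [E]
      generalize (1 - 1 / q ^ (k + 1)) = X at *
      generalize (1 - 1 / q ^ (n + 1)) = Y at *
      generalize (1 - u / q ^ (n + 1)) = Z at *
      field_simp
    · have : μ.colLen 0 = n + 1 := by omega
      rw [this]
      unfold Fval
      rw [if_neg h]
      simp
  rw [hfirst]
  field_simp
  ring
end

section
/- Let u be a real number with 0 < u < 1 and let k be a positive integer. For a permutation π of a finite set, let a_i(π) denote the number of cycles of π of length i. Then for any nonnegative integers c_1, …, c_k: ∑_{n=0}^∞ (1−u)·u^n/n! · #{π ∈ S_n : a_i(π) = c_i for all 1 ≤ i ≤ k} = ∏_{i=1}^k e^{−u^i/i} · (u^i/i)^{c_i} / c_i!. In particular, under the measure that picks n with probability (1−u)u^n and then π uniformly in S_n, the random variables a_1(π), …, a_k(π) are independent Poisson with parameters u^1/1, …, u^k/k. -/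
/-- `a_i(π)`: the number of cycles (orbits) of length `i` of the permutation `π`. -/
noncomputable def numCycles (n : ℕ) (π : Equiv.Perm (Fin n)) (i : ℕ) : ℕ :=
  Set.ncard {o : Set (Fin n) | (∃ x, o = {y | π.SameCycle x y}) ∧ o.ncard = i}


open scoped ENNReal

lemma aux_pi_tsum : ∀ (k : ℕ) (g : Fin k → ℕ → ℝ≥0∞),
    ∑' f : Fin k → ℕ, ∏ i, g i (f i) = ∏ i, ∑' a, g i a := by
  intro k
  induction k with
  | zero => intro g; simp [tsum_fintype]
  | succ k ih =>
    intro g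
    rw [Fin.prod_univ_succ, ← ih, ← (Fin.consEquiv (fun _ : Fin (k+1) => ℕ)).tsum_eq,
      ENNReal.tsum_prod']
    simp only [Fin.consEquiv, Equiv.coe_fn_mk, Fin.prod_univ_succ, Fin.cons_zero, Fin.cons_succ,
      ENNReal.tsum_mul_left, ENNReal.tsum_mul_right]

lemma aux_split (k : ℕ) (e : ℕ → ℕ → ℝ≥0∞) (he : ∀ i, e i 0 = 1)
    (F : (Fin k → ℕ) → ℝ≥0∞) :
    ∑' m : ℕ →₀ ℕ, F (fun i => m i) * m.prod e =
      (∑' f : Fin k → ℕ, F f * ∏ i : Fin k, e i (f i)) *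
        ∑' g : ℕ →₀ ℕ, g.prod (fun j => e (k + j)) := by
  let E : (Fin k → ℕ) × (ℕ →₀ ℕ) ≃ (ℕ →₀ ℕ) :=
    ((Equiv.prodCongr Finsupp.equivFunOnFinite.symm (Equiv.refl _)).trans
      Finsupp.sumFinsuppEquivProdFinsupp.symm).trans
      (Finsupp.domCongr (finSumNatEquiv k)).toEquiv
  rw [← E.tsum_eq, ENNReal.tsum_prod', ← ENNReal.tsum_mul_right]
  refine tsum_congr fun f => ?_
  rw [← ENNReal.tsum_mul_left]
  refine tsum_congr fun g => ?_
  have h1 : (fun i : Fin k => E (f, g) i) = f := by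
    funext i
    simp [E]
  have h2 : (E (f, g)).prod e = (∏ i : Fin k, e i (f i)) * g.prod (fun j => e (k + j)) := by
    have : E (f, g) = Finsupp.equivMapDomain (finSumNatEquiv k)
      (Finsupp.sumElim (Finsupp.equivFunOnFinite.symm f) g) := rfl
    rw [this, Finsupp.prod_equivMapDomain, Finsupp.prod_sumElim, Finsupp.prod_fintype]
    · rfl
    · intro i; simp [he]
  rw [h1, h2, mul_assoc]

lemma aux_orbit_one {n : ℕ} (π : Equiv.Perm (Fin n)) (x : Fin n) (hx : π x = x) :
    {y | π.SameCycle x y} = {x} := by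
  ext y
  simp only [Set.mem_ofPred_eq, Set.mem_singleton_iff]
  constructor
  · rintro h
    exact (h.eq_of_left hx).symm
  · rintro rfl; exact Equiv.Perm.SameCycle.refl _ _

lemma aux_orbit_supp {n : ℕ} (π : Equiv.Perm (Fin n)) (x : Fin n) (hx : π x ≠ x) :
    {y | π.SameCycle x y} = ((π.cycleOf x).support : Set (Fin n)) := by
  ext y
  simp [Equiv.Perm.mem_support_cycleOf_iff' hx]

lemma aux_numCycles {n : ℕ} (π : Equiv.Perm (Fin n)) (i : ℕ) (hi : 1 ≤ i) :
    numCycles n π i = π.partition.parts.count i := by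
  classical
  rw [Equiv.Perm.parts_partition, Multiset.count_add, numCycles]
  rcases hi.eq_or_lt with rfl | hi
  · have h0 : π.cycleType.count 1 = 0 := by
      rw [Multiset.count_eq_zero]
      intro h
      exact absurd (Equiv.Perm.two_le_of_mem_cycleType h) (by norm_num)
    rw [h0, Multiset.count_replicate_self, zero_add, ← Finset.card_compl, ← Set.ncard_coe_finset]
    have : {o : Set (Fin n) | (∃ x, o = {y | π.SameCycle x y}) ∧ o.ncard = 1} =
        (fun x => ({x} : Set (Fin n))) '' ((π.support)ᶜ : Finset (Fin n)) := by
      ext o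
      simp only [Set.mem_ofPred_eq, Set.mem_image, Finset.mem_coe, Finset.mem_compl,
        Equiv.Perm.notMem_support]
      constructor
      · rintro ⟨⟨x, rfl⟩, h⟩
        by_cases hx : π x = x
        · exact ⟨x, hx, (aux_orbit_one π x hx).symm⟩
        · rw [aux_orbit_supp π x hx, Set.ncard_coe_finset] at h
          exact absurd h (Equiv.Perm.card_support_ne_one _)
      · rintro ⟨x, hx, rfl⟩
        exact ⟨⟨x, (aux_orbit_one π x hx).symm⟩, by simp⟩
    rw [this, Set.ncard_image_of_injective _ Set.singleton_injective]
  · rw [Multiset.count_replicate, if_neg (by omega), add_zero, Equiv.Perm.cycleType_def,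
      Multiset.count_map, ← Finset.filter_val, Finset.card_val, ← Set.ncard_coe_finset]
    have : {o : Set (Fin n) | (∃ x, o = {y | π.SameCycle x y}) ∧ o.ncard = i} =
        (fun f : Equiv.Perm (Fin n) => (f.support : Set (Fin n))) ''
          (π.cycleFactorsFinset.filter (fun a => i = (Finset.card ∘ Equiv.Perm.support) a) :
            Finset (Equiv.Perm (Fin n))) := by
      ext o
      simp only [Set.mem_ofPred_eq, Set.mem_image, Finset.mem_coe, Finset.mem_filter,
        Function.comp]
      constructor
      · rintro ⟨⟨x, rfl⟩, h⟩
        by_cases hx : π x = x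
        · rw [aux_orbit_one π x hx, Set.ncard_singleton] at h
          omega
        · refine ⟨π.cycleOf x, ⟨?_, ?_⟩, (aux_orbit_supp π x hx).symm⟩
          · rw [Equiv.Perm.cycleOf_mem_cycleFactorsFinset_iff]
            simpa using hx
          · rw [aux_orbit_supp π x hx, Set.ncard_coe_finset] at h
            exact h.symm
      · rintro ⟨f, ⟨hf, hc⟩, rfl⟩
        refine ⟨?_, by rw [Set.ncard_coe_finset]; exact hc.symm⟩
        have hne : f.support.Nonempty := by
          rw [← Finset.card_pos]; omega
        obtain ⟨x, hx⟩ := hne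
        have hfx := Equiv.Perm.cycle_is_cycleOf hx hf
        have hx' : π x ≠ x := by
          have := Equiv.Perm.mem_cycleFactorsFinset_support_le hf hx
          simpa using this
        exact ⟨x, by rw [aux_orbit_supp π x hx', ← hfx]⟩
    rw [this, Set.InjOn.ncard_image]
    intro f hf g hg h
    simp only [Finset.coe_filter, Set.mem_ofPred_eq] at hf hg
    have h' : f.support = g.support := by simpa using h
    have hne : f.support.Nonempty := by
      rw [← Finset.card_pos]
      have := hf.2
      simp only [Function.comp] at this
      omega
    obtain ⟨x, hx⟩ := hne
    rw [Equiv.Perm.cycle_is_cycleOf hx hf.1, Equiv.Perm.cycle_is_cycleOf (h' ▸ hx) hg.1]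

lemma aux_card_s15 (n : ℕ) (s : Multiset ℕ) (hpos : ∀ i ∈ s, 0 < i) (hs : s.sum = n) :
    Nat.card {π : Equiv.Perm (Fin n) // π.partition.parts = s} *
      (s.prod * ∏ i ∈ s.toFinset, (s.count i).factorial) = n.factorial := by
  classical
  set t := s.filter (fun i => 2 ≤ i) with ht
  have hst : s = t + Multiset.replicate (s.count 1) 1 := by
    rw [ht, ← Multiset.filter_eq' s 1]
    conv_lhs => rw [← Multiset.filter_add_not (fun i => 2 ≤ i) s]
    congr 1
    refine Multiset.filter_congr fun x hx => ?_
    have := hpos x hx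
    omega
  have hsum : t.sum + s.count 1 = n := by
    rw [← hs]
    conv_rhs => rw [hst]
    simp
  have hprod : s.prod = t.prod := by
    conv_lhs => rw [hst]
    simp
  have hct : ∀ i, 2 ≤ i → t.count i = s.count i := fun i hi => by
    rw [ht, Multiset.count_filter_of_pos hi]
  have hfac : ∏ i ∈ s.toFinset, (s.count i).factorial =
      (s.count 1).factorial * ∏ i ∈ t.toFinset, (t.count i).factorial := by
    have h1 : ∏ i ∈ s.toFinset, (s.count i).factorial =
        ∏ i ∈ insert 1 s.toFinset, (s.count i).factorial := by
      refine Finset.prod_subset (Finset.subset_insert _ _) fun x _ hx => ?_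
      rw [Multiset.mem_toFinset] at hx
      rw [Multiset.count_eq_zero_of_notMem hx, Nat.factorial_zero]
    have h2 : insert 1 s.toFinset = insert 1 t.toFinset := by
      ext x
      simp only [Finset.mem_insert, Multiset.mem_toFinset, ht, Multiset.mem_filter]
      constructor
      · rintro (h | h)
        · exact Or.inl h
        · have := hpos x h
          by_cases hx : x = 1
          · exact Or.inl hx
          · exact Or.inr ⟨h, by omega⟩
      · tauto
    rw [h1, h2, Finset.prod_insert]
    · congr 1
      refine Finset.prod_congr rfl fun x hx => ?_
      rw [Multiset.mem_toFinset, ht, Multiset.mem_filter] at hx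
      rw [hct x hx.2]
    · simp [ht]
  have key := Equiv.Perm.card_of_cycleType_mul_eq (Fin n) t
  rw [if_pos ⟨by simp; omega, fun a ha => (Multiset.mem_filter.1 ha).2⟩, Fintype.card_fin] at key
  have hn1 : n - t.sum = s.count 1 := by omega
  rw [hn1] at key
  have hcard : Nat.card {π : Equiv.Perm (Fin n) // π.partition.parts = s} =
      (Finset.univ.filter (fun g : Equiv.Perm (Fin n) => g.cycleType = t)).card := by
    rw [Nat.card_eq_fintype_card, Fintype.card_subtype]
    congr 1
    refine Finset.filter_congr fun π _ => ?_
    constructor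
    · intro h
      rw [← Equiv.Perm.filter_parts_partition_eq_cycleType, h]
    · intro h
      rw [Equiv.Perm.parts_partition, ← Equiv.Perm.sum_cycleType, h, Fintype.card_fin, hn1, ← hst]
  rw [hcard, hprod, hfac, ← key]
  ring

/-- the counts of cycles of length `i + 1`, as a finitely supported function -/
noncomputable def auxPhi {n : ℕ} (π : Equiv.Perm (Fin n)) : ℕ →₀ ℕ :=
  Multiset.toFinsupp (π.partition.parts.map Nat.pred)

lemma aux_pred {n : ℕ} (π : Equiv.Perm (Fin n)) :
    (π.partition.parts.map Nat.pred).map Nat.succ = π.partition.parts := by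
  rw [Multiset.map_map]
  conv_rhs => rw [← Multiset.map_id π.partition.parts]
  refine Multiset.map_congr rfl fun x hx => ?_
  exact Nat.succ_pred_eq_of_pos (π.partition.parts_pos hx)

lemma auxPhi_apply {n : ℕ} (π : Equiv.Perm (Fin n)) (i : ℕ) :
    auxPhi π i = numCycles n π (i + 1) := by
  rw [aux_numCycles π (i + 1) (by omega), auxPhi, Multiset.toFinsupp_apply, ← aux_pred π,
    Multiset.count_map_eq_count' Nat.succ _ Nat.succ_injective, aux_pred]

lemma auxPhi_eq_iff {n : ℕ} (π : Equiv.Perm (Fin n)) (m : ℕ →₀ ℕ) :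
    auxPhi π = m ↔ π.partition.parts = (Finsupp.toMultiset m).map Nat.succ := by
  constructor
  · rintro rfl
    rw [auxPhi, Multiset.toFinsupp_toMultiset, aux_pred]
  · intro h
    rw [auxPhi, h, Multiset.map_map]
    simp

/-- total size -/
noncomputable def auxDeg (m : ℕ →₀ ℕ) : ℕ := ((Finsupp.toMultiset m).map Nat.succ).sum

lemma aux_fib_zero {n : ℕ} (m : ℕ →₀ ℕ) (h : n ≠ auxDeg m) :
    Nat.card {π : Equiv.Perm (Fin n) // auxPhi π = m} = 0 := by
  rw [Nat.card_eq_zero]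
  left
  constructor
  rintro ⟨π, hπ⟩
  rw [auxPhi_eq_iff] at hπ
  apply h
  rw [auxDeg, ← hπ, π.partition.parts_sum, Fintype.card_fin]

lemma aux_fib (u : ℝ) (m : ℕ →₀ ℕ) :
    u ^ (auxDeg m) / (auxDeg m).factorial *
      (Nat.card {π : Equiv.Perm (Fin (auxDeg m)) // auxPhi π = m} : ℝ) =
    m.prod fun i a => (u ^ (i + 1) / ((i + 1 : ℕ) : ℝ)) ^ a / (a.factorial : ℝ) := by
  classical
  set s := (Finsupp.toMultiset m).map Nat.succ with hs
  have hpos : ∀ i ∈ s, 0 < i := by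
    intro i hi
    rw [hs, Multiset.mem_map] at hi
    obtain ⟨a, _, rfl⟩ := hi
    exact Nat.succ_pos a
  have key := aux_card_s15 (auxDeg m) s hpos rfl
  simp_rw [auxPhi_eq_iff]
  have h1 : s.prod = m.prod fun i a => (i + 1) ^ a := by
    rw [hs, Finsupp.toMultiset_map, Finsupp.prod_toMultiset, Finsupp.prod_mapDomain_index_inj]
    exact Nat.succ_injective
  have h2 : ∏ i ∈ s.toFinset, (s.count i).factorial = m.prod fun i a => a.factorial := by
    have : s.toFinset = m.support.map ⟨Nat.succ, Nat.succ_injective⟩ := by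
      ext x
      simp [hs, Finsupp.mem_toMultiset]
    rw [this, Finset.prod_map, Finsupp.prod]
    refine Finset.prod_congr rfl fun i _ => ?_
    congr 1
    simp only [Function.Embedding.coeFn_mk]
    rw [hs, Multiset.count_map_eq_count' Nat.succ _ Nat.succ_injective, Finsupp.count_toMultiset]
  have h3 : u ^ auxDeg m = m.prod fun i a => (u ^ (i + 1)) ^ a := by
    have : auxDeg m = m.sum fun i a => a * (i + 1) := by
      rw [auxDeg, Finsupp.toMultiset_map, Finsupp.sum_toMultiset,
        Finsupp.sum_mapDomain_index_inj Nat.succ_injective]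
      rfl
    rw [this, Finsupp.sum, Finsupp.prod, ← Finset.prod_pow_eq_pow_sum]
    refine Finset.prod_congr rfl fun i _ => ?_
    rw [mul_comm, pow_mul]
  have hne : ((s.prod * ∏ i ∈ s.toFinset, (s.count i).factorial : ℕ) : ℝ) ≠ 0 := by
    intro h
    rw [Nat.cast_eq_zero] at h
    rw [h, mul_zero] at key
    exact (Nat.factorial_ne_zero _ key.symm)
  have hR : (m.prod fun i a => (u ^ (i + 1) / ((i + 1 : ℕ) : ℝ)) ^ a / (a.factorial : ℝ)) =
      u ^ auxDeg m / ((s.prod * ∏ i ∈ s.toFinset, (s.count i).factorial : ℕ) : ℝ) := by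
    rw [h1, h2, h3]
    simp only [Finsupp.prod, div_pow, Finset.prod_div_distrib, Nat.cast_mul, Nat.cast_prod,
      Nat.cast_pow, div_div, Finset.prod_mul_distrib]
  have hf : ((auxDeg m).factorial : ℝ) ≠ 0 := by positivity
  rw [hR, div_mul_eq_mul_div, div_eq_div_iff hf hne, ← key]
  push_cast
  ring

/-- the weights -/
noncomputable def auxE (u : ℝ) (i a : ℕ) : ℝ≥0∞ :=
  ENNReal.ofReal ((u ^ (i + 1) / ((i + 1 : ℕ) : ℝ)) ^ a / (a.factorial : ℝ))

lemma aux_fib_tsum (u : ℝ) (hu : 0 ≤ u) (m : ℕ →₀ ℕ) :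
    ∑' n : ℕ, ENNReal.ofReal (u ^ n / n.factorial) *
      (Nat.card {π : Equiv.Perm (Fin n) // auxPhi π = m} : ℝ≥0∞) = m.prod (auxE u) := by
  rw [tsum_eq_single (auxDeg m)]
  · have := aux_fib u m
    rw [← ENNReal.ofReal_natCast, ← ENNReal.ofReal_mul (by positivity), this]
    rw [Finsupp.prod, ENNReal.ofReal_prod_of_nonneg]
    · rfl
    · intro i _; positivity
  · intro n hn
    rw [aux_fib_zero m hn]
    simp

lemma aux_main_s15 (u : ℝ) (hu : 0 ≤ u) (Q : (ℕ →₀ ℕ) → Prop) [DecidablePred Q] :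
    ∑' n : ℕ, ENNReal.ofReal (u ^ n / n.factorial) *
      (Nat.card {π : Equiv.Perm (Fin n) // Q (auxPhi π)} : ℝ≥0∞) =
    ∑' m : ℕ →₀ ℕ, (if Q m then 1 else 0) * m.prod (auxE u) := by
  classical
  have h : ∀ n : ℕ, (Nat.card {π : Equiv.Perm (Fin n) // Q (auxPhi π)} : ℝ≥0∞) =
      ∑' m : ℕ →₀ ℕ, (if Q m then 1 else 0) *
        (Nat.card {π : Equiv.Perm (Fin n) // auxPhi π = m} : ℝ≥0∞) := by
    intro n
    have h1 : ∀ P : Equiv.Perm (Fin n) → Prop, (Nat.card {π // P π} : ℝ≥0∞) =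
        ∑ π, if P π then 1 else 0 := by
      intro P
      rw [Nat.card_eq_fintype_card, Fintype.card_subtype, Finset.sum_boole]
    simp_rw [h1, Finset.mul_sum]
    rw [Summable.tsum_finsetSum (fun _ _ => ENNReal.summable)]
    refine Finset.sum_congr rfl fun π _ => ?_
    rw [tsum_eq_single (auxPhi π)]
    · simp
    · intro m hm
      simp [hm.symm]
  simp_rw [h, ← ENNReal.tsum_mul_left]
  rw [ENNReal.tsum_comm]
  refine tsum_congr fun m => ?_
  rw [← aux_fib_tsum u hu, ← ENNReal.tsum_mul_left]
  refine tsum_congr fun n => ?_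
  ring

lemma aux_exp (x : ℝ) (hx : 0 ≤ x) :
    ∑' a : ℕ, ENNReal.ofReal (x ^ a / (a.factorial : ℝ)) = ENNReal.ofReal (Real.exp x) := by
  rw [← ENNReal.ofReal_tsum_of_nonneg (fun a => by positivity) (Real.summable_pow_div_factorial x),
    Real.exp_eq_exp_ℝ, NormedSpace.exp_eq_tsum_div]

lemma hasSum_congr_aux {f g : ℕ → ℝ} {a b : ℝ} (h : ∀ n, f n = g n) (hab : a = b) :
    HasSum f a ↔ HasSum g b := by
  rw [funext h, hab]

theorem stmt_15 (u : ℝ) (hu0 : 0 < u) (hu1 : u < 1) (k : ℕ) (hk : 0 < k)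
    (c : ℕ → ℕ) :
    HasSum (fun n : ℕ =>
        (1 - u) * u ^ n / n.factorial *
          (Nat.card {π : Equiv.Perm (Fin n) //
            ∀ i, 1 ≤ i → i ≤ k → numCycles n π i = c i} : ℝ))
      (∏ i ∈ Finset.Icc 1 k,
        Real.exp (-(u ^ i / i)) * (u ^ i / i) ^ c i / (c i).factorial) := by
  classical
  set x : ℕ → ℝ := fun i => u ^ (i + 1) / ((i + 1 : ℕ) : ℝ) with hx
  have hx0 : ∀ i, 0 ≤ x i := fun i => by simp only [hx]; positivity
  have hE0 : ∀ i, auxE u i 0 = 1 := fun i => by simp [auxE]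
  set T := ∑' g : ℕ →₀ ℕ, g.prod (fun j => auxE u (k + j)) with hT
  have h1u : 0 < 1 - u := by linarith
  -- total mass
  have htot : ENNReal.ofReal (∏ i : Fin k, Real.exp (x i)) * T = ENNReal.ofReal (1 - u)⁻¹ := by
    have h := aux_main_s15 u hu0.le (fun _ => True)
    have h2 := aux_split k (auxE u) hE0 (fun _ => 1)
    simp only [if_true] at h
    rw [h2] at h
    simp only [one_mul] at h
    rw [aux_pi_tsum k (fun i => auxE u i)] at h
    have h3 : ∀ i : Fin k, ∑' a, auxE u i a = ENNReal.ofReal (Real.exp (x i)) := fun i =>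
      aux_exp (x i) (hx0 i)
    simp_rw [h3] at h
    rw [ENNReal.ofReal_prod_of_nonneg (fun i _ => (Real.exp_pos _).le), hT, ← h,
      ← tsum_geometric_of_lt_one hu0.le hu1,
      ENNReal.ofReal_tsum_of_nonneg (fun n => by positivity)
        (summable_geometric_of_lt_one hu0.le hu1)]
    refine tsum_congr fun n => ?_
    have : Nat.card {π : Equiv.Perm (Fin n) // True} = n.factorial := by
      rw [Nat.card_eq_fintype_card, Fintype.card_subtype]
      simp [Fintype.card_perm]
    rw [this, ← ENNReal.ofReal_natCast, ← ENNReal.ofReal_mul (by positivity)]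
    congr 1
    field_simp
  -- restricted mass
  have hres : ∑' n : ℕ, ENNReal.ofReal (u ^ n / n.factorial) *
      (Nat.card {π : Equiv.Perm (Fin n) //
            ∀ i, 1 ≤ i → i ≤ k → numCycles n π i = c i} : ℝ≥0∞) =
      ENNReal.ofReal (∏ i : Fin k, x i ^ c (i + 1) / ((c (i + 1)).factorial : ℝ)) * T := by
    have h := aux_main_s15 u hu0.le (fun m => (fun i : Fin k => m i) = fun i : Fin k => c (i + 1))
    have h2 := aux_split k (auxE u) hE0 (fun f => if f = fun i : Fin k => c (i + 1) then 1 else 0)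
    rw [h2, tsum_eq_single (fun i : Fin k => c (i + 1)) (fun f hf => by simp [hf])] at h
    rw [ENNReal.ofReal_prod_of_nonneg (fun i _ => by have := hx0 i; positivity)]
    simp only [if_true, one_mul] at h
    refine Eq.trans ?_ h
    refine tsum_congr fun n => ?_
    congr 2
    refine Nat.card_congr (Equiv.subtypeEquivRight fun π => ?_)
    rw [funext_iff]
    constructor
    · intro hh i
      rw [auxPhi_apply]
      exact hh _ (by omega) (by omega)
    · intro hh i hi hik
      have := hh ⟨i - 1, by omega⟩
      rw [auxPhi_apply] at this
      simpa [Nat.sub_add_cancel hi] using this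
  have hTval : T = ENNReal.ofReal ((1 - u)⁻¹ * (∏ i : Fin k, Real.exp (x i))⁻¹) := by
    have hp : 0 < ∏ i : Fin k, Real.exp (x i) := Finset.prod_pos fun i _ => Real.exp_pos _
    rw [ENNReal.ofReal_mul (by positivity), ← htot, mul_comm, ← mul_assoc,
      ← ENNReal.ofReal_mul (by positivity), inv_mul_cancel₀ hp.ne', ENNReal.ofReal_one, one_mul]
  have hc0 : 0 ≤ ∏ i : Fin k, x i ^ c (i + 1) / ((c (i + 1)).factorial : ℝ) :=
    Finset.prod_nonneg fun i _ => by have := hx0 i; positivity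
  have hp : 0 < ∏ i : Fin k, Real.exp (x i) := Finset.prod_pos fun i _ => Real.exp_pos _
  rw [hTval, ← ENNReal.ofReal_mul hc0] at hres
  have hsum := ENNReal.hasSum_toReal (hres ▸ ENNReal.ofReal_ne_top)
  rw [← ENNReal.tsum_toReal_eq (fun n => ENNReal.mul_ne_top ENNReal.ofReal_ne_top
    (ENNReal.natCast_ne_top _)), hres, ENNReal.toReal_ofReal (by positivity)] at hsum
  have hsum2 := hsum.mul_left (1 - u)
  refine (hasSum_congr_aux ?_ ?_).mpr hsum2
  · intro n
    rw [ENNReal.toReal_mul, ENNReal.toReal_ofReal (by positivity), ENNReal.toReal_natCast]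
    ring
  · have hI : Finset.Icc 1 k = Finset.Ico (0 + 1) (k + 1) := by ext; simp [Nat.lt_succ_iff]
    rw [hI, ← Finset.prod_Ico_add' (fun i : ℕ => Real.exp (-(u ^ i / i)) * (u ^ i / i) ^ c i / (c i).factorial) 0 k 1,
      Nat.Ico_zero_eq_range, ← Fin.prod_univ_eq_prod_range
        (fun i : ℕ => Real.exp (-(u ^ (i + 1) / ((i + 1 : ℕ) : ℝ))) *
          (u ^ (i + 1) / ((i + 1 : ℕ) : ℝ)) ^ c (i + 1) / (c (i + 1)).factorial)]
    have e1 : ∀ i : Fin k, Real.exp (-(u ^ ((i : ℕ) + 1) / (((i : ℕ) + 1 : ℕ) : ℝ))) *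
          (u ^ ((i : ℕ) + 1) / (((i : ℕ) + 1 : ℕ) : ℝ)) ^ c (i + 1) / (c (i + 1)).factorial =
        (Real.exp (x i))⁻¹ * (x i ^ c (i + 1) / ((c (i + 1)).factorial : ℝ)) := by
      intro i
      rw [Real.exp_neg, mul_div_assoc]
    simp_rw [e1]
    rw [Finset.prod_mul_distrib, Finset.prod_inv_distrib]
    field_simp
end
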